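/- arXiv:2107.07819 — 2 statements merged into one kernel-verified Lean document; each statement's English description precedes it below -/
import Mathlib

section
/- Let A be a complex *-algebra. Then A is an algebraic Baer *-algebra if and only if A is *-isomorphic to a direct sum M ⊕ B, where M is a finite direct product of full complex matrix algebras M_{n_k}(ℂ) with every n_k ≥ 2, and B is the ℂ-linear span, inside C(T, ℂ) for some Stonean topological space T, of the characteristic functions of the clopen subsets of T. -/
/-- A (possibly non-unital) complex algebra is *algebraic* if every element generates a
finite-dimensional subalgebra (equivalently, every element is a root of a nonzero
polynomial with complex coefficients). -/
def IsAlgebraicAlgebra (A : Type*) [NonUnitalRing A] [Module ℂ A] : Prop :=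
  ∀ a : A, ∃ S : NonUnitalSubalgebra ℂ A, a ∈ S ∧ FiniteDimensional ℂ S

/-- A pre-C*-norm on a complex `*`-algebra: a submultiplicative norm `σ` with
`σ (x* x) = σ x ^ 2`. -/
def HasPreCstarNorm (A : Type*) [NonUnitalRing A] [Module ℂ A] [Star A] : Prop :=
  ∃ σ : A → ℝ,
    (∀ a : A, σ a = 0 ↔ a = 0) ∧
    (∀ (c : ℂ) (a : A), σ (c • a) = ‖c‖ * σ a) ∧
    (∀ a b : A, σ (a + b) ≤ σ a + σ b) ∧
    (∀ a b : A, σ (a * b) ≤ σ a * σ b) ∧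
    (∀ a : A, σ (star a * a) = σ a ^ 2)

/-- The involution is proper if `a* a = 0` implies `a = 0`. -/
def HasProperInvolution (A : Type*) [NonUnitalRing A] [Star A] : Prop :=
  ∀ a : A, star a * a = 0 → a = 0

/-- Hermitian: every selfadjoint element has real spectrum (computed in the
unitization `ℂ ⊕ A`). -/
def IsHermitianStarAlgebra (A : Type*) [NonUnitalRing A] [Module ℂ A]
    [SMulCommClass ℂ A A] [IsScalarTower ℂ A A] [Star A] : Prop :=
  ∀ a : A, star a = a → ∀ z ∈ spectrum ℂ (a : Unitization ℂ A), z.im = 0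

/-- Semisimple: the Jacobson radical is `{0}` (expressed via the unitization, whose
Jacobson radical meets `A` exactly in the Jacobson radical of `A`). -/
def IsSemisimpleAlgebra (A : Type*) [NonUnitalRing A] [Module ℂ A]
    [SMulCommClass ℂ A A] [IsScalarTower ℂ A A] : Prop :=
  ∀ a : A, (a : Unitization ℂ A) ∈ (⊥ : Ideal (Unitization ℂ A)).jacobson → a = 0

/-- A Baer `*`-ring: the right annihilator of every nonempty subset is the principal
right ideal generated by a projection. -/
def IsBaerStarRing (A : Type*) [Mul A] [Zero A] [Star A] : Prop :=
  ∀ S : Set A, S.Nonempty → ∃ f : A, star f = f ∧ f * f = f ∧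
    {y : A | ∀ s ∈ S, s * y = 0} = {z : A | ∃ x : A, z = f * x}

/-- The set of characteristic functions of clopen subsets of `T`, inside `C(T, ℂ)`. -/
def clopenCharacteristicFunctions (T : Type*) [TopologicalSpace T] : Set C(T, ℂ) :=
  {f : C(T, ℂ) | ∃ U : Set T, IsClopen U ∧ ∀ t : T, f t = U.indicator 1 t}


namespace BaerAux

/-! ### The reverse implication -/

theorem isBaer_of_equiv {A B : Type*} [NonUnitalRing A] [Module ℂ A] [StarRing A]
    [NonUnitalRing B] [Module ℂ B] [StarRing B] (φ : A ≃⋆ₐ[ℂ] B) (hB : IsBaerStarRing B) :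
    IsBaerStarRing A := by
  intro S hS
  obtain ⟨f, hf1, hf2, hf3⟩ := hB (φ '' S) (hS.image _)
  refine ⟨φ.symm f, ?_, ?_, ?_⟩
  · rw [← map_star, hf1]
  · rw [← map_mul, hf2]
  · ext y
    have := Set.ext_iff.1 hf3 (φ y)
    simp only [Set.mem_ofPred_eq, Set.forall_mem_image, ← map_mul,
      EmbeddingLike.map_eq_zero_iff] at this ⊢
    rw [this]
    constructor
    · rintro ⟨x, hx⟩
      refine ⟨φ.symm x, ?_⟩
      rw [← map_mul, ← hx]
      simp
    · rintro ⟨x, hx⟩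
      refine ⟨φ x, ?_⟩
      rw [hx, map_mul]
      simp

theorem isBaer_prod {A B : Type*} [NonUnitalRing A] [StarRing A]
    [NonUnitalRing B] [StarRing B] (hA : IsBaerStarRing A) (hB : IsBaerStarRing B) :
    IsBaerStarRing (A × B) := by
  intro S hS
  obtain ⟨f, hf1, hf2, hf3⟩ := hA (Prod.fst '' S) (hS.image _)
  obtain ⟨g, hg1, hg2, hg3⟩ := hB (Prod.snd '' S) (hS.image _)
  refine ⟨(f, g), Prod.ext hf1 hg1, Prod.ext hf2 hg2, ?_⟩
  ext y
  have h1 := Set.ext_iff.1 hf3 y.1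
  have h2 := Set.ext_iff.1 hg3 y.2
  simp only [Set.mem_ofPred_eq, Set.forall_mem_image] at h1 h2 ⊢
  constructor
  · intro h
    obtain ⟨a, ha⟩ := h1.1 fun s hs => congrArg Prod.fst (h s hs)
    obtain ⟨b, hb⟩ := h2.1 fun s hs => congrArg Prod.snd (h s hs)
    exact ⟨(a, b), Prod.ext ha hb⟩
  · rintro ⟨x, hx⟩ s hs
    exact Prod.ext (h1.2 ⟨x.1, congrArg Prod.fst hx⟩ hs) (h2.2 ⟨x.2, congrArg Prod.snd hx⟩ hs)

theorem isBaer_pi {ι : Type*} {A : ι → Type*} [∀ i, NonUnitalRing (A i)] [∀ i, StarRing (A i)]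
    (hA : ∀ i, IsBaerStarRing (A i)) : IsBaerStarRing (∀ i, A i) := by
  intro S hS
  choose f hf1 hf2 hf3 using fun i => hA i ((fun s => s i) '' S) (hS.image _)
  refine ⟨f, funext hf1, funext hf2, ?_⟩
  ext y
  have h1 := fun i => Set.ext_iff.1 (hf3 i) (y i)
  simp only [Set.mem_ofPred_eq, Set.forall_mem_image] at h1 ⊢
  constructor
  · intro h
    choose a ha using fun i => (h1 i).1 fun s hs => congrFun (h s hs) i
    exact ⟨a, funext ha⟩
  · rintro ⟨x, hx⟩ s hs
    exact funext fun i => (h1 i).2 ⟨x i, congrFun hx i⟩ hs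

theorem isBaer_clm {E : Type*} [NormedAddCommGroup E] [InnerProductSpace ℂ E]
    [FiniteDimensional ℂ E] [CompleteSpace E] : IsBaerStarRing (E →L[ℂ] E) := by
  intro S hS
  let W : Submodule ℂ E := ⨅ s ∈ S, LinearMap.ker (s : E →ₗ[ℂ] E)
  have hW : ∀ x, x ∈ W ↔ ∀ s ∈ S, s x = 0 := by
    intro x; simp [W, Submodule.mem_iInf]
  refine ⟨W.starProjection, (isStarProjection_starProjection (U := W)).isSelfAdjoint,
    (isStarProjection_starProjection (U := W)).isIdempotentElem, ?_⟩
  ext y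
  simp only [Set.mem_ofPred_eq]
  constructor
  · intro h
    refine ⟨y, ?_⟩
    ext x
    symm
    refine Submodule.starProjection_eq_self_iff.2 ((hW _).2 fun s hs => ?_)
    exact congrArg (fun g : E →L[ℂ] E => g x) (h s hs)
  · rintro ⟨x, rfl⟩ s hs
    ext v
    exact (hW _).1 (Submodule.starProjection_apply_mem W (x v)) s hs

theorem isBaer_matrix (n : ℕ) : IsBaerStarRing (Matrix (Fin n) (Fin n) ℂ) :=
  isBaer_of_equiv (Matrix.toEuclideanCLM (n := Fin n) (𝕜 := ℂ)) isBaer_clm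

theorem isBaer_clopen {T : Type*} [TopologicalSpace T] [ExtremallyDisconnected T]
    (S : StarSubalgebra ℂ C(T, ℂ))
    (hS : (S : Set C(T, ℂ)) = (Submodule.span ℂ (clopenCharacteristicFunctions T) : Set C(T, ℂ))) :
    IsBaerStarRing S := by
  intro X _
  let U : Set T := ⋃ f ∈ X, {t | (f : C(T, ℂ)) t ≠ 0}
  have hU : IsOpen U := isOpen_biUnion fun f _ =>
    isOpen_compl_singleton.preimage (f : C(T, ℂ)).continuous
  have hV : IsClopen (closure U)ᶜ :=
    (IsClopen.compl ⟨isClosed_closure, ExtremallyDisconnected.open_closure U hU⟩)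
  let e : C(T, ℂ) := ⟨(closure U)ᶜ.indicator 1, hV.continuous_indicator continuous_const⟩
  have heS : e ∈ S := by
    have : e ∈ (S : Set C(T, ℂ)) := by
      rw [hS]
      exact Submodule.subset_span ⟨_, hV, fun t => rfl⟩
    exact this
  have he0 : ∀ t ∈ U, e t = 0 := fun t ht => by
    simp [e, subset_closure ht]
  refine ⟨⟨e, heS⟩, ?_, ?_, ?_⟩
  · ext t
    by_cases h : t ∈ closure U <;> simp [e, h]
  · ext t
    by_cases h : t ∈ closure U <;> simp [e, h]
  · ext y
    simp only [Set.mem_ofPred_eq]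
    constructor
    · intro h
      refine ⟨y, ?_⟩
      have hy : closure U ⊆ {t | (y : C(T, ℂ)) t = 0} := by
        refine closure_minimal ?_ (isClosed_singleton.preimage (y : C(T, ℂ)).continuous)
        intro t ht
        simp only [U, Set.mem_iUnion] at ht
        obtain ⟨f, hf, hft⟩ := ht
        have := congrArg (fun g : S => (g : C(T, ℂ)) t) (h f hf)
        simpa [show (f : C(T, ℂ)) t ≠ 0 from hft] using this
      ext t
      by_cases h : t ∈ closure U
      · simpa [e, h] using hy h
      · simp [e, h]
    · rintro ⟨x, rfl⟩ s hs
      ext t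
      by_cases h : (s : C(T, ℂ)) t = 0
      · simp [h]
      · have := he0 t (Set.mem_biUnion hs h)
        simp [this]

theorem isIntegral_clopen {T : Type*} [TopologicalSpace T]
    (S : StarSubalgebra ℂ C(T, ℂ))
    (hS : (S : Set C(T, ℂ)) = (Submodule.span ℂ (clopenCharacteristicFunctions T) : Set C(T, ℂ)))
    (x : S) : IsIntegral ℂ x := by
  rw [← isIntegral_algHom_iff S.subtype.toAlgHom Subtype.val_injective]
  have h : Submodule.span ℂ (clopenCharacteristicFunctions T) ≤
      Subalgebra.toSubmodule (integralClosure ℂ C(T, ℂ)) := by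
    refine Submodule.span_le.2 ?_
    rintro f ⟨U, -, hf⟩
    refine ⟨Polynomial.X ^ 2 - Polynomial.X, ?_, ?_⟩
    · monicity!
    · ext t
      by_cases h : t ∈ U <;> simp [hf, h]
  refine h ?_
  have : (x : C(T, ℂ)) ∈ (S : Set C(T, ℂ)) := x.2
  rw [hS] at this
  exact this

theorem isIntegral_prod {R S : Type*} [Ring R] [Ring S] [Algebra ℂ R] [Algebra ℂ S] (x : R × S)
    (h1 : IsIntegral ℂ x.1) (h2 : IsIntegral ℂ x.2) : IsIntegral ℂ x := by
  obtain ⟨p, hp, hp'⟩ := h1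
  obtain ⟨q, hq, hq'⟩ := h2
  refine ⟨p * q, hp.mul hq, ?_⟩
  rw [← Polynomial.aeval_def] at *
  have e1 : (Polynomial.aeval x (p * q)).1 = 0 := by
    have := Polynomial.aeval_algHom_apply (AlgHom.fst ℂ R S) x (p * q)
    simp only [AlgHom.fst_apply] at this
    rw [← this, map_mul, hp', zero_mul]
  have e2 : (Polynomial.aeval x (p * q)).2 = 0 := by
    have := Polynomial.aeval_algHom_apply (AlgHom.snd ℂ R S) x (p * q)
    simp only [AlgHom.snd_apply] at this
    rw [← this, map_mul, hq', mul_zero]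
  exact Prod.ext e1 e2

theorem isAlgebraic_of_equiv {A B : Type*} [NonUnitalRing A] [Module ℂ A] [StarRing A]
    [SMulCommClass ℂ A A] [IsScalarTower ℂ A A]
    [Ring B] [Algebra ℂ B] [StarRing B] (φ : A ≃⋆ₐ[ℂ] B) (hB : ∀ b : B, IsIntegral ℂ b) :
    IsAlgebraicAlgebra A := by
  intro a
  have hfg := (hB (φ a)).fg_adjoin_singleton
  let N : NonUnitalSubalgebra ℂ B := (Algebra.adjoin ℂ {φ a}).toNonUnitalSubalgebra
  let ψ : A →ₙₐ[ℂ] B := 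
    { toFun := φ, map_smul' := map_smul φ, map_zero' := map_zero φ, map_add' := map_add φ,
      map_mul' := map_mul φ }
  refine ⟨N.comap ψ, ?_, ?_⟩
  · exact Algebra.subset_adjoin rfl
  · have : FiniteDimensional ℂ (Subalgebra.toSubmodule (Algebra.adjoin ℂ {φ a})) :=
      Module.Finite.iff_fg.2 hfg
    let l : (N.comap ψ) →ₗ[ℂ] (Subalgebra.toSubmodule (Algebra.adjoin ℂ {φ a})) :=
      { toFun := fun x => ⟨φ x, x.2⟩
        map_add' := fun x y => Subtype.ext (map_add φ _ _)
        map_smul' := fun c y => Subtype.ext (map_smul φ _ _) }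
    refine FiniteDimensional.of_injective l ?_
    intro x y h
    exact Subtype.ext (φ.injective (congrArg Subtype.val h))

theorem reverse {A T : Type*} [NonUnitalRing A]
    [Module ℂ A] [SMulCommClass ℂ A A] [IsScalarTower ℂ A A] [StarRing A]
    [TopologicalSpace T] [ExtremallyDisconnected T] {m : ℕ} (n : Fin m → ℕ)
    (S : StarSubalgebra ℂ C(T, ℂ))
    (hS : (S : Set C(T, ℂ)) = (Submodule.span ℂ (clopenCharacteristicFunctions T) : Set C(T, ℂ)))
    (φ : A ≃⋆ₐ[ℂ] ((∀ k, Matrix (Fin (n k)) (Fin (n k)) ℂ) × S)) :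
    IsAlgebraicAlgebra A ∧ IsBaerStarRing A := by
  have hB : IsBaerStarRing ((∀ k, Matrix (Fin (n k)) (Fin (n k)) ℂ) × S) :=
    isBaer_prod (A := ∀ k, Matrix (Fin (n k)) (Fin (n k)) ℂ) (B := S)
      (isBaer_pi (A := fun k => Matrix (Fin (n k)) (Fin (n k)) ℂ) fun k => isBaer_matrix (n k))
      (isBaer_clopen S hS)
  refine ⟨isAlgebraic_of_equiv φ fun b => isIntegral_prod _ ?_ (isIntegral_clopen S hS _),
    isBaer_of_equiv (B := (∀ k, Matrix (Fin (n k)) (Fin (n k)) ℂ) × S) φ hB⟩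
  exact IsIntegral.of_finite ℂ _

end BaerAux


namespace BaerAux

/-! ### Algebraic star algebras with proper involution: spectral decomposition -/

/-- Unital algebraic complex star algebra with the Baer property. -/
structure Good (A : Type*) [Ring A] [Algebra ℂ A] [StarRing A] : Prop where
  integral : ∀ a : A, IsIntegral ℂ a
  baer : IsBaerStarRing A

section

variable {A : Type*} [Ring A] [Algebra ℂ A] [StarRing A]

theorem Good.proper (hA : Good A) {x : A} (h : star x * x = 0) : x = 0 := by
  obtain ⟨g, hg1, hg2, hg3⟩ := hA.baer {star x} (Set.singleton_nonempty _)
  have hx : x ∈ {y : A | ∀ s ∈ ({star x} : Set A), s * y = 0} := by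
    rintro s rfl; exact h
  have hgg : g ∈ {y : A | ∀ s ∈ ({star x} : Set A), s * y = 0} := by
    rw [hg3]; exact ⟨g, hg2.symm⟩
  rw [hg3] at hx
  obtain ⟨y, hy⟩ := hx
  have hgx : g * x = x := by rw [hy, ← mul_assoc, hg2]
  have h2 : star x * g = star x := by
    have := congrArg star hgx
    rwa [star_mul, hg1] at this
  rw [← star_eq_zero, ← h2, hgg _ rfl]

theorem Good.proper' (hA : Good A) {x : A} (h : x * star x = 0) : x = 0 := by
  rw [← star_eq_zero]
  exact hA.proper (by rwa [star_star])

theorem Good.exists_sup (hA : Good A) (S : Set A) (hS : S.Nonempty) :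
    ∃ p : A, IsStarProjection p ∧ (∀ e ∈ S, e * p = e) ∧
      ∀ y, (∀ e ∈ S, e * y = 0) → p * y = 0 := by
  obtain ⟨f, hf1, hf2, hf3⟩ := hA.baer S hS
  have hf : IsStarProjection f := ⟨hf2, hf1⟩
  refine ⟨1 - f, hf.one_sub, ?_, ?_⟩
  · intro e he
    have : f ∈ {y : A | ∀ s ∈ S, s * y = 0} := by rw [hf3]; exact ⟨f, hf2.symm⟩
    rw [mul_sub, this e he, mul_one, sub_zero]
  · intro y hy
    have : y ∈ {y : A | ∀ s ∈ S, s * y = 0} := hy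
    rw [hf3] at this
    obtain ⟨x, rfl⟩ := this
    rw [← mul_assoc, hf.one_sub_mul_self, zero_mul]

theorem Good.sa_nilp (hA : Good A) {x : A} (hx : star x = x) (n : ℕ) (h : x ^ (2 ^ n) = 0) :
    x = 0 := by
  induction n with
  | zero => simpa using h
  | succ n ih =>
    apply ih
    apply hA.proper
    rw [star_pow, hx, ← pow_add, ← two_mul, ← pow_succ', h]

theorem Good.normal_nilp (hA : Good A) {x : A} (hx : star x * x = x * star x) (n : ℕ)
    (h : x ^ n = 0) : x = 0 := by
  apply hA.proper
  apply hA.sa_nilp (n := n)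
  · rw [star_mul, star_star]
  · have hc : Commute (star x) x := hx
    rw [hc.mul_pow, ← Nat.sub_add_cancel (Nat.lt_two_pow_self (n := n)).le, pow_add x, h, mul_zero,
      mul_zero]

theorem Good.normal_idem (hA : Good A) {e : A} (hx : star e * e = e * star e) (h : e * e = e) :
    IsStarProjection e := by
  have hs : star e * star e = star e := by rw [← star_mul, h]
  have h0 : e - star e * e = 0 := by
    apply hA.proper
    have h1 : star e * (star e * e) = star e * e := by rw [← mul_assoc, hs]
    have h2 : star e * e * e = star e * e := by rw [mul_assoc, h]
    have h3 : star e * e * (star e * e) = star e * e := by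
      rw [mul_assoc, ← mul_assoc e, ← hx, mul_assoc, h, h1]
    rw [star_sub, star_mul, star_star, sub_mul, mul_sub, mul_sub, h1, h2, h3]
    simp
  have h1 : e = star e * e := sub_eq_zero.1 h0
  refine ⟨h, ?_⟩
  change star e = e
  conv_lhs => rw [h1]
  rw [star_mul, star_star, ← h1]

open Polynomial

theorem star_aeval_comm [StarModule ℂ A] {a : A} (ha : star a * a = a * star a) (p : ℂ[X]) :
    star (aeval a p) * aeval a p = aeval a p * star (aeval a p) := by
  have h1 : ∀ q : ℂ[X], Commute (star a) (aeval a q) := by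
    intro q
    have : aeval a q ∈ Algebra.adjoin ℂ {a} := aeval_mem_adjoin_singleton ℂ a
    refine Algebra.adjoin_induction (p := fun x _ => Commute (star a) x) ?_ ?_ ?_ ?_ this
    · rintro x rfl; exact ha
    · intro r; exact (Algebra.commutes r _).symm
    · intro x y _ _ hx hy; exact hx.add_right hy
    · intro x y _ _ hx hy; exact hx.mul_right hy
  have h2 : Commute a (star (aeval a p)) := by
    have := (h1 p).star_star
    rwa [star_star] at this
  have h3 : ∀ q : ℂ[X], Commute (aeval a q) (star (aeval a p)) := by
    intro q
    have : aeval a q ∈ Algebra.adjoin ℂ {a} := aeval_mem_adjoin_singleton ℂ a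
    refine Algebra.adjoin_induction (p := fun x _ => Commute x (star (aeval a p))) ?_ ?_ ?_ ?_ this
    · rintro x rfl; exact h2
    · intro r; exact (Algebra.commutes r _)
    · intro x y _ _ hx hy; exact hx.add_left hy
    · intro x y _ _ hx hy; exact hx.mul_left hy
  exact (h3 p).symm

theorem multiset_prod_dvd (r : ℂ[X]) (m : Multiset ℂ) (h : ∀ i ∈ m, (X - C i) ∣ r) :
    (m.map fun i => X - C i).prod ∣ r ^ Multiset.card m := by
  induction m using Multiset.induction_on with
  | empty => simp
  | cons i m ih =>
    rw [Multiset.map_cons, Multiset.prod_cons, Multiset.card_cons, pow_succ']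
    exact mul_dvd_mul (h i (by simp)) (ih fun j hj => h j (by simp [hj]))

/-- Spectral decomposition of normal elements. -/
theorem Good.spec [StarModule ℂ A] (hA : Good A) {a : A} (ha : star a * a = a * star a) :
    ∃ (s : Finset ℂ) (e : ℂ → A), (∀ i ∈ s, IsStarProjection (e i)) ∧
      (∀ i ∈ s, ∀ j ∈ s, i ≠ j → e i * e j = 0) ∧ ∑ i ∈ s, e i = 1 ∧ ∑ i ∈ s, i • e i = a ∧
      (∀ i ∈ s, a * e i = i • e i) ∧ (∀ i ∈ s, e i * a = i • e i) := by
  obtain ⟨q, hq, hq0⟩ := hA.integral a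
  rw [← aeval_def] at hq0
  set s := q.roots.toFinset with hs
  let r : ℂ[X] := ∏ i ∈ s, (X - C i)
  have hr : aeval a r = 0 := by
    apply hA.normal_nilp (star_aeval_comm ha r) q.natDegree
    rw [← map_pow]
    have : q ∣ r ^ q.natDegree := by
      have h1 := (IsAlgClosed.splits q).eq_prod_roots_of_monic hq
      conv_lhs => rw [h1]
      rw [(IsAlgClosed.splits q).natDegree_eq_card_roots]
      apply multiset_prod_dvd
      intro i hi
      exact Finset.dvd_prod_of_mem (fun i => X - C i) (Multiset.mem_toFinset.2 hi)
    obtain ⟨t, ht⟩ := this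
    rw [ht, map_mul, hq0, zero_mul]
  have key : ∀ f g : ℂ[X], (∀ i ∈ s, f.eval i = g.eval i) → aeval a f = aeval a g := by
    intro f g hfg
    rw [← sub_eq_zero, ← map_sub]
    have : r ∣ f - g := by
      refine Finset.prod_dvd_of_coprime ?_ ?_
      · intro i _ j _ hij
        exact isCoprime_X_sub_C_of_isUnit_sub (sub_ne_zero.2 hij).isUnit
      · intro i hi
        rw [dvd_iff_isRoot, IsRoot, eval_sub, hfg i hi, sub_self]
    obtain ⟨t, ht⟩ := this
    rw [ht, map_mul, hr, zero_mul]
  let L : ℂ → ℂ[X] := fun i => Lagrange.basis s id i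
  have hL1 : ∀ i ∈ s, (L i).eval i = 1 := fun i hi =>
    Lagrange.eval_basis_self (v := id) (Set.injOn_id _) hi
  have hL0 : ∀ i j, i ≠ j → j ∈ s → (L i).eval j = 0 := fun i j hij hj =>
    Lagrange.eval_basis_of_ne (v := id) hij hj
  refine ⟨s, fun i => aeval a (L i), ?_, ?_, ?_, ?_, ?_, ?_⟩
  · intro i hi
    apply hA.normal_idem (star_aeval_comm ha _)
    rw [← map_mul]
    apply key
    intro j hj
    by_cases h : i = j
    · subst h; simp [hL1 i hi]
    · simp [hL0 i j h hj]
  · intro i hi j hj hij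
    rw [← map_mul, ← map_zero (aeval (R := ℂ) a)]
    apply key
    intro k hk
    by_cases h : i = k
    · subst h; simp [hL0 j i (Ne.symm hij) hk]
    · simp [hL0 i k h hk]
  · rw [← map_sum, ← map_one (aeval (R := ℂ) a)]
    apply key
    intro j hj
    rw [eval_finsetSum, Finset.sum_eq_single j (fun i _ hi => hL0 i j hi hj) (by simp [hj]),
      hL1 j hj, eval_one]
  · conv_rhs => rw [← aeval_X (R := ℂ) a]
    simp_rw [← map_smul]
    rw [← map_sum]
    apply key
    intro j hj
    rw [eval_finsetSum, Finset.sum_eq_single j (fun i _ hi => by simp [hL0 i j hi hj]) (by simp [hj])]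
    simp [hL1 j hj]
  · intro i hi
    have : aeval a (X * L i) = aeval a (i • L i) := by
      apply key
      intro j hj
      by_cases h : i = j
      · subst h; simp
      · simp [hL0 i j h hj]
    simpa using this
  · intro i hi
    have : aeval a (L i * X) = aeval a (i • L i) := by
      apply key
      intro j hj
      by_cases h : i = j
      · subst h; simp [mul_comm]
      · simp [hL0 i j h hj]
    simpa using this

end

end BaerAux

set_option linter.unusedSectionVars false
set_option linter.unusedSimpArgs false

namespace BaerAux

section

variable {A : Type*} [Ring A]

theorem ra {x y z : A} (h : x * y = z) (w : A) : x * (y * w) = z * w := by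
  rw [← mul_assoc, h]

variable [Algebra ℂ A] [StarRing A] [StarModule ℂ A]

theorem proj_right {h e : A} (hh : IsStarProjection h) (he : IsStarProjection e) (H : h * e = e) :
    e * h = e := by
  have := congrArg star H
  rwa [star_mul, hh.isSelfAdjoint.star_eq, he.isSelfAdjoint.star_eq] at this

theorem proj_comm0 {h e : A} (hh : IsStarProjection h) (he : IsStarProjection e) (H : h * e = 0) :
    e * h = 0 := by
  have := congrArg star H
  rwa [star_mul, hh.isSelfAdjoint.star_eq, he.isSelfAdjoint.star_eq, star_zero] at this

theorem Good.span_normal (hA : Good A) {h x : A} (hx : star x * x = x * star x) (h1 : h * x = x) :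
    x ∈ Submodule.span ℂ {e : A | IsStarProjection e ∧ h * e = e} := by
  obtain ⟨s, e, he, -, -, hsum, hae, -⟩ := hA.spec hx
  rw [← hsum]
  refine Submodule.sum_mem _ fun i hi => ?_
  by_cases h0 : i = 0
  · simp [h0]
  · refine Submodule.smul_mem _ _ (Submodule.subset_span ⟨he i hi, ?_⟩)
    have h2 : e i = i⁻¹ • (x * e i) := by rw [hae i hi, smul_smul, inv_mul_cancel₀ h0, one_smul]
    rw [h2, mul_smul_comm, ← mul_assoc, h1]

theorem Good.span_proj (hA : Good A) {h x : A} (hh : IsStarProjection h) (h1 : h * x = x)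
    (h2 : x * h = x) :
    x ∈ Submodule.span ℂ {e : A | IsStarProjection e ∧ h * e = e} := by
  have h3 : h * star x = star x := by
    have := congrArg star h2
    rwa [star_mul, hh.isSelfAdjoint.star_eq] at this
  have e : x = (1 / 2 : ℂ) • (x + star x) + (1 / 2 : ℂ) • (x - star x) := by
    module
  rw [e]
  refine Submodule.add_mem _ (Submodule.smul_mem _ _ ?_) (Submodule.smul_mem _ _ ?_)
  · apply hA.span_normal
    · rw [star_add, star_star, add_comm]
    · rw [mul_add, h1, h3]
  · apply hA.span_normal
    · rw [star_sub, star_star]; noncomm_ring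
    · rw [mul_sub, h1, h3]

/-- `v` is a partial isometry generating a copy of the two by two matrices. -/
def IsM2 (v : A) : Prop := v * star v * v = v ∧ v * v = 0 ∧ v ≠ 0

theorem Good.scale (hA : Good A) {g y : A} {c : ℂ} (hg : IsStarProjection g) (hg0 : g ≠ 0)
    (hc : c ≠ 0) (h1 : y * star y = c • g) (h2 : y * g = 0) :
    ∃ d : ℂ, d ≠ 0 ∧ (d • y) * star (d • y) = g := by
  have hgs := hg.isSelfAdjoint.star_eq
  have hgi : g * g = g := hg.isIdempotentElem
  have hreal : star c = c := by
    have := congrArg star h1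
    rw [star_mul, star_star, star_smul, hgs, h1, ← sub_eq_zero, ← sub_smul, smul_eq_zero] at this
    rcases this with h | h
    · exact (sub_eq_zero.1 h).symm
    · exact absurd h hg0
  obtain ⟨r, rfl⟩ : ∃ r : ℝ, (r : ℂ) = c := ⟨c.re, Complex.conj_eq_iff_re.1 hreal⟩
  have hr0 : r ≠ 0 := by simpa using hc
  rcases lt_or_gt_of_ne hr0 with hr | hr
  · exfalso
    set t := Real.sqrt (-r) with ht
    have htt : t * t = -r := Real.mul_self_sqrt (by linarith)
    have ht0 : t ≠ 0 := by rintro h; rw [h] at htt; apply hr0; linarith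
    have h3 : g * star y = 0 := by
      have := congrArg star h2
      rwa [star_mul, hgs, star_zero] at this
    have h4 : y + (t : ℂ) • g = 0 := by
      apply hA.proper'
      have : star (t : ℂ) = t := Complex.conj_ofReal t
      rw [star_add, star_smul, hgs, this, add_mul, mul_add, mul_add, h1, mul_smul_comm, h2,
        smul_mul_assoc, h3, smul_mul_smul_comm, hgi]
      have : (t : ℂ) * t = -r := by exact_mod_cast htt
      rw [this]
      simp
    have h5 := congrArg (· * g) h4
    simp only [add_mul, h2, smul_mul_assoc, hgi, zero_mul, zero_add, smul_eq_zero] at h5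
    rcases h5 with h | h
    · exact ht0 (by exact_mod_cast h)
    · exact hg0 h
  · set t := Real.sqrt r with ht
    have htt : t * t = r := Real.mul_self_sqrt hr.le
    have ht0 : t ≠ 0 := by rintro h; rw [h] at htt; apply hr0; linarith
    have ht0' : (t : ℂ) ≠ 0 := by exact_mod_cast ht0
    refine ⟨(t : ℂ)⁻¹, inv_ne_zero ht0', ?_⟩
    have : star ((t : ℂ)⁻¹) = (t : ℂ)⁻¹ := by
      rw [← Complex.ofReal_inv]; exact Complex.conj_ofReal _
    rw [star_smul, this, smul_mul_smul_comm, h1, smul_smul]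
    have h3 : (t : ℂ) * t = r := by exact_mod_cast htt
    rw [← h3]
    have : (t : ℂ)⁻¹ * (t : ℂ)⁻¹ * (t * t) = 1 := by field_simp
    rw [this, one_smul]

theorem Good.proj_comm_of_noM2 (hA : Good A) {h e p : A} (hh : IsStarProjection h)
    (H : ∀ v, h * v = v → v * h = v → ¬ IsM2 v)
    (he : IsStarProjection e) (hp : IsStarProjection p) (he1 : h * e = e) (hp1 : h * p = p) :
    e * p = p * e := by
  have hes := he.isSelfAdjoint.star_eq
  have hei : e * e = e := he.isIdempotentElem
  have hps := hp.isSelfAdjoint.star_eq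
  have hhs := hh.isSelfAdjoint.star_eq
  have hhi : h * h = h := hh.isIdempotentElem
  have he2 := proj_right hh he he1
  have hp2 := proj_right hh hp hp1
  have hx0 : e * p * (h - e) = 0 := by
    by_contra hx
    set x := e * p * (h - e) with hxdef
    have hex : e * x = x := by simp only [hxdef, ← mul_assoc, hei]
    have hxe : x * e = 0 := by rw [hxdef, mul_assoc, sub_mul, he1, hei, sub_self, mul_zero]
    have hhx : h * x = x := by rw [← hex, ← mul_assoc, he1]
    have hxh : x * h = x := by rw [hxdef, mul_assoc, sub_mul, hhi, he2]
    have hsa : star (x * star x) = x * star x := by rw [star_mul, star_star]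
    obtain ⟨s, f, hf, -, -, hsum, hbf, hfb⟩ := hA.spec (a := x * star x) (by rw [hsa])
    have : ∃ i ∈ s, i ≠ 0 ∧ f i ≠ 0 := by
      by_contra! hcon
      apply hx
      apply hA.proper'
      rw [← hsum]
      refine Finset.sum_eq_zero fun i hi => ?_
      by_cases h0 : i = 0
      · simp [h0]
      · simp [hcon i hi h0]
    obtain ⟨c, hcs, hc0, hg0⟩ := this
    have hg := hf c hcs
    set g := f c
    have hgi : g * g = g := hg.isIdempotentElem
    have hgs := hg.isSelfAdjoint.star_eq
    have heg : e * g = g := by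
      have h2 : g = c⁻¹ • (x * star x * g) := by
        rw [hbf c hcs, smul_smul, inv_mul_cancel₀ hc0, one_smul]
      rw [h2, mul_smul_comm]
      simp only [← mul_assoc, hex]
    have hxg : x * g = 0 := by rw [← heg, ← mul_assoc, hxe, zero_mul]
    obtain ⟨d, hd, hv⟩ := hA.scale (y := g * x) hg hg0 hc0
      (by rw [star_mul, hgs, ← mul_assoc, mul_assoc g, hfb c hcs, smul_mul_assoc, hgi])
      (by rw [mul_assoc, hxg, mul_zero])
    have hhg : h * g = g := by rw [← heg, ← mul_assoc, he1]
    refine H (d • (g * x)) ?_ ?_ ⟨?_, ?_, ?_⟩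
    · rw [mul_smul_comm, ← mul_assoc, hhg]
    · rw [smul_mul_assoc, mul_assoc, hxh]
    · rw [hv, mul_smul_comm, ← mul_assoc, hgi]
    · rw [smul_mul_smul_comm, mul_assoc, ← mul_assoc x, hxg]; simp
    · intro h0
      rw [h0, zero_mul] at hv
      exact hg0 hv.symm
  have h1 : e * p = e * p * e := by
    rw [mul_sub, mul_assoc, hp2] at hx0
    exact sub_eq_zero.1 hx0
  have h2 := congrArg star h1
  simp only [star_mul, hes, hps] at h2
  rw [h1, h2, mul_assoc]

theorem Good.comm_of_noM2 (hA : Good A) {h : A} (hh : IsStarProjection h)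
    (H : ∀ v, h * v = v → v * h = v → ¬ IsM2 v) {a b : A}
    (ha : h * a = a) (ha' : a * h = a) (hb : h * b = b) (hb' : b * h = b) : a * b = b * a := by
  have h1 := hA.span_proj hh ha ha'
  have h2 := hA.span_proj hh hb hb'
  clear ha ha' hb hb'
  induction h1, h2 using Submodule.span_induction₂ with
  | mem_mem x y hx hy => exact hA.proj_comm_of_noM2 hh H hx.1 hy.1 hx.2 hy.2
  | zero_left y hy => simp
  | zero_right x hx => simp
  | add_left x y z hx hy hz h1 h2 => rw [add_mul, mul_add, h1, h2]
  | add_right x y z hx hy hz h1 h2 => rw [add_mul, mul_add, h1, h2]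
  | smul_left r x y hx hy h => rw [smul_mul_assoc, mul_smul_comm, h]
  | smul_right r x y hx hy h => rw [smul_mul_assoc, mul_smul_comm, h]

/-- The support projection of an `IsM2` partial isometry. -/
def hM (v : A) : A := v * star v + star v * v

theorem IsM2.star_eq {v : A} (hv : IsM2 v) : star v * v * star v = star v := by
  have := congrArg star hv.1
  simpa only [star_mul, star_star, mul_assoc] using this

theorem IsM2.star_sq {v : A} (hv : IsM2 v) : star v * star v = 0 := by
  rw [← star_mul, hv.2.1, star_zero]

theorem IsM2.proj1 {v : A} (hv : IsM2 v) : IsStarProjection (v * star v) :=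
  ⟨by rw [IsIdempotentElem, ← mul_assoc, hv.1], by simp [IsSelfAdjoint]⟩

theorem IsM2.proj2 {v : A} (hv : IsM2 v) : IsStarProjection (star v * v) :=
  ⟨by rw [IsIdempotentElem, ← mul_assoc, hv.star_eq], by simp [IsSelfAdjoint]⟩

theorem IsM2.orth {v : A} (hv : IsM2 v) : (v * star v) * (star v * v) = 0 := by
  rw [mul_assoc, ← mul_assoc (star v), hv.star_sq, zero_mul, mul_zero]

theorem IsM2.proj {v : A} (hv : IsM2 v) : IsStarProjection (hM v) :=
  hv.proj1.add hv.proj2 hv.orth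

/-- Claim 1: no infinite orthogonal sequence of copies of the two by two matrices. -/
theorem Good.no_seq (hA : Good A) (v : ℕ → A) (hv : ∀ n, IsM2 (v n))
    (ho : ∀ n m, n ≠ m → hM (v n) * hM (v m) = 0) : False := by
  let g : ℕ → A := fun n => v n * star (v n)
  let g' : ℕ → A := fun n => star (v n) * v n
  let h : ℕ → A := fun n => hM (v n)
  let c : ℕ → ℝ := fun n => Real.sqrt (1 / (n + 2))
  let d : ℕ → ℝ := fun n => Real.sqrt (1 - 1 / (n + 2))
  have hc : ∀ n, c n * c n = 1 / (n + 2) := fun n => Real.mul_self_sqrt (by positivity)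
  have hd : ∀ n, d n * d n = 1 - 1 / (n + 2) := fun n => Real.mul_self_sqrt (by
    rw [sub_nonneg, div_le_one (by positivity)]
    have : (0 : ℝ) ≤ n := Nat.cast_nonneg n
    linarith)
  have hcd : ∀ n, (c n : ℂ) * c n + d n * d n = 1 := by
    intro n
    have : c n * c n + d n * d n = 1 := by rw [hc, hd]; ring
    exact_mod_cast this
  let p : ℕ → A := fun n => ((c n : ℂ) * c n) • g n + ((d n : ℂ) * d n) • g' n +
    ((c n : ℂ) * d n) • (v n + star (v n))
  have e1 : ∀ n, v n * (star (v n) * v n) = v n := fun n => by rw [← mul_assoc, (hv n).1]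
  have e2 : ∀ n, v n * v n = 0 := fun n => (hv n).2.1
  have e3 : ∀ n, star (v n) * (v n * star (v n)) = star (v n) := fun n => by
    rw [← mul_assoc, (hv n).star_eq]
  have e4 : ∀ n, star (v n) * star (v n) = 0 := fun n => (hv n).star_sq
  have hp : ∀ n, p n * p n = p n := by
    intro n
    have key : ∀ a b : ℂ, a * a + b * b = 1 → 
       ((a * a) • g n + (b * b) • g' n + (a * b) • (v n + star (v n))) *
       ((a * a) • g n + (b * b) • g' n + (a * b) • (v n + star (v n))) =
       (a * a + b * b) • ((a * a) • g n + (b * b) • g' n + (a * b) • (v n + star (v n))) := by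
      intro a b hab
      simp only [g, g', mul_add, add_mul, smul_mul_smul_comm, mul_assoc, e1, e2, e3, e4, ra (e1 n),
        ra (e2 n), ra (e3 n), ra (e4 n), mul_zero, zero_mul, smul_zero, add_zero, zero_add]
      module
    rw [key _ _ (hcd n), hcd, one_smul]
  have hph : ∀ n, p n * h n = p n := by
    intro n
    simp only [p, h, hM, g, g', mul_add, add_mul, smul_mul_assoc, mul_assoc, e1, e2, e3, e4,
      ra (e1 n), ra (e2 n), ra (e3 n), ra (e4 n), mul_zero, zero_mul, smul_zero, add_zero, zero_add]
    module
  have hhp : ∀ n, h n * p n = p n := by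
    intro n
    simp only [p, h, hM, g, g', mul_add, add_mul, mul_smul_comm, mul_assoc, e1, e2, e3, e4,
      ra (e1 n), ra (e2 n), ra (e3 n), ra (e4 n), mul_zero, zero_mul, smul_zero, add_zero, zero_add]
  have hgh : ∀ n, g n * h n = g n := by
    intro n
    simp only [h, hM, g, mul_add, mul_assoc, e1, e3, e4,
      ra (e4 n), mul_zero, zero_mul, add_zero]
  have hhg : ∀ n, h n * g n = g n := by
    intro n
    simp only [h, hM, g, add_mul, mul_assoc, e1, e3, e2,
      ra (e2 n), mul_zero, zero_mul, add_zero]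
  have hgg : ∀ n, g n * g n = g n := fun n => (hv n).proj1.isIdempotentElem
  have hgpg : ∀ n, g n * p n * g n = ((c n : ℂ) * c n) • g n := by
    intro n
    simp only [p, g, g', mul_add, add_mul, mul_smul_comm, smul_mul_assoc, mul_assoc, e1, e2, e3, e4,
      ra (e1 n), ra (e2 n), ra (e3 n), ra (e4 n), mul_zero, zero_mul, smul_zero, add_zero, zero_add]
  -- general sup computation
  have gen : ∀ q : ℕ → A, (∀ n, q n * q n = q n) → (∀ n, q n * h n = q n) →
      (∀ n, h n * q n = q n) → (∀ n, star (q n) = q n) →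
      ∃ P : A, IsStarProjection P ∧ ∀ n, P * h n = q n := by
    intro q hqq hqh hhq hqs
    obtain ⟨P, hP, hP1, hP2⟩ := hA.exists_sup (Set.range q) (Set.range_nonempty _)
    refine ⟨P, hP, fun n => ?_⟩
    have h1 : P * (h n - q n) = 0 := by
      apply hP2
      rintro _ ⟨m, rfl⟩
      by_cases hmn : m = n
      · subst hmn; rw [mul_sub, hqh, hqq, sub_self]
      · have : q m * h n = 0 := by rw [← hqh m, mul_assoc, ho m n hmn, mul_zero]
        rw [mul_sub, this, ← hhq n, ← mul_assoc, this]; simp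
    have h2 : P * q n = q n := by
      have := congrArg star (hP1 (q n) ⟨n, rfl⟩)
      rwa [star_mul, hP.isSelfAdjoint.star_eq, hqs] at this
    rw [mul_sub, sub_eq_zero, h2] at h1
    exact h1
  have hgs : ∀ n, star (g n) = g n := fun n => (hv n).proj1.isSelfAdjoint.star_eq
  have hgs' : ∀ n, star (g' n) = g' n := fun n => (hv n).proj2.isSelfAdjoint.star_eq
  have hps : ∀ n, star (p n) = p n := by
    intro n
    simp only [p, star_add, star_smul, hgs, hgs', star_mul, star_star, RCLike.star_def,
      Complex.conj_ofReal]
    rw [mul_comm (d n : ℂ) (c n), add_comm (star (v n))]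
  obtain ⟨P, hP, hPh⟩ := gen p hp hph hhp hps
  obtain ⟨Q, hQ, hQh⟩ := gen g hgg hgh hhg hgs
  have hx : ∀ n, (Q * P * Q) * g n = ((c n : ℂ) * c n) • g n := by
    intro n
    have h1 : Q * g n = g n := by
      conv_lhs => rw [← hhg n, ← mul_assoc, hQh, hgg]
    have h2 : P * g n = p n * g n := by
      conv_lhs => rw [← hhg n, ← mul_assoc, hPh]
    have h3 : Q * p n = g n * p n := by
      conv_lhs => rw [← hhp n, ← mul_assoc, hQh]
    calc Q * P * Q * g n = Q * (P * (Q * g n)) := by simp only [mul_assoc]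
      _ = (Q * p n) * g n := by rw [h1, h2]; simp only [mul_assoc]
      _ = _ := by rw [h3, hgpg]
  obtain ⟨f, hf, hf0⟩ := hA.integral (Q * P * Q)
  rw [← Polynomial.aeval_def] at hf0
  have hev : ∀ n, f.eval ((c n : ℂ) * c n) = 0 := by
    intro n
    have h1 : ∀ q : Polynomial ℂ, Polynomial.aeval (Q * P * Q) q * g n
        = q.eval ((c n : ℂ) * c n) • g n := by
      intro q
      induction q using Polynomial.induction_on' with
      | add p q hp hq => simp [add_mul, hp, hq, add_smul]
      | monomial k a =>
        have : ∀ k : ℕ, (Q * P * Q) ^ k * g n = ((c n : ℂ) * c n) ^ k • g n := by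
          intro k
          induction k with
          | zero => simp
          | succ k ih => rw [pow_succ, mul_assoc, hx, mul_smul_comm, ih, smul_smul, pow_succ']
        rw [Polynomial.aeval_monomial, Polynomial.eval_monomial, mul_assoc, this,
          ← Algebra.smul_def, smul_smul]
    have h2 := h1 f
    rw [hf0, zero_mul] at h2
    rcases smul_eq_zero.1 h2.symm with h | h
    · exact h
    · exfalso
      apply (hv n).2.2
      rw [← (hv n).1]
      change g n * v n = 0
      rw [h, zero_mul]
  have hinj : Function.Injective fun n => (c n : ℂ) * c n := by
    intro n m hnm
    have h1 : c n * c n = c m * c m := by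
      have : (c n : ℂ) * c n = (c m : ℂ) * c m := hnm
      exact_mod_cast this
    rw [hc, hc] at h1
    have h2 : (n : ℝ) + 2 = m + 2 := by
      simpa using h1
    exact_mod_cast (add_right_cancel h2)
  have := Polynomial.eq_zero_of_infinite_isRoot f
    ((Set.infinite_range_of_injective hinj).mono (by rintro _ ⟨n, rfl⟩; exact hev n))
  exact hf.ne_zero this

end

end BaerAux

set_option linter.unusedSectionVars false
set_option linter.unusedSimpArgs false

namespace BaerAux

section

variable {A : Type*} [Ring A] [Algebra ℂ A] [StarRing A] [StarModule ℂ A]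

/-- Minimal projections. -/
structure MinP (k : A) : Prop where
  proj : IsStarProjection k
  ne : k ≠ 0
  min : ∀ e, IsStarProjection e → k * e = e → e = 0 ∨ e = k

theorem MinP.idem {k : A} (hk : MinP k) : k * k = k := hk.proj.isIdempotentElem
theorem MinP.star {k : A} (hk : MinP k) : star k = k := hk.proj.isSelfAdjoint.star_eq

theorem Good.min_coef (hA : Good A) {k : A} (hk : MinP k) (a : A) : ∃ c : ℂ, k * a * k = c • k := by
  have h1 := hA.span_proj (x := k * a * k) hk.proj (by simp only [← mul_assoc, hk.idem])
    (by rw [mul_assoc, hk.idem])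
  have h2 : Submodule.span ℂ {e : A | IsStarProjection e ∧ k * e = e} ≤ Submodule.span ℂ {k} := by
    rw [Submodule.span_le]
    rintro e ⟨he, he1⟩
    rcases hk.min e he he1 with h | h
    · rw [h]; exact Submodule.zero_mem _
    · rw [h]; exact Submodule.mem_span_singleton_self k
  obtain ⟨c, hc⟩ := Submodule.mem_span_singleton.1 (h2 h1)
  exact ⟨c, hc.symm⟩

/-- Orthogonal finite sets of minimal projections. -/
structure OF (s : Finset A) : Prop where
  min : ∀ g ∈ s, MinP g
  orth : ∀ g ∈ s, ∀ k ∈ s, g ≠ k → g * k = 0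

theorem OF.mul_sum {s : Finset A} (hs : OF s) {g : A} (hg : g ∈ s) : g * ∑ k ∈ s, k = g := by
  rw [Finset.mul_sum, Finset.sum_eq_single g]
  · exact (hs.min g hg).idem
  · intro b hb hbg; exact hs.orth g hg b hb hbg.symm
  · intro h; exact absurd hg h

theorem OF.sum_mul {s : Finset A} (hs : OF s) {g : A} (hg : g ∈ s) : (∑ k ∈ s, k) * g = g := by
  rw [Finset.sum_mul, Finset.sum_eq_single g]
  · exact (hs.min g hg).idem
  · intro b hb hbg; exact hs.orth b hb g hg hbg
  · intro h; exact absurd hg h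

theorem OF.proj {s : Finset A} (hs : OF s) : IsStarProjection (∑ k ∈ s, k) := by
  refine ⟨?_, ?_⟩
  · rw [IsIdempotentElem, Finset.sum_mul]
    exact Finset.sum_congr rfl fun g hg => hs.mul_sum hg
  · rw [IsSelfAdjoint, star_sum]
    exact Finset.sum_congr rfl fun g hg => (hs.min g hg).star

/-- Finite sums of orthogonal minimal projections. -/
def FS (h : A) : Prop := ∃ s : Finset A, OF s ∧ h = ∑ g ∈ s, g

theorem FS.zero : FS (0 : A) := ⟨∅, ⟨by simp, by simp⟩, by simp⟩

theorem FS.of_min {k : A} (hk : MinP k) : FS k :=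
  ⟨{k}, ⟨by simpa using hk, by simp⟩, by simp⟩

theorem FS.proj {h : A} (hh : FS h) : IsStarProjection h := by
  obtain ⟨s, hs, rfl⟩ := hh
  exact hs.proj

theorem FS.add {e f : A} (he : FS e) (hf : FS f) (hef : e * f = 0) : FS (e + f) := by
  classical
  obtain ⟨s, hs, rfl⟩ := he
  obtain ⟨t, ht, rfl⟩ := hf
  have h0 : ∀ g ∈ s, ∀ k ∈ t, g * k = 0 := by
    intro g hg k hk
    rw [← hs.mul_sum hg, ← ht.sum_mul hk, mul_assoc, ← mul_assoc (∑ k ∈ s, k), hef]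
    simp
  have hd : Disjoint s t := by
    rw [Finset.disjoint_left]
    intro g hg hg'
    apply (hs.min g hg).ne
    rw [← (hs.min g hg).idem]
    exact h0 g hg g hg'
  refine ⟨s ∪ t, ⟨?_, ?_⟩, (Finset.sum_union hd).symm⟩
  · intro g hg
    rcases Finset.mem_union.1 hg with h | h
    · exact hs.min g h
    · exact ht.min g h
  · intro g hg k hk hgk
    rcases Finset.mem_union.1 hg with h | h <;> rcases Finset.mem_union.1 hk with h' | h'
    · exact hs.orth g h k h' hgk
    · exact h0 g h k h'
    · exact proj_comm0 (hs.min k h').proj (ht.min g h).proj (h0 k h' g h)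
    · exact ht.orth g h k h' hgk

theorem proj_sub {e f : A} (he : IsStarProjection e) (hf : IsStarProjection f) (h : e * f = f) :
    IsStarProjection (e - f) := by
  refine ⟨?_, he.isSelfAdjoint.sub hf.isSelfAdjoint⟩
  have h1 : e * e = e := he.isIdempotentElem
  have h2 : f * f = f := hf.isIdempotentElem
  rw [IsIdempotentElem, mul_sub, sub_mul, sub_mul, h1, h2, h, proj_right he hf h]; simp

theorem FS_of_noseq {g : A} (hg : IsStarProjection g)
    (H : ∀ e : ℕ → A, (∀ n, IsStarProjection (e n)) → (∀ n, e n ≠ 0) → (∀ n, g * e n = e n) →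
      (∀ n m, n ≠ m → e n * e m = 0) → False) : FS g := by
  by_contra hFS
  let P : A → Prop := fun e => IsStarProjection e ∧ g * e = e ∧ ¬ FS e
  have step : ∀ e : {e // P e}, ∃ f : {e // P e}, e.1 * f.1 = f.1 ∧ f.1 ≠ e.1 := by
    rintro ⟨e, he, hge, hFe⟩
    have hei : e * e = e := he.isIdempotentElem
    have h0 : e ≠ 0 := by rintro rfl; exact hFe FS.zero
    have h1 : ∃ f, IsStarProjection f ∧ e * f = f ∧ f ≠ 0 ∧ f ≠ e := by
      by_contra! hcon
      refine hFe (FS.of_min ⟨he, h0, fun f hf hf1 => ?_⟩)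
      by_cases h : f = 0
      · exact Or.inl h
      · exact Or.inr (hcon f hf hf1 h)
    obtain ⟨f, hf, hef, hf0, hfe⟩ := h1
    have hfi : f * f = f := hf.isIdempotentElem
    by_cases hFf : FS f
    · have h2 : ¬ FS (e - f) := by
        intro h2
        apply hFe
        have := hFf.add h2 (by rw [mul_sub, hfi, proj_right he hf hef, sub_self])
        simpa using this
      refine ⟨⟨e - f, proj_sub he hf hef, ?_, h2⟩, ?_, ?_⟩
      · rw [mul_sub, hge, ← hef, ← mul_assoc, hge]
      · change e * (e - f) = e - f
        rw [mul_sub, hei, hef]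
      · simpa using hf0
    · exact ⟨⟨f, hf, by rw [← hef, ← mul_assoc, hge], hFf⟩, hef, hfe⟩
  choose F hF1 hF2 using step
  let u : ℕ → {e // P e} := fun n => F^[n] ⟨g, hg, hg.isIdempotentElem, hFS⟩
  have hu : ∀ n, u (n + 1) = F (u n) := fun n => Function.iterate_succ_apply' _ _ _
  have hle : ∀ n k, (u n).1 * (u (n + k)).1 = (u (n + k)).1 := by
    intro n k
    induction k with
    | zero => exact (u n).2.1.isIdempotentElem
    | succ k ih =>
      have : (u (n + k)).1 * (u (n + (k + 1))).1 = (u (n + (k + 1))).1 := by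
        rw [← add_assoc, hu]; exact hF1 _
      rw [← this, ← mul_assoc, ih]
  have hle' : ∀ n m, n ≤ m → (u n).1 * (u m).1 = (u m).1 := by
    intro n m hnm
    obtain ⟨k, rfl⟩ := Nat.exists_eq_add_of_le hnm
    exact hle n k
  have hp : ∀ n, IsStarProjection ((u n).1 - (u (n + 1)).1) := fun n =>
    proj_sub (u n).2.1 (u (n + 1)).2.1 (hle n 1)
  have ho : ∀ n m, n < m → ((u n).1 - (u (n + 1)).1) * ((u m).1 - (u (m + 1)).1) = 0 := by
    intro n m hnm
    rw [sub_mul, mul_sub, mul_sub, hle' n m (by omega), hle' n (m + 1) (by omega),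
      hle' (n + 1) m (by omega), hle' (n + 1) (m + 1) (by omega), sub_self]
  refine H (fun n => (u n).1 - (u (n + 1)).1) hp ?_ ?_ ?_
  · intro n h
    rw [sub_eq_zero, hu] at h
    exact hF2 _ h.symm
  · intro n
    rw [mul_sub, (u n).2.2.1, (u (n + 1)).2.2.1]
  · intro n m hnm
    rcases lt_or_gt_of_ne hnm with h | h
    · exact ho n m h
    · exact proj_comm0 (hp m) (hp n) (ho m n h)

theorem IsM2.star {v : A} (hv : IsM2 v) : IsM2 (star v) :=
  ⟨by rw [star_star]; exact hv.star_eq, hv.star_sq, by simpa using hv.2.2⟩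

theorem Good.FS_M2_aux (hA : Good A) {v : A} (hv : IsM2 v) : FS (v * Star.star v) := by
  refine FS_of_noseq hv.proj1 fun g hg hg0 hvg ho => ?_
  have hgv : ∀ n, g n * (v * Star.star v) = g n := fun n => proj_right hv.proj1 (hg n) (hvg n)
  have hgs : ∀ n, Star.star (g n) = g n := fun n => (hg n).isSelfAdjoint.star_eq
  have hgi : ∀ n, g n * g n = g n := fun n => (hg n).isIdempotentElem
  have hvg' : ∀ n, v * (Star.star v * g n) = g n := fun n => by rw [← mul_assoc, hvg]
  have h1 : ∀ n, v * g n = 0 := fun n => by rw [← hvg' n, ← mul_assoc, hv.2.1, zero_mul]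
  have h2 : ∀ n, g n * Star.star v = 0 := fun n => by
    rw [← hgv n, mul_assoc, mul_assoc, hv.star_sq, mul_zero, mul_zero]
  refine hA.no_seq (fun n => g n * v) (fun n => ⟨?_, ?_, ?_⟩) ?_
  · simp only [star_mul, hgs, mul_assoc, ra (hgi n), hvg', hgi, ra (hgv n), ra (hvg' n)]
  · simp only [mul_assoc, ra (h1 n), zero_mul, mul_zero]
  · intro h0
    apply hg0 n
    rw [← hgv n, ← mul_assoc, h0, zero_mul]
  · intro n m hnm
    have h3 : ∀ n, hM (g n * v) = g n + Star.star v * g n * v := by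
      intro n
      simp only [hM, star_mul, hgs, mul_assoc, hvg', hgi, ra (hgi n)]
    rw [h3, h3, add_mul, mul_add, mul_add, ho n m hnm]
    have e1 : g n * (Star.star v * g m * v) = 0 := by
      simp only [← mul_assoc, h2, zero_mul]
    have e2 : Star.star v * g n * v * g m = 0 := by
      rw [mul_assoc, h1, mul_zero]
    have e3 : Star.star v * g n * v * (Star.star v * g m * v) = 0 := by
      have : v * (Star.star v * (g m * v)) = g m * v := by
        rw [← mul_assoc (Star.star v), ← mul_assoc, hvg']
      simp only [mul_assoc, this, ra (ho n m hnm), zero_mul, mul_zero]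
    rw [e1, e2, e3]; simp

theorem Good.FS_M2 (hA : Good A) {v : A} (hv : IsM2 v) : FS (hM v) := by
  refine (hA.FS_M2_aux hv).add ?_ hv.orth
  have := hA.FS_M2_aux hv.star
  rwa [star_star] at this

theorem Good.exists_h (hA : Good A) : ∃ h : A, FS h ∧
    ∀ v, (1 - h) * v = v → v * (1 - h) = v → ¬ IsM2 v := by
  by_contra! hcon
  have h1 : ∀ h : {h : A // FS h}, ∃ v, h.1 * v = 0 ∧ v * h.1 = 0 ∧ IsM2 v := by
    rintro ⟨h, hh⟩
    obtain ⟨v, h1, h2, h3⟩ := hcon h hh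
    refine ⟨v, ?_, ?_, h3⟩
    · rw [sub_mul, one_mul] at h1; simpa using h1
    · rw [mul_sub, mul_one] at h2; simpa using h2
  choose V hV1 hV2 hV3 using h1
  have hs1 : ∀ h, h.1 * hM (V h) = 0 := by
    intro h
    have : h.1 * Star.star (V h) = 0 := by
      have := congrArg Star.star (hV2 h)
      rwa [star_mul, h.2.proj.isSelfAdjoint.star_eq, star_zero] at this
    rw [hM, mul_add, ← mul_assoc, hV1, ← mul_assoc, this]; simp
  let F : {h : A // FS h} → {h : A // FS h} := fun h => ⟨h.1 + hM (V h),
    h.2.add (hA.FS_M2 (hV3 h)) (hs1 h)⟩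
  let u : ℕ → {h : A // FS h} := fun n => F^[n] ⟨0, FS.zero⟩
  have hu : ∀ n, u (n + 1) = F (u n) := fun n => Function.iterate_succ_apply' _ _ _
  have hu' : ∀ n, (u (n + 1)).1 = (u n).1 + hM (V (u n)) := fun n => by rw [hu]
  have hi : ∀ n, (u n).1 * (u n).1 = (u n).1 := fun n => (u n).2.proj.isIdempotentElem
  have hMi : ∀ n, hM (V (u n)) * hM (V (u n)) = hM (V (u n)) :=
    fun n => (hV3 (u n)).proj.isIdempotentElem
  have hs2 : ∀ n, hM (V (u n)) * (u n).1 = 0 := fun n =>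
    proj_comm0 (u n).2.proj (hV3 (u n)).proj (hs1 _)
  have hk : ∀ n k, hM (V (u n)) * (u (n + 1 + k)).1 = hM (V (u n)) := by
    intro n k
    have hn : hM (V (u n)) * (u (n + 1)).1 = hM (V (u n)) := by
      rw [hu', mul_add, hs2, hMi, zero_add]
    induction k with
    | zero => exact hn
    | succ k ih =>
      rw [← add_assoc, hu', mul_add, ih]
      have : hM (V (u n)) * hM (V (u (n + 1 + k))) = 0 := by
        rw [← ih, mul_assoc, hs1, mul_zero]
      rw [this, add_zero]
  have ho : ∀ n m, n < m → hM (V (u n)) * hM (V (u m)) = 0 := by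
    intro n m hnm
    obtain ⟨k, rfl⟩ := Nat.exists_eq_add_of_le (Nat.succ_le_of_lt hnm)
    rw [← hk n k, mul_assoc]
    change _ * ((u (n + 1 + k)).1 * hM (V (u (n + 1 + k)))) = 0
    rw [hs1, mul_zero]
  refine hA.no_seq (fun n => V (u n)) (fun n => hV3 _) fun n m hnm => ?_
  rcases lt_or_gt_of_ne hnm with h | h
  · exact ho n m h
  · exact proj_comm0 (hV3 _).proj (hV3 _).proj (ho m n h)

theorem Good.partial_iso (hA : Good A) {g x : A} (hg : MinP g) (hx0 : x ≠ 0) (h1 : g * x = x)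
    (h2 : x * g = 0) : ∃ d : ℂ, d ≠ 0 ∧ (d • x) * Star.star (d • x) = g := by
  obtain ⟨c, hc⟩ := hA.min_coef hg (x * Star.star x)
  have h3 : Star.star x * g = Star.star x := by
    have := congrArg Star.star h1
    rwa [star_mul, hg.star] at this
  have h4 : g * (x * Star.star x) * g = x * Star.star x := by
    rw [← mul_assoc, h1, mul_assoc, h3]
  rw [h4] at hc
  refine hA.scale hg.proj hg.ne ?_ hc h2
  rintro rfl
  rw [zero_smul] at hc
  exact hx0 (hA.proper' hc)

theorem MinP.transfer {g y : A} (hg : MinP g) (h1 : g * y = y) (h2 : y * Star.star y = g) :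
    MinP (Star.star y * y) := by
  have h3 : Star.star y * g = Star.star y := by
    have := congrArg Star.star h1
    rwa [star_mul, hg.star] at this
  refine ⟨⟨?_, by simp [IsSelfAdjoint]⟩, ?_, ?_⟩
  · rw [IsIdempotentElem, mul_assoc, ra h2, h1]
  · intro h0
    apply hg.ne
    rw [← hg.idem]
    conv_lhs => rw [← h2]
    rw [mul_assoc, ra h0]; simp
  · intro e he hke
    have hek : e * (Star.star y * y) = e := by
      have := congrArg Star.star hke
      rwa [star_mul, star_mul, star_star, he.isSelfAdjoint.star_eq] at this
    have hei : e * e = e := he.isIdempotentElem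
    have hp : IsStarProjection (y * e * Star.star y) := by
      refine ⟨?_, ?_⟩
      · have : e * (Star.star y * (y * (e * Star.star y))) = e * Star.star y := by
          rw [← mul_assoc (Star.star y), ra hek, ra hei]
        rw [IsIdempotentElem, mul_assoc, mul_assoc, mul_assoc, this]
      · rw [IsSelfAdjoint, star_mul, star_mul, star_star, he.isSelfAdjoint.star_eq, mul_assoc]
    have h4 : e = Star.star y * (y * e * Star.star y) * y := by
      have : Star.star y * (y * e * Star.star y) * y = (Star.star y * y * e) * (Star.star y * y) := by
        simp only [mul_assoc]
      rw [this, hke, hek]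
    rcases hg.min _ hp (by simp only [← mul_assoc, h1]) with h | h
    · left; rw [h4, h]; simp
    · right; rw [h4, h, h3]

theorem Good.offdiag (hA : Good A) {g u : A} (hg : MinP g) (hu : IsStarProjection u)
    (hgu : g * u = 0)
    (hc : ∀ a b, u * a = a → a * u = a → u * b = b → b * u = b → a * b = b * a) :
    ∃ k, IsStarProjection k ∧ u * k = k ∧ (k = 0 ∨ MinP k) ∧ ∀ a, g * a * u = g * a * k := by
  have hui : u * u = u := hu.isIdempotentElem
  have hus := hu.isSelfAdjoint.star_eq
  have hug := proj_comm0 hg.proj hu hgu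
  by_cases H : ∀ a, g * a * u = 0
  · exact ⟨0, by simp, by simp, Or.inl rfl, fun a => by rw [H, mul_zero]⟩
  push Not at H
  obtain ⟨a0, ha0⟩ := H
  obtain ⟨d, hd, hy⟩ := hA.partial_iso hg ha0 (by simp only [← mul_assoc, hg.idem])
    (by rw [mul_assoc, hug, mul_zero])
  have hgy : g * (d • (g * a0 * u)) = d • (g * a0 * u) := by
    rw [mul_smul_comm]; simp only [← mul_assoc, hg.idem]
  have hyu : (d • (g * a0 * u)) * u = d • (g * a0 * u) := by
    rw [smul_mul_assoc, mul_assoc, hui]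
  generalize d • (g * a0 * u) = y at hy hgy hyu
  have hmin := hg.transfer hgy hy
  have hysu : u * Star.star y = Star.star y := by
    have := congrArg Star.star hyu
    rwa [star_mul, hus] at this
  have huk : u * (Star.star y * y) = Star.star y * y := by rw [← mul_assoc, hysu]
  have hku := proj_right hu hmin.proj huk
  refine ⟨Star.star y * y, hmin.proj, huk, Or.inr hmin, fun a => ?_⟩
  generalize hk : Star.star y * y = k at *
  have hks : Star.star k = k := hmin.star
  have hki : k * k = k := hmin.idem
  by_contra hne
  have hx0 : g * a * (u - k) ≠ 0 := by
    rwa [mul_sub, sub_ne_zero]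
  have hukk : (u - k) * (u - k) = u - k := (proj_sub hu hmin.proj huk).isIdempotentElem
  obtain ⟨d', hd', hy'⟩ := hA.partial_iso hg hx0 (by simp only [← mul_assoc, hg.idem])
    (by rw [mul_assoc, sub_mul, hug, ← hku, mul_assoc k, hug]; simp)
  have hgy' : g * (d' • (g * a * (u - k))) = d' • (g * a * (u - k)) := by
    rw [mul_smul_comm]; simp only [← mul_assoc, hg.idem]
  have hyu' : (d' • (g * a * (u - k))) * (u - k) = d' • (g * a * (u - k)) := by
    rw [smul_mul_assoc, mul_assoc, hukk]
  generalize d' • (g * a * (u - k)) = w at hy' hgy' hyu'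
  have hwk : w * k = 0 := by
    rw [← hyu', mul_assoc, sub_mul, huk, hki, sub_self, mul_zero]
  have hwu : w * u = w := by
    rw [← hyu', mul_assoc, sub_mul, hui, hku]
  have hcomm := hc k (Star.star y * w) huk hku (by rw [← mul_assoc, hysu]) (by rw [mul_assoc, hwu])
  rw [mul_assoc (Star.star y), hwk, mul_zero, ← hk, mul_assoc, ra hy, hgy'] at hcomm
  apply hg.ne
  have : g * g = y * (Star.star y * w) * Star.star w := by
    rw [ra hy, hgy', hy', hg.idem]
  rw [← hg.idem, this, hcomm]; simp

theorem Good.offdiag_fin (hA : Good A) {u : A} (hu : IsStarProjection u)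
    (hc : ∀ a b, u * a = a → a * u = a → u * b = b → b * u = b → a * b = b * a)
    (s : Finset A) (hs : ∀ g ∈ s, MinP g ∧ g * u = 0) :
    ∃ k, FS k ∧ u * k = k ∧ ∀ g ∈ s, ∀ a, g * a * u = g * a * k := by
  classical
  induction s using Finset.induction_on with
  | empty => exact ⟨0, FS.zero, by simp, by simp⟩
  | insert g s hgs ih =>
    obtain ⟨k, hk, huk, hk'⟩ := ih fun g hg => hs g (Finset.mem_insert_of_mem hg)
    obtain ⟨hg, hgu⟩ := hs g (Finset.mem_insert_self _ _)
    obtain ⟨l, hl, hul, hl0, hl'⟩ := hA.offdiag hg hu hgu hc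
    have hku := proj_right hu hk.proj huk
    have hlu := proj_right hu hl hul
    have hkl := hc k l huk hku hul hlu
    have hki : k * k = k := hk.proj.isIdempotentElem
    have hli : l * l = l := hl.isIdempotentElem
    have case1 : l * k = l → ∃ k, FS k ∧ u * k = k ∧
        ∀ g' ∈ insert g s, ∀ a, g' * a * u = g' * a * k := by
      intro h
      refine ⟨k, hk, huk, ?_⟩
      intro g' hg' a
      rcases Finset.mem_insert.1 hg' with rfl | h'
      · conv_rhs => rw [← huk, ← mul_assoc, hl', mul_assoc, h]
        exact hl' a
      · exact hk' g' h' a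
    rcases hl0 with rfl | hlm
    · exact case1 (by simp)
    · have hp : IsStarProjection (l * k) := by
        refine ⟨?_, ?_⟩
        · rw [IsIdempotentElem, mul_assoc, ← mul_assoc k, hkl, mul_assoc, hki, ra hli]
        · rw [IsSelfAdjoint, star_mul, hk.proj.isSelfAdjoint.star_eq, hlm.star, hkl]
      rcases hlm.min _ hp (by rw [← mul_assoc, hli]) with h | h
      · refine ⟨l + k, (FS.of_min hlm).add hk h, by rw [mul_add, hul, huk], ?_⟩
        rw [h] at hkl
        intro g' hg' a
        rw [mul_add]
        rcases Finset.mem_insert.1 hg' with rfl | h'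
        · have : g' * a * k = 0 := by rw [← huk, ← mul_assoc, hl', mul_assoc, h, mul_zero]
          rw [this, add_zero, hl']
        · have : g' * a * l = 0 := by rw [← hul, ← mul_assoc, hk' g' h', mul_assoc, hkl, mul_zero]
          rw [this, zero_add, hk' g' h']
      · exact case1 h

/-- Central finite part with commutative complement. -/
structure RR (s : Finset A) : Prop where
  of : OF s
  cen : ∀ a, (∑ g ∈ s, g) * a = a * ∑ g ∈ s, g
  com : ∀ a b, ((1 - ∑ g ∈ s, g) * a) * ((1 - ∑ g ∈ s, g) * b) =
    ((1 - ∑ g ∈ s, g) * b) * ((1 - ∑ g ∈ s, g) * a)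

theorem Good.exists_RR (hA : Good A) : ∃ s : Finset A, RR s := by
  obtain ⟨h, hh, hM2⟩ := hA.exists_h
  have hhi : h * h = h := hh.proj.isIdempotentElem
  have hu : IsStarProjection (1 - h) := hh.proj.one_sub
  have hc := fun a b ha ha' hb hb' => hA.comm_of_noM2 hu hM2 (a := a) (b := b) ha ha' hb hb'
  obtain ⟨s, hs, hhs⟩ := hh
  obtain ⟨k, hk, huk, hk'⟩ := hA.offdiag_fin hu hc s (fun g hg => ⟨hs.min g hg, by
    rw [mul_sub, mul_one, hhs, hs.mul_sum hg, sub_self]⟩)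
  have hhk : h * k = 0 := by
    rw [sub_mul, one_mul] at huk; simpa using huk
  have hku := proj_right hu hk.proj huk
  have hkh := proj_comm0 (by rw [hhs]; exact hs.proj) hk.proj hhk
  have hki : k * k = k := hk.proj.isIdempotentElem
  have hz : FS (h + k) := FS.add ⟨s, hs, hhs⟩ hk hhk
  have hui : (1 - h) * (1 - h) = 1 - h := hu.isIdempotentElem
  have hzs := hz.proj.isSelfAdjoint.star_eq
  have hha : ∀ a, h * a * (1 - h) = h * a * k := by
    intro a
    rw [hhs, Finset.sum_mul, Finset.sum_mul, Finset.sum_mul, ← hhs]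
    exact Finset.sum_congr rfl fun g hg => hk' g hg a
  have h1 : ∀ a, (h + k) * a * (1 - (h + k)) = 0 := by
    intro a
    have e1 : h * a * (1 - (h + k)) = 0 := by
      rw [← sub_sub, mul_sub, hha, sub_self]
    have e2 : k * a * (1 - (h + k)) = 0 := by
      have e3 := hc k ((1 - h) * a * (1 - h)) huk hku (by simp only [← mul_assoc, hui])
        (by rw [mul_assoc, hui])
      have e4 : 1 - (h + k) = (1 - h) * (1 - (h + k)) := by
        rw [← sub_sub, mul_sub, hui, huk]
      have e5 : k * (1 - (h + k)) = 0 := by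
        rw [mul_sub, mul_add, hkh, hki]; simp
      calc k * a * (1 - (h + k)) = k * (1 - h) * a * ((1 - h) * (1 - (h + k))) := by
            rw [← e4, hku]
        _ = (k * ((1 - h) * a * (1 - h))) * (1 - (h + k)) := by simp only [mul_assoc]
        _ = 0 := by rw [e3, mul_assoc, e5, mul_zero]
    rw [add_mul, add_mul, e1, e2, add_zero]
  have h2 : ∀ a, (h + k) * a = (h + k) * a * (h + k) := by
    intro a
    have := h1 a
    rw [mul_sub, mul_one] at this
    exact sub_eq_zero.1 this
  have hcen : ∀ a, (h + k) * a = a * (h + k) := by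
    intro a
    have := congrArg Star.star (h2 (Star.star a))
    simp only [star_mul, star_star, hzs] at this
    rw [this, h2, mul_assoc]
  have hw : IsStarProjection (1 - (h + k)) := hz.proj.one_sub
  have hwi : (1 - (h + k)) * (1 - (h + k)) = 1 - (h + k) := hw.isIdempotentElem
  have huw : (1 - h) * (1 - (h + k)) = 1 - (h + k) := by
    rw [← sub_sub, mul_sub, hui, huk]
  have hwu := proj_right hu hw huw
  have hcom : ∀ a b, ((1 - (h + k)) * a) * ((1 - (h + k)) * b) =
      ((1 - (h + k)) * b) * ((1 - (h + k)) * a) := by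
    have hx : ∀ a, (1 - (h + k)) * a = a * (1 - (h + k)) := by
      intro a; rw [sub_mul, mul_sub, hcen]; simp
    intro a b
    apply hc
    · rw [← mul_assoc, huw]
    · rw [hx, mul_assoc, hwu]
    · rw [← mul_assoc, huw]
    · rw [hx, mul_assoc, hwu]
  obtain ⟨t, ht, hzt⟩ := hz
  rw [hzt] at hcen hcom
  exact ⟨t, ht, hcen, hcom⟩

theorem Good.exists_RR' (hA : Good A) : ∃ s : Finset A, RR s ∧
    ∀ g ∈ s, ∃ k ∈ s, k ≠ g ∧ ∃ a, g * a * k ≠ 0 := by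
  classical
  obtain ⟨s0, hs0⟩ := hA.exists_RR
  have hex : ∃ n, ∃ s : Finset A, RR s ∧ s.card = n := ⟨_, s0, hs0, rfl⟩
  obtain ⟨s, hs, hcard⟩ := Nat.find_spec hex
  refine ⟨s, hs, ?_⟩
  by_contra! hcon
  obtain ⟨g, hg, hgk⟩ := hcon
  refine Nat.find_min hex (m := (s.erase g).card) ?_ ⟨s.erase g, ?_, rfl⟩
  · rw [← hcard]; exact Finset.card_erase_lt_of_mem hg
  have hgm := hs.of.min g hg
  have hsum : ∑ k ∈ s.erase g, k = (∑ k ∈ s, k) - g := by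
    rw [← Finset.sum_erase_add _ _ hg]; simp
  have hgz := hs.of.mul_sum hg
  have hzg := hs.of.sum_mul hg
  have h1 : ∀ a, g * a = g * a * g := by
    intro a
    conv_lhs => rw [← hgz, mul_assoc, hs.cen, ← mul_assoc, Finset.mul_sum]
    rw [Finset.sum_eq_single g]
    · intro k hk hkg; exact hgk k hk hkg a
    · intro h; exact absurd hg h
  have hgc : ∀ a, g * a = a * g := by
    intro a
    have := congrArg Star.star (h1 (Star.star a))
    simp only [star_mul, star_star, hgm.star] at this
    rw [this, h1, mul_assoc]
  refine ⟨⟨fun k hk => hs.of.min k (Finset.mem_of_mem_erase hk), fun k hk l hl =>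
    hs.of.orth k (Finset.mem_of_mem_erase hk) l (Finset.mem_of_mem_erase hl)⟩, ?_, ?_⟩
  · intro a
    rw [hsum, sub_mul, mul_sub, hs.cen, hgc]
  · intro a b
    rw [hsum]
    have hco := hs.com
    have hce := hs.cen
    generalize (∑ k ∈ s, k) = z at *
    have hwc : ∀ a, (1 - z) * a = a * (1 - z) := by
      intro a; rw [sub_mul, mul_sub, hce]; simp
    have e0 : 1 - (z - g) = (1 - z) + g := by abel
    have hwg : (1 - z) * g = 0 := by rw [sub_mul, hzg]; simp
    have hgw : g * (1 - z) = 0 := by rw [mul_sub, hgz]; simp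
    have e1 : ∀ a b, (1 - z) * a * (g * b) = 0 := by
      intro a b; rw [hwc, mul_assoc, ra hwg]; simp
    have e2 : ∀ a b, g * a * ((1 - z) * b) = 0 := by
      intro a b; rw [hgc, mul_assoc, ra hgw]; simp
    have e3 : g * a * (g * b) = g * b * (g * a) := by
      obtain ⟨c, hc⟩ := hA.min_coef hgm a
      obtain ⟨d, hd⟩ := hA.min_coef hgm b
      rw [h1 a, h1 b, hc, hd, smul_mul_smul_comm, smul_mul_smul_comm, mul_comm c]
    rw [e0]
    simp only [add_mul, mul_add, e1, e2, e3, add_zero, zero_add]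
    rw [hco a b]

end

end BaerAux

set_option linter.unusedSectionVars false
set_option linter.unusedSimpArgs false

namespace BaerAux

section

variable {A : Type*} [Ring A] [Algebra ℂ A] [StarRing A] [StarModule ℂ A]

theorem Good.matrix_units (hA : Good A) (m : ℕ) (n : Fin m → ℕ) (r : Fin m → A)
    (v : ∀ k, Fin (n k) → A) (z : A) (hr : ∀ k, MinP (r k))
    (hrv : ∀ k i, r k * v k i = v k i) (hvv : ∀ k i, v k i * star (v k i) = r k)
    (orth : ∀ k i j, i ≠ j → v k i * star (v k j) = 0)
    (off : ∀ k l, k ≠ l → ∀ a, r k * a * r l = 0)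
    (hz : ∑ k, ∑ i, star (v k i) * v k i = z) (hcen : ∀ a, z * a = a * z) :
    ∃ φ : A →⋆ₙₐ[ℂ] (∀ k, Matrix (Fin (n k)) (Fin (n k)) ℂ),
      (∀ M, ∃ a, φ a = M) ∧ ∀ a, φ a = 0 ↔ z * a = 0 := by
  classical
  have hvr : ∀ k i, star (v k i) * r k = star (v k i) := by
    intro k i
    have := congrArg star (hrv k i)
    rwa [star_mul, (hr k).star] at this
  have off' : ∀ k l, k ≠ l → ∀ i j a, v k i * a * star (v l j) = 0 := by
    intro k l hkl i j a
    have : v k i * a * star (v l j) = r k * (v k i * a * star (v l j)) * r l := by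
      rw [mul_assoc (v k i), ra (hrv k i), mul_assoc, mul_assoc, hvr]
    rw [this, off k l hkl]
  have off1 : ∀ k l, k ≠ l → ∀ i j, v k i * star (v l j) = 0 := by
    intro k l hkl i j
    simpa using off' k l hkl i j 1
  have hvz : ∀ k i, v k i * z = v k i := by
    intro k i
    rw [← hz, Finset.mul_sum, Finset.sum_eq_single k]
    · rw [Finset.mul_sum, Finset.sum_eq_single i]
      · rw [ra (hvv k i), hrv]
      · intro j _ hj
        rw [ra (orth k i j hj.symm), zero_mul]
      · intro h; exact absurd (Finset.mem_univ _) h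
    · intro l _ hl
      rw [Finset.mul_sum]
      refine Finset.sum_eq_zero fun j _ => ?_
      rw [ra (off1 k l hl.symm i j), zero_mul]
    · intro h; exact absurd (Finset.mem_univ _) h
  have inj : ∀ k (c d : ℂ), c • r k = d • r k → c = d := by
    intro k c d h
    rw [← sub_eq_zero, ← sub_smul, smul_eq_zero] at h
    rcases h with h | h
    · exact sub_eq_zero.1 h
    · exact absurd h (hr k).ne
  choose co hco using fun k a => hA.min_coef (hr k) a
  let φ : A → ∀ k, Matrix (Fin (n k)) (Fin (n k)) ℂ :=
    fun a k i j => co k (v k i * a * star (v k j))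
  have hφ : ∀ a k i j, φ a k i j • r k = v k i * a * star (v k j) := by
    intro a k i j
    change co k (v k i * a * star (v k j)) • r k = _
    rw [← hco, mul_assoc (v k i), ra (hrv k i), mul_assoc, mul_assoc, hvr]
  have ext' : ∀ a (M : ∀ k, Matrix (Fin (n k)) (Fin (n k)) ℂ),
      (∀ k i j, v k i * a * star (v k j) = M k i j • r k) → φ a = M := by
    intro a M h
    funext k
    ext i j
    apply inj k
    rw [hφ, h]
  have hmul : ∀ a b, φ (a * b) = φ a * φ b := by
    intro a b
    apply ext'
    intro k i j
    have h1 : v k i * (a * b) * star (v k j) = v k i * a * z * (b * star (v k j)) := by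
      rw [mul_assoc (v k i) a z, ← hcen, ← mul_assoc (v k i) z, hvz]
      simp only [mul_assoc]
    rw [h1, ← hz, Finset.mul_sum, Finset.sum_mul, Finset.sum_eq_single k]
    · rw [Finset.mul_sum, Finset.sum_mul, Pi.mul_apply, Matrix.mul_apply, Finset.sum_smul]
      refine Finset.sum_congr rfl fun p _ => ?_
      have : v k i * a * (star (v k p) * v k p) * (b * star (v k j)) =
          (v k i * a * star (v k p)) * (v k p * b * star (v k j)) := by
        simp only [mul_assoc]
      rw [this, ← hφ, ← hφ, smul_mul_smul_comm, (hr k).idem]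
    · intro l _ hl
      rw [Finset.mul_sum, Finset.sum_mul]
      refine Finset.sum_eq_zero fun p _ => ?_
      rw [← mul_assoc (v k i * a), off' k l hl.symm]; simp
    · intro h; exact absurd (Finset.mem_univ _) h
  have hstar : ∀ a, φ (star a) = star (φ a) := by
    intro a
    apply ext'
    intro k i j
    have := congrArg star (hφ a k j i)
    rw [star_smul, (hr k).star] at this
    simp only [star_mul, star_star] at this
    rw [mul_assoc, ← this]
    rfl
  have hadd : ∀ a b, φ (a + b) = φ a + φ b := by
    intro a b
    apply ext'
    intro k i j
    rw [mul_add, add_mul, ← hφ, ← hφ, ← add_smul]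
    rfl
  have hsmul : ∀ (c : ℂ) a, φ (c • a) = c • φ a := by
    intro c a
    apply ext'
    intro k i j
    rw [mul_smul_comm, smul_mul_assoc, ← hφ, smul_smul]
    rfl
  have hzero : φ 0 = 0 := by
    apply ext'
    intro k i j
    simp
  refine ⟨{ toFun := φ, map_smul' := hsmul, map_zero' := hzero, map_add' := hadd,
            map_mul' := hmul, map_star' := hstar }, ?_, ?_⟩
  · intro M
    refine ⟨∑ k, ∑ i, ∑ j, M k i j • (star (v k i) * v k j), ext' _ _ ?_⟩
    intro k i j
    have e : ∀ l p q, v k i * (M l p q • (star (v l p) * v l q)) * star (v k j) =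
        M l p q • ((v k i * star (v l p)) * (v l q * star (v k j))) := by
      intro l p q
      rw [mul_smul_comm, smul_mul_assoc]
      simp only [mul_assoc]
    simp only [Finset.mul_sum, Finset.sum_mul, e]
    rw [Finset.sum_eq_single k]
    · rw [Finset.sum_eq_single i]
      · rw [Finset.sum_eq_single j]
        · rw [hvv, hvv, (hr k).idem]
        · intro q _ hq
          rw [orth k q j hq, mul_zero, smul_zero]
        · intro h; exact absurd (Finset.mem_univ _) h
      · intro p _ hp
        refine Finset.sum_eq_zero fun q _ => ?_
        rw [orth k i p hp.symm, zero_mul, smul_zero]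
      · intro h; exact absurd (Finset.mem_univ _) h
    · intro l _ hl
      refine Finset.sum_eq_zero fun p _ => Finset.sum_eq_zero fun q _ => ?_
      rw [off1 k l hl.symm, zero_mul, smul_zero]
    · intro h; exact absurd (Finset.mem_univ _) h
  · intro a
    change φ a = 0 ↔ _
    constructor
    · intro h0
      have h1 : ∀ k i l j, v k i * a * star (v l j) = 0 := by
        intro k i l j
        by_cases hkl : k = l
        · subst hkl
          rw [← hφ, h0]; simp
        · exact off' k l hkl i j a
      have h2 : ∀ k i, v k i * a = 0 := by
        intro k i
        have : v k i * a = v k i * a * z := by rw [mul_assoc, ← hcen, ← mul_assoc, hvz]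
        rw [this, ← hz, Finset.mul_sum]
        refine Finset.sum_eq_zero fun l _ => ?_
        rw [Finset.mul_sum]
        refine Finset.sum_eq_zero fun j _ => ?_
        rw [← mul_assoc, h1, zero_mul]
      rw [← hz, Finset.sum_mul]
      refine Finset.sum_eq_zero fun l _ => ?_
      rw [Finset.sum_mul]
      refine Finset.sum_eq_zero fun j _ => ?_
      rw [mul_assoc, h2, mul_zero]
    · intro h0
      apply ext'
      intro k i j
      rw [← hvz k i, mul_assoc (v k i), h0]; simp

theorem Good.exists_matrix (hA : Good A) {s : Finset A} (hs : RR s)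
    (hp : ∀ g ∈ s, ∃ k ∈ s, k ≠ g ∧ ∃ a, g * a * k ≠ 0) :
    ∃ (m : ℕ) (n : Fin m → ℕ), (∀ k, 2 ≤ n k) ∧
    ∃ φ : A →⋆ₙₐ[ℂ] (∀ k, Matrix (Fin (n k)) (Fin (n k)) ℂ),
      (∀ M, ∃ a, φ a = M) ∧ ∀ a, φ a = 0 ↔ (∑ g ∈ s, g) * a = 0 := by
  classical
  have hmin : ∀ i : s, MinP i.1 := fun i => hs.of.min i.1 i.2
  let R : Setoid s :=
  { r := fun i j => ∃ a, i.1 * a * j.1 ≠ 0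
    iseqv := by
      refine ⟨?_, ?_, ?_⟩
      · intro i
        exact ⟨1, by rw [mul_one, (hmin i).idem]; exact (hmin i).ne⟩
      · rintro i j ⟨a, ha⟩
        refine ⟨star a, fun h => ha ?_⟩
        have := congrArg star h
        simpa [star_mul, (hmin i).star, (hmin j).star, mul_assoc] using this
      · rintro i j k ⟨a, ha⟩ ⟨b, hb⟩
        refine ⟨a * j.1 * b, fun h => hb ?_⟩
        obtain ⟨c, hc⟩ := hA.min_coef (hmin j) (star a * i.1 * a)
        have hx : star (i.1 * a * j.1) * (i.1 * a * j.1) = c • j.1 := by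
          rw [← hc]
          simp only [star_mul, (hmin i).star, (hmin j).star, mul_assoc, ra (hmin i).idem]
        have hc0 : c ≠ 0 := by
          rintro rfl
          rw [zero_smul] at hx
          exact ha (hA.proper hx)
        have h2 : c • (j.1 * b * k.1) = 0 := by
          rw [mul_assoc, ← smul_mul_assoc, ← hx]
          have : star (i.1 * a * j.1) * (i.1 * a * j.1) * (b * k.1) =
            star (i.1 * a * j.1) * (i.1 * (a * j.1 * b) * k.1) := by simp only [mul_assoc]
          rw [this, h, mul_zero]
        exact (smul_eq_zero.1 h2).resolve_left hc0 }
  have hV : ∀ i : s, ∃ V : A, (Quotient.mk R i).out.1 * V = V ∧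
      V * star V = (Quotient.mk R i).out.1 ∧ star V * V = i.1 := by
    intro i
    by_cases h : (Quotient.mk R i).out = i
    · rw [h]
      exact ⟨i.1, (hmin i).idem, by rw [(hmin i).star, (hmin i).idem],
        by rw [(hmin i).star, (hmin i).idem]⟩
    · obtain ⟨a, ha⟩ : ∃ a, (Quotient.mk R i).out.1 * a * i.1 ≠ 0 := Quotient.mk_out (s := R) i
      generalize (Quotient.mk R i).out = r at *
      have hir : i.1 * r.1 = 0 := hs.of.orth _ i.2 _ r.2 fun h' => h (Subtype.ext h'.symm)
      obtain ⟨d, hd, hy⟩ := hA.partial_iso (hmin r) ha (by simp only [← mul_assoc, (hmin r).idem])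
        (by rw [mul_assoc, hir, mul_zero])
      have hry : r.1 * (d • (r.1 * a * i.1)) = d • (r.1 * a * i.1) := by
        rw [mul_smul_comm]; simp only [← mul_assoc, (hmin r).idem]
      have hyi : (d • (r.1 * a * i.1)) * i.1 = d • (r.1 * a * i.1) := by
        rw [smul_mul_assoc, mul_assoc, (hmin i).idem]
      generalize d • (r.1 * a * i.1) = y at *
      refine ⟨y, hry, hy, ?_⟩
      have ht := (hmin r).transfer hry hy
      rcases (hmin i).min _ ht.proj (by
        have := congrArg star hyi
        rw [star_mul, (hmin i).star] at this
        rw [← mul_assoc, this]) with h' | h'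
      · exact absurd h' ht.ne
      · exact h'
  choose V hV1 hV2 hV3 using hV
  have hVi : ∀ i, V i * i.1 = V i := by
    intro i
    conv_lhs => rw [← hV3 i, ra (hV2 i), hV1]
  have hiV : ∀ i : s, i.1 * star (V i) = star (V i) := by
    intro i
    have := congrArg star (hVi i)
    rwa [star_mul, (hmin i).star] at this
  let eQ : Fin (Fintype.card (Quotient R)) ≃ Quotient R := (Fintype.equivFin _).symm
  let n : Fin (Fintype.card (Quotient R)) → ℕ := fun k =>
    Fintype.card {i : s // Quotient.mk R i = eQ k}
  let e : ∀ k, Fin (n k) ≃ {i : s // Quotient.mk R i = eQ k} := fun k =>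
    (Fintype.equivFin _).symm
  refine ⟨Fintype.card (Quotient R), n, ?_, ?_⟩
  · intro k
    obtain ⟨l, hl, hlg, a, ha⟩ := hp (eQ k).out.1 (eQ k).out.2
    have h1 : Quotient.mk R (eQ k).out = eQ k := Quotient.out_eq _
    have h2 : Quotient.mk R ⟨l, hl⟩ = eQ k := by
      rw [← h1]
      exact (Quotient.sound (s := R) ⟨a, ha⟩).symm
    refine Fintype.one_lt_card_iff.2 ⟨⟨_, h1⟩, ⟨_, h2⟩, ?_⟩
    intro h
    apply hlg
    exact (congrArg (fun x => x.1.1) h).symm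
  · refine hA.matrix_units _ n (fun k => (eQ k).out.1) (fun k i => V (e k i).1) _
      (fun k => hmin _) ?_ ?_ ?_ ?_ ?_ hs.cen
    · intro k i
      have := hV1 (e k i).1
      rwa [(e k i).2] at this
    · intro k i
      have := hV2 (e k i).1
      rwa [(e k i).2] at this
    · intro k i j hij
      have hne : (e k i).1.1 ≠ (e k j).1.1 := fun h =>
        hij ((e k).injective (Subtype.ext (Subtype.ext h)))
      change V (e k i).1 * star (V (e k j).1) = 0
      rw [← hVi, ← hiV (e k j).1, mul_assoc, ra (hs.of.orth _ (e k i).1.2 _ (e k j).1.2 hne)]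
      simp
    · intro k l hkl a
      by_contra h
      apply hkl
      apply eQ.injective
      rw [← Quotient.out_eq (eQ k), ← Quotient.out_eq (eQ l)]
      exact Quotient.sound (s := R) ⟨a, h⟩
    · simp only [hV3]
      have h1 : ∀ k, ∑ i, (e k i).1.1 = ∑ x : {i : s // Quotient.mk R i = eQ k}, x.1.1 := fun k =>
        Equiv.sum_comp (e k) (fun x => x.1.1)
      rw [Finset.sum_congr rfl fun k _ => h1 k]
      rw [Equiv.sum_comp eQ (fun q => ∑ x : {i : s // Quotient.mk R i = q}, x.1.1)]
      rw [Fintype.sum_fiberwise (Quotient.mk R) (fun x : s => x.1)]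
      exact Finset.sum_coe_sort s (fun x => x)

end

end BaerAux

set_option linter.unusedSectionVars false
set_option linter.unusedSimpArgs false

namespace BaerAux

section

theorem exists_char_comm {C : Type*} [CommRing C] [Algebra ℂ C] (hC : ∀ a : C, IsIntegral ℂ a)
    (e : C) (he : e * e = e) (he0 : e ≠ 0) : ∃ χ : C →ₐ[ℂ] ℂ, χ e = 1 := by
  have hI : Ideal.span {1 - e} ≠ ⊤ := by
    intro h
    rw [Ideal.span_singleton_eq_top] at h
    apply he0
    have h1 : (1 - e) * e = 0 := by
      rw [sub_mul, one_mul, he, sub_self]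
    exact h.mul_right_eq_zero.1 h1
  obtain ⟨M, hM, hIM⟩ := Ideal.exists_le_maximal _ hI
  have : M.IsPrime := hM.isPrime
  have : Algebra.IsIntegral ℂ (C ⧸ M) := ⟨fun a => by
    obtain ⟨b, rfl⟩ := Ideal.Quotient.mk_surjective a
    exact (hC b).map (Ideal.Quotient.mkₐ ℂ M)⟩
  have hb := IsAlgClosed.algebraMap_bijective_of_isIntegral (k := ℂ) (K := C ⧸ M)
  let E : ℂ ≃ₐ[ℂ] (C ⧸ M) := AlgEquiv.ofBijective (Algebra.ofId ℂ (C ⧸ M)) hb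
  refine ⟨E.symm.toAlgHom.comp (Ideal.Quotient.mkₐ ℂ M), ?_⟩
  have h1 : (Ideal.Quotient.mk M) (1 - e) = 0 :=
    Ideal.Quotient.eq_zero_iff_mem.2 (hIM (Ideal.mem_span_singleton_self _))
  rw [map_sub, map_one, sub_eq_zero] at h1
  change E.symm (Ideal.Quotient.mk M e) = 1
  rw [← h1, map_one]

variable {A : Type*} [Ring A] [Algebra ℂ A]

/-- Characters of `A` vanishing at `z`, with the topology of pointwise convergence. -/
abbrev Ch (z : A) := {f : A → ℂ // f 1 = 1 ∧ (∀ a b, f (a * b) = f a * f b) ∧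
  (∀ a b, f (a + b) = f a + f b) ∧ (∀ (c : ℂ) a, f (c • a) = c * f a) ∧ f z = 0}

/-- The algebra homomorphism of a character. -/
def chHom {z : A} (t : Ch z) : A →ₐ[ℂ] ℂ :=
  AlgHom.ofLinearMap
    { toFun := t.1, map_add' := t.2.2.2.1, map_smul' := t.2.2.2.2.1 } t.2.1 t.2.2.1

theorem chHom_z {z : A} (t : Ch z) : chHom t z = 0 := t.2.2.2.2.2

theorem continuous_chHom {z : A} (a : A) : Continuous fun t : Ch z => chHom t a :=
  (continuous_apply a).comp continuous_subtype_val

theorem chHom_idem {z : A} (t : Ch z) {e : A} (he : e * e = e) : chHom t e = 0 ∨ chHom t e = 1 := by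
  have := congrArg (chHom t) he
  rw [map_mul] at this
  have h2 : chHom t e * (chHom t e - 1) = 0 := by rw [mul_sub, this]; simp
  rcases mul_eq_zero.1 h2 with h | h
  · exact Or.inl h
  · exact Or.inr (sub_eq_zero.1 h)

theorem compact_ch (hA : ∀ a : A, IsIntegral ℂ a) (z : A) : CompactSpace (Ch z) := by
  refine isCompact_iff_compactSpace.1 ?_
  have hK : IsCompact (Set.univ.pi fun a : A => (minpoly ℂ a).rootSet ℂ) :=
    isCompact_univ_pi fun a => (Polynomial.rootSet_finite _ _).isCompact
  refine hK.of_isClosed_subset ?_ ?_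
  · refine IsClosed.inter ?_ (IsClosed.inter ?_ (IsClosed.inter ?_ (IsClosed.inter ?_ ?_)))
    · exact isClosed_eq (continuous_apply _) continuous_const
    · change IsClosed {f : A → ℂ | ∀ a b, f (a * b) = f a * f b}
      simp only [Set.ofPred_forall]
      exact isClosed_iInter fun a => isClosed_iInter fun b => isClosed_eq (by fun_prop) (by fun_prop)
    · change IsClosed {f : A → ℂ | ∀ a b, f (a + b) = f a + f b}
      simp only [Set.ofPred_forall]
      exact isClosed_iInter fun a => isClosed_iInter fun b => isClosed_eq (by fun_prop) (by fun_prop)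
    · change IsClosed {f : A → ℂ | ∀ (c : ℂ) a, f (c • a) = c * f a}
      simp only [Set.ofPred_forall]
      exact isClosed_iInter fun a => isClosed_iInter fun b => isClosed_eq (by fun_prop) (by fun_prop)
    · exact isClosed_eq (continuous_apply _) continuous_const
  · intro f hf a _
    rw [Polynomial.mem_rootSet]
    refine ⟨minpoly.ne_zero (hA a), ?_⟩
    have : f a = chHom (⟨f, hf⟩ : Ch z) a := rfl
    rw [this, Polynomial.aeval_algHom_apply, minpoly.aeval, map_zero]

variable [StarRing A] [StarModule ℂ A]

/-- Central projection `z` with commutative complement. -/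
structure CP (z : A) : Prop where
  proj : IsStarProjection z
  cen : ∀ a, z * a = a * z
  com : ∀ a b, ((1 - z) * a) * ((1 - z) * b) = ((1 - z) * b) * ((1 - z) * a)

variable {z : A}

theorem CP.wi (hz : CP z) : (1 - z) * (1 - z) = 1 - z := hz.proj.one_sub.isIdempotentElem

theorem CP.wcen (hz : CP z) (a : A) : (1 - z) * a = a * (1 - z) := by
  rw [sub_mul, mul_sub, hz.cen]; simp

theorem CP.wmul (hz : CP z) (a b : A) : (1 - z) * (a * b) = ((1 - z) * a) * ((1 - z) * b) := by
  rw [mul_assoc (1 - z) a, ← mul_assoc a, ← hz.wcen a, mul_assoc (1 - z) a b, ra hz.wi]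

theorem CP.normal (hz : CP z) (a : A) :
    star ((1 - z) * a) * ((1 - z) * a) = ((1 - z) * a) * star ((1 - z) * a) := by
  have : star ((1 - z) * a) = (1 - z) * star a := by
    rw [star_mul, hz.proj.one_sub.isSelfAdjoint.star_eq, hz.wcen]
  rw [this, hz.com]

theorem CP.center (hz : CP z) (a : A) : (1 - z) * a ∈ Subalgebra.center ℂ A := by
  rw [Subalgebra.mem_center_iff]
  intro b
  have h1 : (1 - z) * a = (1 - z) * ((1 - z) * a) := by rw [ra hz.wi]
  have h2 : b * ((1 - z) * a) = ((1 - z) * b) * ((1 - z) * a) := by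
    rw [← hz.wmul, ← mul_assoc, ← hz.wcen b, mul_assoc]
  have h3 : (1 - z) * a * b = ((1 - z) * a) * ((1 - z) * b) := by
    rw [← hz.wmul, mul_assoc]
  rw [h2, h3, hz.com]

theorem chHom_w (t : Ch z) (a : A) : chHom t ((1 - z) * a) = chHom t a := by
  rw [map_mul, map_sub, chHom_z, map_one, sub_zero, one_mul]

theorem CP.exists_char (hA : Good A) (hz : CP z) {e : A} (he : e * e = e) (he0 : e ≠ 0)
    (hwe : (1 - z) * e = e) : ∃ t : Ch z, chHom t e = 1 := by
  let Z := Subalgebra.center ℂ A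
  let e' : Z := ⟨e, by rw [← hwe]; exact hz.center e⟩
  obtain ⟨χ, hχ⟩ := exists_char_comm (C := Z) (fun a => by
      have := hA.integral a.1
      exact (isIntegral_algHom_iff Z.val Subtype.val_injective).1 this) e' (Subtype.ext he)
    (fun h => he0 (congrArg Subtype.val h))
  have hχe : χ e' = 1 := hχ
  let W : A → Z := fun a => ⟨(1 - z) * a, hz.center a⟩
  have hWm : ∀ a b, W (a * b) = W a * W b := fun a b => Subtype.ext (hz.wmul a b)
  have hWe : W e = e' := Subtype.ext hwe
  refine ⟨⟨fun a => χ (W a), ?_, ?_, ?_, ?_, ?_⟩, ?_⟩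
  · have h1 : W 1 * e' = e' := by rw [← hWe, ← hWm, one_mul]
    have := congrArg χ h1
    rwa [map_mul, hχe, mul_one] at this
  · intro a b
    change χ (W (a * b)) = χ (W a) * χ (W b)
    rw [hWm, map_mul]
  · intro a b
    change χ (W (a + b)) = χ (W a) + χ (W b)
    have : W (a + b) = W a + W b := Subtype.ext (mul_add (1 - z) a b)
    rw [this, map_add]
  · intro c a
    change χ (W (c • a)) = c * χ (W a)
    have : W (c • a) = c • W a := Subtype.ext (mul_smul_comm c (1 - z) a)
    rw [this, map_smul, smul_eq_mul]
  · have : W z = 0 := Subtype.ext (by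
      change (1 - z) * z = 0
      rw [sub_mul, one_mul, show z * z = z from hz.proj.isIdempotentElem, sub_self])
    change χ (W z) = 0
    rw [this, map_zero]
  · change χ (W e) = 1
    rw [hWe, hχe]

theorem chHom_star (hA : Good A) (hz : CP z) (t : Ch z) (a : A) :
    chHom t (star a) = star (chHom t a) := by
  obtain ⟨s, e, he, -, -, hsum, -⟩ := hA.spec (hz.normal a)
  have h1 : star ((1 - z) * a) = (1 - z) * star a := by
    rw [star_mul, hz.proj.one_sub.isSelfAdjoint.star_eq, hz.wcen]
  rw [← chHom_w t a, ← chHom_w t (star a), ← h1, ← hsum, star_sum, map_sum, map_sum, star_sum]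
  refine Finset.sum_congr rfl fun i hi => ?_
  rw [star_smul, (he i hi).isSelfAdjoint.star_eq, map_smul, map_smul, smul_eq_mul, smul_eq_mul,
    star_mul']
  rcases chHom_idem t (show e i * e i = e i from (he i hi).isIdempotentElem) with h | h <;> simp [h]

theorem chHom_eq_zero (hA : Good A) (hz : CP z) {a : A} (h : ∀ t : Ch z, chHom t a = 0) :
    (1 - z) * a = 0 := by
  obtain ⟨s, e, he, -, -, hsum, hae, -⟩ := hA.spec (hz.normal a)
  rw [← hsum]
  refine Finset.sum_eq_zero fun i hi => ?_
  by_contra hne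
  have hi0 : i ≠ 0 := by rintro rfl; simp at hne
  have he0 : e i ≠ 0 := by rintro h; simp [h] at hne
  have hwe : (1 - z) * e i = e i := by
    have h2 : e i = i⁻¹ • ((1 - z) * a * e i) := by
      rw [hae i hi, smul_smul, inv_mul_cancel₀ hi0, one_smul]
    rw [h2, mul_smul_comm, mul_assoc, ra hz.wi]
  obtain ⟨t, ht⟩ := hz.exists_char hA (he i hi).isIdempotentElem he0 hwe
  have := congrArg (chHom t) (hae i hi)
  rw [map_mul, chHom_w, h t, map_smul, ht] at this
  simp at this
  exact hi0 this.symm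

/-- Gelfand transform. -/
def gel (hA : Good A) (hz : CP z) : A →⋆ₐ[ℂ] C(Ch z, ℂ) where
  toFun a := ⟨fun t => chHom t a, continuous_chHom a⟩
  map_one' := by ext t; simp
  map_mul' a b := by ext t; simp
  map_zero' := by ext t; simp
  map_add' a b := by ext t; simp
  commutes' c := by ext t; simp
  map_star' a := by ext t; simp [chHom_star hA hz]

theorem gel_apply (hA : Good A) (hz : CP z) (a : A) (t : Ch z) : gel hA hz a t = chHom t a := rfl

theorem ch_isClopen {e : A} (he : e * e = e) : IsClopen {t : Ch z | chHom t e = 1} := by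
  refine ⟨isClosed_eq (continuous_chHom e) continuous_const, ?_⟩
  have : {t : Ch z | chHom t e = 1} = {t : Ch z | chHom t e = 0}ᶜ := by
    ext t
    rcases chHom_idem t he with h | h <;> simp [h]
  rw [this]
  exact (isClosed_eq (continuous_chHom e) continuous_const).isOpen_compl

theorem ch_spec (hA : Good A) (hz : CP z) (a : A) (P : ℂ → Prop) :
    ∃ e, IsStarProjection e ∧ (1 - z) * e = e ∧ ∀ t : Ch z, chHom t e = 1 ↔ P (chHom t a) := by
  classical
  obtain ⟨s, e, he, ho, hone, hsum, hae, -⟩ := hA.spec (hz.normal a)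
  have hk : ∀ t : Ch z, ∃ i ∈ s, chHom t a = i ∧ chHom t (e i) = 1 ∧
      ∀ j ∈ s, j ≠ i → chHom t (e j) = 0 := by
    intro t
    have h1 : ∃ i ∈ s, chHom t (e i) = 1 := by
      by_contra! hcon
      have h2 := congrArg (chHom t) hone
      rw [map_sum, map_one, Finset.sum_eq_zero] at h2
      · exact zero_ne_one h2
      · intro i hi
        exact (chHom_idem t (he i hi).isIdempotentElem).resolve_right (hcon i hi)
    obtain ⟨i, hi, hti⟩ := h1
    refine ⟨i, hi, ?_, hti, ?_⟩
    · have := congrArg (chHom t) (hae i hi)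
      rw [map_mul, chHom_w, map_smul, hti] at this
      simpa using this
    · intro j hj hji
      have := congrArg (chHom t) (ho j hj i hi hji)
      rw [map_mul, hti, mul_one, map_zero] at this
      exact this
  have hp : IsStarProjection (∑ i ∈ s.filter P, e i) := by
    refine ⟨?_, ?_⟩
    · rw [IsIdempotentElem, Finset.sum_mul]
      refine Finset.sum_congr rfl fun i hi => ?_
      rw [Finset.mul_sum, Finset.sum_eq_single i]
      · exact (he i (Finset.mem_filter.1 hi).1).isIdempotentElem
      · intro j hj hji
        exact ho i (Finset.mem_filter.1 hi).1 j (Finset.mem_filter.1 hj).1 hji.symm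
      · intro h; exact absurd hi h
    · rw [IsSelfAdjoint, star_sum]
      exact Finset.sum_congr rfl fun i hi =>
        (he i (Finset.mem_filter.1 hi).1).isSelfAdjoint.star_eq
  refine ⟨(1 - z) * ∑ i ∈ s.filter P, e i, ⟨?_, ?_⟩, by rw [ra hz.wi], ?_⟩
  · rw [IsIdempotentElem, ← hz.wmul, show _ * _ = _ from hp.isIdempotentElem]
  · rw [IsSelfAdjoint, star_mul, hz.proj.one_sub.isSelfAdjoint.star_eq,
      hp.isSelfAdjoint.star_eq, hz.wcen]
  · intro t
    rw [chHom_w, map_sum]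
    obtain ⟨i, hi, hta, hti, htj⟩ := hk t
    rw [hta]
    constructor
    · intro h
      by_contra hP
      rw [Finset.sum_eq_zero] at h
      · exact zero_ne_one h
      · intro j hj
        refine htj j (Finset.mem_filter.1 hj).1 ?_
        rintro rfl
        exact hP (Finset.mem_filter.1 hj).2
    · intro hP
      rw [Finset.sum_eq_single i, hti]
      · intro j hj hji
        exact htj j (Finset.mem_filter.1 hj).1 hji
      · intro h; exact absurd (Finset.mem_filter.2 ⟨hi, hP⟩) h

theorem ch_clopen (hA : Good A) (hz : CP z) {U : Set (Ch z)} (hU : IsClopen U) :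
    ∃ e, IsStarProjection e ∧ (1 - z) * e = e ∧ ∀ t : Ch z, chHom t e = 1 ↔ t ∈ U := by
  have := compact_ch hA.integral z
  have hsep : (gel hA hz).range.SeparatesPoints := by
    intro t t' htt
    have : ∃ a, t.1 a ≠ t'.1 a := by
      by_contra! hcon
      exact htt (Subtype.ext (funext hcon))
    obtain ⟨a, ha⟩ := this
    exact ⟨_, ⟨gel hA hz a, ⟨a, rfl⟩, rfl⟩, ha⟩
  have htop := ContinuousMap.starSubalgebra_topologicalClosure_eq_top_of_separatesPoints _ hsep
  let χ : C(Ch z, ℂ) := ⟨U.indicator 1, (continuous_one).indicator (by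
    intro a ha; rw [hU.frontier_eq] at ha; exact absurd ha (Set.notMem_empty _))⟩
  have hχ : χ ∈ closure ((gel hA hz).range : Set C(Ch z, ℂ)) := by
    have : χ ∈ (gel hA hz).range.topologicalClosure := by rw [htop]; trivial
    exact this
  obtain ⟨f, ⟨a, rfl⟩, hf⟩ := Metric.mem_closure_iff.1 hχ (1 / 2) (by norm_num)
  have hd : ∀ t, ‖χ t - chHom t a‖ < 1 / 2 := by
    intro t
    rw [← dist_eq_norm]
    exact lt_of_le_of_lt (ContinuousMap.dist_apply_le_dist (f := χ) (g := gel hA hz a) t) hf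
  obtain ⟨e, he, hwe, het⟩ := ch_spec hA hz a (fun x => ‖1 - x‖ < 1 / 2)
  refine ⟨e, he, hwe, fun t => ?_⟩
  rw [het]
  have h1 := hd t
  by_cases ht : t ∈ U
  · have : χ t = 1 := by simp [χ, ht]
    rw [this] at h1
    exact ⟨fun _ => ht, fun _ => h1⟩
  · have : χ t = 0 := by simp [χ, ht]
    rw [this] at h1
    simp only [ht, iff_false, not_lt]
    have h2 : ‖(1 : ℂ)‖ ≤ ‖1 - chHom t a‖ + ‖chHom t a‖ := by
      have := norm_add_le (1 - chHom t a) (chHom t a)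
      simpa using this
    rw [norm_one] at h2
    rw [zero_sub, norm_neg] at h1
    linarith

theorem gel_range (hA : Good A) (hz : CP z) : ((gel hA hz).range : Set C(Ch z, ℂ)) =
    (Submodule.span ℂ (clopenCharacteristicFunctions (Ch z)) : Set C(Ch z, ℂ)) := by
  apply Set.Subset.antisymm
  · rintro _ ⟨a, rfl⟩
    obtain ⟨s, e, he, -, -, hsum, -⟩ := hA.spec (hz.normal a)
    have h1 : gel hA hz a = gel hA hz ((1 - z) * a) := by
      ext t; rw [gel_apply, gel_apply, chHom_w]
    change gel hA hz a ∈ Submodule.span ℂ (clopenCharacteristicFunctions (Ch z))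
    rw [h1, ← hsum, map_sum]
    refine Submodule.sum_mem _ fun i hi => ?_
    rw [map_smul]
    refine Submodule.smul_mem _ _ (Submodule.subset_span ?_)
    have hei : e i * e i = e i := (he i hi).isIdempotentElem
    refine ⟨{t | chHom t (e i) = 1}, ch_isClopen hei, fun t => ?_⟩
    rw [gel_apply]
    rcases chHom_idem t hei with h | h <;> simp [h]
  · change Submodule.span ℂ (clopenCharacteristicFunctions (Ch z)) ≤
      Subalgebra.toSubmodule (gel hA hz).range.toSubalgebra
    refine Submodule.span_le.2 ?_
    rintro f ⟨U, hU, hf⟩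
    obtain ⟨e, he, hwe, het⟩ := ch_clopen hA hz hU
    refine ⟨e, ?_⟩
    ext t
    change chHom t e = f t
    rw [hf t]
    by_cases ht : t ∈ U
    · simp [ht, (het t).2 ht]
    · have : chHom t e ≠ 1 := fun h => ht ((het t).1 h)
      simp [ht, (chHom_idem t he.isIdempotentElem).resolve_right this]

theorem ch_totSep (hA : Good A) (hz : CP z) : TotallySeparatedSpace (Ch z) := by
  rw [totallySeparatedSpace_iff_exists_isClopen]
  intro t t' htt
  have : ∃ a, t.1 a ≠ t'.1 a := by
    by_contra! hcon
    exact htt (Subtype.ext (funext hcon))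
  obtain ⟨a, ha⟩ := this
  obtain ⟨e, he, hwe, het⟩ := ch_spec hA hz a (fun x => x = chHom t a)
  refine ⟨_, ch_isClopen (z := z) he.isIdempotentElem, (het t).2 rfl, fun h => ha ?_⟩
  exact ((het t').1 h).symm

theorem ch_ed (hA : Good A) (hz : CP z) : ExtremallyDisconnected (Ch z) := by
  have := compact_ch hA.integral z
  have := ch_totSep hA hz
  refine ⟨fun U hU => ?_⟩
  let S : Set A := {e | IsStarProjection e ∧ (1 - z) * e = e ∧ ∀ t : Ch z, chHom t e = 1 → t ∈ U}
  obtain ⟨p, hp, hp1, hp2⟩ := hA.exists_sup S ⟨0, by simp, by simp, by simp⟩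
  have hpi : p * p = p := hp.isIdempotentElem
  have : closure U = {t | chHom t p = 1} := by
    apply Set.Subset.antisymm
    · refine closure_minimal ?_ (ch_isClopen hpi).1
      intro t ht
      obtain ⟨V, hV, htV, hVU⟩ := compact_exists_isClopen_in_isOpen hU ht
      obtain ⟨e, he, hwe, het⟩ := ch_clopen hA hz hV
      have h1 := congrArg (chHom t) (hp1 e ⟨he, hwe, fun t ht => hVU ((het t).1 ht)⟩)
      rw [map_mul, (het t).2 htV, one_mul] at h1
      exact h1
    · intro t ht
      by_contra htU
      obtain ⟨V, hV, htV, hVU⟩ := compact_exists_isClopen_in_isOpen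
        (isClosed_closure (s := U)).isOpen_compl htU
      obtain ⟨e, he, hwe, het⟩ := ch_clopen hA hz hV
      have h1 : p * e = 0 := by
        apply hp2
        rintro f ⟨hf, hwf, hft⟩
        have h2 : (1 - z) * (f * e) = 0 := by
          apply chHom_eq_zero hA hz
          intro t
          rw [map_mul]
          by_contra hne
          rw [mul_eq_zero, not_or] at hne
          have h3 := (chHom_idem t hf.isIdempotentElem).resolve_left hne.1
          have h4 := (chHom_idem t he.isIdempotentElem).resolve_left hne.2
          exact hVU ((het t).1 h4) (subset_closure (hft t h3))
        rwa [← mul_assoc, hwf] at h2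
      have h5 := congrArg (chHom t) h1
      rw [map_mul, (het t).2 htV, mul_one, map_zero] at h5
      exact zero_ne_one (h5.symm.trans ht)
  rw [this]
  exact (ch_isClopen hpi).2

end

end BaerAux


namespace BaerAux

theorem forward_unital {A : Type u} [Ring A] [Algebra ℂ A] [StarRing A] [StarModule ℂ A]
    (hA : Good A) : ∃ (m : ℕ) (n : Fin m → ℕ), (∀ k, 2 ≤ n k) ∧
        ∃ (T : Type u) (_ : TopologicalSpace T), CompactSpace T ∧ T2Space T ∧
          ExtremallyDisconnected T ∧
          ∃ S : StarSubalgebra ℂ C(T, ℂ),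
            (S : Set C(T, ℂ)) =
              (Submodule.span ℂ (clopenCharacteristicFunctions T) : Set C(T, ℂ)) ∧
            Nonempty (A ≃⋆ₐ[ℂ] ((∀ k, Matrix (Fin (n k)) (Fin (n k)) ℂ) × S)) := by
  obtain ⟨s, hs, hp⟩ := hA.exists_RR'
  obtain ⟨m, n, hn, φ, hφs, hφ⟩ := hA.exists_matrix hs hp
  have hz : CP (∑ g ∈ s, g) := ⟨hs.of.proj, hs.cen, hs.com⟩
  generalize ∑ g ∈ s, g = z at hφ hz
  have hzi : z * z = z := hz.proj.isIdempotentElem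
  refine ⟨m, n, hn, Ch z, inferInstance, compact_ch hA.integral z, inferInstance, ch_ed hA hz,
    (gel hA hz).range, gel_range hA hz, ?_⟩
  let ψ : A →⋆ₐ[ℂ] (gel hA hz).range := (gel hA hz).rangeRestrict
  have hψ : ∀ a b, (∀ t : Ch z, chHom t a = chHom t b) → ψ a = ψ b := by
    intro a b h
    apply Subtype.ext
    change gel hA hz a = gel hA hz b
    ext t
    exact h t
  let F : A →⋆ₙₐ[ℂ] ((∀ k, Matrix (Fin (n k)) (Fin (n k)) ℂ) × (gel hA hz).range) :=
    φ.prod (ψ : A →⋆ₙₐ[ℂ] (gel hA hz).range)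
  refine ⟨StarAlgEquiv.ofBijective F ⟨?_, ?_⟩⟩
  · rw [injective_iff_map_eq_zero]
    intro a ha
    have h1 : φ a = 0 := congrArg Prod.fst ha
    have h2 : ψ a = 0 := congrArg Prod.snd ha
    rw [hφ] at h1
    have h3 : (1 - z) * a = 0 := by
      apply chHom_eq_zero hA hz
      intro t
      have h4 : gel hA hz a = 0 := congrArg Subtype.val h2
      have := congrArg (fun f : C(Ch z, ℂ) => f t) h4
      exact this
    rw [sub_mul, one_mul, h1, sub_zero] at h3
    exact h3
  · rintro ⟨M, ⟨_, b, rfl⟩⟩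
    obtain ⟨a, rfl⟩ := hφs M
    refine ⟨z * a + (1 - z) * b, Prod.ext ?_ ?_⟩
    · change φ (z * a + (1 - z) * b) = φ a
      rw [← sub_eq_zero, ← map_sub, hφ, mul_sub, mul_add, ← mul_assoc, hzi, ← mul_assoc, mul_sub,
        hzi]
      simp
    · change ψ (z * a + (1 - z) * b) = ψ b
      apply hψ
      intro t
      rw [map_add, chHom_w, map_mul, chHom_z]
      simp

theorem integral_of_fin {A : Type*} [Ring A] [Algebra ℂ A] (a : A) (S : NonUnitalSubalgebra ℂ A)
    (ha : a ∈ S) [FiniteDimensional ℂ S] : IsIntegral ℂ a := by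
  let L : S →ₗ[ℂ] S := LinearMap.mulLeft ℂ (⟨a, ha⟩ : S)
  have key : ∀ (p : Polynomial ℂ) (x : S),
      ((Polynomial.aeval L p x : S) : A) = Polynomial.aeval a p * x := by
    intro p
    induction p using Polynomial.induction_on' with
    | add p q hp hq => intro x; simp [add_mul, hp, hq]
    | monomial k c =>
      intro x
      have : ∀ (k : ℕ) (x : S), (((L ^ k) x : S) : A) = a ^ k * x := by
        intro k
        induction k with
        | zero => intro x; simp
        | succ k ih =>
          intro x
          rw [pow_succ, Module.End.mul_apply, ih, pow_succ, mul_assoc]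
          rfl
      rw [Polynomial.aeval_monomial, Polynomial.aeval_monomial, mul_assoc, ← Algebra.smul_def,
        ← Algebra.smul_def, LinearMap.smul_apply]
      change c • (((L ^ k) x : S) : A) = _
      rw [this]
  refine ⟨L.charpoly * Polynomial.X, L.charpoly_monic.mul Polynomial.monic_X, ?_⟩
  rw [← Polynomial.aeval_def, map_mul, Polynomial.aeval_X]
  have := key L.charpoly ⟨a, ha⟩
  rw [LinearMap.aeval_self_charpoly] at this
  exact this.symm

theorem forward {A : Type u} [NonUnitalRing A]
    [Module ℂ A] [SMulCommClass ℂ A A] [IsScalarTower ℂ A A] [StarRing A] [StarModule ℂ A]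
    (h1 : IsAlgebraicAlgebra A) (h2 : IsBaerStarRing A) :
    ∃ (m : ℕ) (n : Fin m → ℕ), (∀ k, 2 ≤ n k) ∧
        ∃ (T : Type u) (_ : TopologicalSpace T), CompactSpace T ∧ T2Space T ∧
          ExtremallyDisconnected T ∧
          ∃ S : StarSubalgebra ℂ C(T, ℂ),
            (S : Set C(T, ℂ)) =
              (Submodule.span ℂ (clopenCharacteristicFunctions T) : Set C(T, ℂ)) ∧
            Nonempty (A ≃⋆ₐ[ℂ] ((∀ k, Matrix (Fin (n k)) (Fin (n k)) ℂ) × S)) := by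
  obtain ⟨f, hfs, hff, hf⟩ := h2 {0} (Set.singleton_nonempty _)
  have hfx : ∀ x, f * x = x := by
    intro x
    have hx : x ∈ {y : A | ∀ s ∈ ({0} : Set A), s * y = 0} := by
      rintro s rfl; exact zero_mul x
    rw [hf] at hx
    obtain ⟨y, hy⟩ := hx
    rw [hy, ← mul_assoc, hff]
  have hxf : ∀ x, x * f = x := by
    intro x
    have := congrArg star (hfx (star x))
    rwa [star_mul, star_star, hfs] at this
  let iR : Ring A := { ‹NonUnitalRing A› with
    one := f
    one_mul := hfx
    mul_one := hxf }
  let iA : Algebra ℂ A := Algebra.ofModule (fun r x y => smul_mul_assoc r x y)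
    (fun r x y => mul_smul_comm r x y)
  have hG : Good A := ⟨fun a => by
    obtain ⟨S, haS, hS⟩ := h1 a
    exact integral_of_fin a S haS, h2⟩
  exact forward_unital hG

end BaerAux

/-- A complex `*`-algebra is an algebraic Baer `*`-algebra iff it is
`*`-isomorphic to a direct sum `M ⊕ B`, where `M` is a finite direct product of full
complex matrix algebras of size at least `2 × 2` and `B` is the ℂ-linear span of the
characteristic functions of the clopen subsets of some Stonean space `T`. -/
theorem algebraic_baer_iff_matrix_sum_span_clopen (A : Type u) [NonUnitalRing A]
    [Module ℂ A] [SMulCommClass ℂ A A] [IsScalarTower ℂ A A] [StarRing A] [StarModule ℂ A] :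
    (IsAlgebraicAlgebra A ∧ IsBaerStarRing A) ↔
      ∃ (m : ℕ) (n : Fin m → ℕ), (∀ k, 2 ≤ n k) ∧
        ∃ (T : Type u) (_ : TopologicalSpace T), CompactSpace T ∧ T2Space T ∧
          ExtremallyDisconnected T ∧
          ∃ S : StarSubalgebra ℂ C(T, ℂ),
            (S : Set C(T, ℂ)) =
              (Submodule.span ℂ (clopenCharacteristicFunctions T) : Set C(T, ℂ)) ∧
            Nonempty (A ≃⋆ₐ[ℂ] ((∀ k, Matrix (Fin (n k)) (Fin (n k)) ℂ) × S)) := by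
  constructor
  · rintro ⟨h1, h2⟩
    exact BaerAux.forward h1 h2
  · rintro ⟨m, n, hn, T, _, _, _, _, S, hS, ⟨φ⟩⟩
    exact BaerAux.reverse n S hS φ
end

section
/- Let 𝒜 be a unital C*-algebra. Then 𝒜 contains a dense unital *-subalgebra that is an algebraic Baer *-algebra if and only if 𝒜 is an AW*-algebra possessing a central projection h such that h𝒜 is commutative and (1−h)𝒜 is finite dimensional. -/
/-- Algebraic conditions extracted from the C*-setting. -/
structure GoodAlg (B : Type*) [Ring B] [StarRing B] [Algebra ℂ B] [StarModule ℂ B] : Prop where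
  baer : IsBaerStarRing B
  alg : ∀ b : B, IsAlgebraic ℂ b
  spec : ∀ a : B, star a = a → a ≠ 0 → ∃ (l : ℝ) (q : B), l ≠ 0 ∧ star q = q ∧ q * q = q ∧ q ≠ 0 ∧
    a * q = (l : ℂ) • q
  specPos : ∀ w : B, w ≠ 0 → ∃ (l : ℝ) (q : B), 0 < l ∧ star q = q ∧ q * q = q ∧ q ≠ 0 ∧
    w * star w * q = (l : ℂ) • q

namespace GoodAlg

variable {B : Type*} [Ring B] [StarRing B] [Algebra ℂ B] [StarModule ℂ B]

/-- annihilator projection -/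
lemma ann (hB : GoodAlg B) (S : Set B) (hS : S.Nonempty) : ∃ f : B, star f = f ∧ f * f = f ∧
    (∀ s ∈ S, s * f = 0) ∧ ∀ y, (∀ s ∈ S, s * y = 0) → f * y = y := by
  obtain ⟨f, h1, h2, h3⟩ := hB.baer S hS
  refine ⟨f, h1, h2, ?_, ?_⟩
  · have : f ∈ {y : B | ∀ s ∈ S, s * y = 0} := by rw [h3]; exact ⟨f, h2.symm⟩
    exact this
  · intro y hy
    have : y ∈ {y : B | ∀ s ∈ S, s * y = 0} := hy
    rw [h3] at this
    obtain ⟨x, rfl⟩ := this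
    rw [← mul_assoc, h2]

lemma proper (hB : GoodAlg B) {w : B} (h : w * star w = 0) : w = 0 := by
  by_contra hw
  obtain ⟨l, q, hl, h1, h2, h3, h4⟩ := hB.specPos w hw
  rw [h, zero_mul] at h4
  have := smul_eq_zero.1 h4.symm
  rcases this with h | h
  · exact hl.ne' (by exact_mod_cast h)
  · exact h3 h

/-- no infinite orthogonal sequence of square-zero partial isometries -/
lemma no_seq_pi (hB : GoodAlg B) (v : ℕ → B) (hv : ∀ n, v n ≠ 0)
    (hp : ∀ n, v n * star (v n) * (v n * star (v n)) = v n * star (v n))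
    (h1 : ∀ n m, v n * v m = 0) (h2 : ∀ n m, n ≠ m → v n * star (v m) = 0)
    (h3 : ∀ n m, n ≠ m → star (v n) * v m = 0) : False := by
  have h1s : ∀ n m, star (v n) * star (v m) = 0 := by
    intro n m; rw [← star_mul, h1, star_zero]
  obtain ⟨E, hE1, hE2, hE3, hE4⟩ := hB.ann (Set.range v) ⟨_, 0, rfl⟩
  obtain ⟨F, hF1, hF2, hF3, hF4⟩ := hB.ann
    (Set.range fun n : ℕ => v n * star (v n) - (n : ℂ) • v n) ⟨_, 0, rfl⟩
  have key : ∀ n : ℕ, (((n:ℂ)^2 + 1)) • (E * F * (v n * star (v n)))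
      = ((n:ℂ)^2) • (v n * star (v n)) := by
    intro n
    set e := v n * star (v n) with he
    have a1 : F * ((n:ℂ) • e + star (v n)) = (n:ℂ) • e + star (v n) := by
      apply hF4
      rintro _ ⟨m, rfl⟩
      simp only [he, mul_add, sub_mul, mul_smul_comm, smul_mul_assoc]
      by_cases hmn : m = n
      · subst hmn
        simp only [hp, mul_assoc, h1s, mul_zero]
        simp [← mul_assoc, h1]
      · have x1 : v m * star (v m) * (v n * star (v n)) = 0 := by
          rw [mul_assoc, ← mul_assoc (star (v m)), h3 m n hmn]; simp
        have x2 : v m * star (v m) * star (v n) = 0 := by rw [mul_assoc, h1s]; simp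
        have x3 : v m * (v n * star (v n)) = 0 := by rw [← mul_assoc, h1]; simp
        simp [x1, x2, x3, h2 m n hmn]
    have a2 : F * e = (n:ℂ) • (F * star (v n)) := by
      have := congrArg star (hF3 _ ⟨n, rfl⟩)
      simp only [star_mul, star_sub, star_smul, hF1, star_zero, star_star, mul_sub] at this
      rw [sub_eq_zero] at this
      simpa [he] using this
    have a3 : E * star (v n) = 0 := by
      have := congrArg star (hE3 _ ⟨n, rfl⟩)
      simpa [star_mul, hE1] using this
    have a4 : E * e = e := by
      apply hE4
      rintro _ ⟨m, rfl⟩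
      rw [he, ← mul_assoc, h1, zero_mul]
    have a5 : ((n:ℂ)^2 + 1) • (F * e) = (n:ℂ)^2 • e + (n:ℂ) • star (v n) := by
      have := congrArg (fun t => (n:ℂ) • t) a1
      simp only [mul_add, smul_add, mul_smul_comm, ← a2] at this
      rw [add_smul, one_smul, pow_two, mul_smul, mul_smul, this]
    rw [mul_assoc, ← mul_smul_comm, a5, mul_add, mul_smul_comm, mul_smul_comm, a3, a4]; simp
  -- eigenvalues
  set x := E * F with hx
  have hne : ∀ n : ℕ, ((n:ℂ)^2 + 1) ≠ 0 := by
    intro n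
    have : ((n:ℝ)^2 + 1) ≠ 0 := by positivity
    exact_mod_cast this
  have key' : ∀ n : ℕ, x * (v n * star (v n)) = ((n:ℂ)^2 / ((n:ℂ)^2 + 1)) • (v n * star (v n)) := by
    intro n
    have := congrArg (fun t => (((n:ℂ)^2 + 1))⁻¹ • t) (key n)
    simp only [smul_smul, inv_mul_cancel₀ (hne n), one_smul] at this
    rw [this, div_eq_inv_mul]
  obtain ⟨p, hp0, hpx⟩ := hB.alg x
  have hroot : ∀ n : ℕ, p.eval ((n:ℂ)^2 / ((n:ℂ)^2 + 1)) = 0 := by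
    intro n
    have hpe : ∀ p : Polynomial ℂ, Polynomial.aeval x p * (v n * star (v n)) =
        p.eval ((n:ℂ)^2 / ((n:ℂ)^2 + 1)) • (v n * star (v n)) := by
      intro p
      induction p using Polynomial.induction_on' with
      | add p q hp hq => simp [add_mul, hp, hq, add_smul]
      | monomial k a =>
        simp only [Polynomial.aeval_monomial, Polynomial.eval_monomial]
        rw [← Algebra.smul_def, smul_mul_assoc, mul_smul]
        congr 1
        induction k with
        | zero => simp
        | succ k ih => rw [pow_succ, mul_assoc, key' n, mul_smul_comm, ih, smul_smul, ← pow_succ']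
    have := hpe p
    rw [hpx, zero_mul] at this
    rcases smul_eq_zero.1 this.symm with h | h
    · exact h
    · exact absurd (hB.proper h) (hv n)
  apply hp0
  apply Polynomial.eq_zero_of_infinite_isRoot
  apply (Set.infinite_range_of_injective (f := fun n : ℕ => (n:ℂ)^2 / ((n:ℂ)^2 + 1)) ?_).mono
  · rintro _ ⟨n, rfl⟩; exact hroot n
  · intro n m hnm
    simp only at hnm
    rw [div_eq_div_iff (hne n) (hne m)] at hnm
    have : (n:ℂ)^2 = (m:ℂ)^2 := by linear_combination hnm
    have : n^2 = m^2 := by exact_mod_cast this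
    exact Nat.pow_left_injective (by norm_num) this

lemma specStar {w q : B} {l : ℝ} (h1 : star q = q)
    (h4 : w * star w * q = (l : ℂ) • q) : q * (w * star w) = (l:ℂ) • q := by
  have := congrArg star h4
  simpa [star_mul, h1, mul_assoc, star_smul] using this

/-- no infinite orthogonal sequence of square-zero elements -/
lemma no_seq (hB : GoodAlg B) (w : ℕ → B) (hw : ∀ n, w n ≠ 0)
    (h1 : ∀ n m, w n * w m = 0) (h2 : ∀ n m, n ≠ m → w n * star (w m) = 0)
    (h3 : ∀ n m, n ≠ m → star (w n) * w m = 0) : False := by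
  choose l q hl hq1 hq2 hq3 hq4 using fun n => hB.specPos (w n) (hw n)
  have hlne : ∀ n, (l n : ℂ) ≠ 0 := fun n => by exact_mod_cast (hl n).ne'
  have hq5 : ∀ n, q n * (w n * star (w n)) = (l n : ℂ) • q n := fun n => specStar (hq1 n) (hq4 n)
  have eq1 : ∀ n, q n = (l n : ℂ)⁻¹ • (w n * (star (w n) * q n)) := by
    intro n; rw [← mul_assoc, hq4, smul_smul, inv_mul_cancel₀ (hlne n), one_smul]
  have eq2 : ∀ n, q n = (l n : ℂ)⁻¹ • (q n * w n * star (w n)) := by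
    intro n; rw [mul_assoc, hq5, smul_smul, inv_mul_cancel₀ (hlne n), one_smul]
  have hwq : ∀ n m, w n * q m = 0 := by
    intro n m; rw [eq1 m, mul_smul_comm, ← mul_assoc, h1]; simp
  have hqq : ∀ n m, n ≠ m → q n * q m = 0 := by
    intro n m hnm
    rw [eq1 m, eq2 n, mul_smul_comm, smul_mul_assoc]
    rw [mul_assoc, ← mul_assoc (star (w n)), h3 n m hnm]; simp
  have hsq : ∀ n, (((Real.sqrt (l n) : ℝ) : ℂ)⁻¹) * (((Real.sqrt (l n) : ℝ) : ℂ)⁻¹) = (l n : ℂ)⁻¹ := by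
    intro n
    rw [← mul_inv, ← Complex.ofReal_mul, Real.mul_self_sqrt (hl n).le]
  have hvv : ∀ n, (((Real.sqrt (l n) : ℝ) : ℂ)⁻¹ • (q n * w n)) *
      star (((Real.sqrt (l n) : ℝ) : ℂ)⁻¹ • (q n * w n)) = q n := by
    intro n
    rw [star_smul, star_mul, hq1, smul_mul_smul_comm]
    simp only [star_inv₀, Complex.star_def, Complex.conj_ofReal, hsq]
    rw [mul_assoc, ← mul_assoc (w n), hq4, mul_smul_comm, hq2, smul_smul,
      inv_mul_cancel₀ (hlne n), one_smul]
  refine hB.no_seq_pi (fun n => ((Real.sqrt (l n) : ℝ) : ℂ)⁻¹ • (q n * w n)) ?_ ?_ ?_ ?_ ?_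
  · intro n h0
    have := hvv n
    rw [h0, zero_mul] at this
    exact hq3 n this.symm
  · intro n
    simp only [hvv, hq2]
  · intro n m
    simp only [smul_mul_smul_comm]
    rw [mul_assoc, ← mul_assoc (w n), hwq]; simp
  · intro n m hnm
    simp only [star_smul, star_mul, hq1, smul_mul_smul_comm]
    rw [mul_assoc, ← mul_assoc (w n), h2 n m hnm]; simp
  · intro n m hnm
    simp only [star_smul, star_mul, hq1, smul_mul_smul_comm]
    rw [mul_assoc, ← mul_assoc (q n), hqq n m hnm]; simp

/-- minimal projection -/
def IsMinP (m : B) : Prop :=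
  star m = m ∧ m * m = m ∧ m ≠ 0 ∧ ∀ x, ∃ c : ℂ, m * x * m = c • m

lemma smul_ne {l : ℂ} {q : B} (hl : l ≠ 0) (hq : q ≠ 0) : l • q ≠ 0 := by
  intro h
  rcases smul_eq_zero.1 h with h | h
  · exact hl h
  · exact hq h

lemma eq_inv_smul {l : ℂ} {q z : B} (hl : l ≠ 0) (h : z = l • q) : q = l⁻¹ • z := by
  rw [h, smul_smul, inv_mul_cancel₀ hl, one_smul]

lemma min_of_no_sub (hB : GoodAlg B) {q : B} (h1 : star q = q) (h2 : q * q = q) (h3 : q ≠ 0)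
    (h : ∀ r : B, star r = r → r * r = r → r ≠ 0 → q * r = r → r = q) : IsMinP q := by
  refine ⟨h1, h2, h3, ?_⟩
  have hsa : ∀ x : B, star x = x → ∃ c : ℂ, q * x * q = c • q := by
    intro x hx
    by_cases h0 : q * x * q = 0
    · exact ⟨0, by simp [h0]⟩
    obtain ⟨l, r, hl, r1, r2, r3, r4⟩ := hB.spec (q * x * q) (by simp [star_mul, h1, hx, mul_assoc]) h0
    have hl' : (l : ℂ) ≠ 0 := by exact_mod_cast hl
    have : q * r = r := by
      rw [eq_inv_smul hl' r4, mul_smul_comm]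
      simp only [← mul_assoc, h2]
    have := h r r1 r2 r3 this
    subst this
    refine ⟨l, ?_⟩
    rw [← r4, mul_assoc (r * x), h2]
  intro x
  obtain ⟨c, hc⟩ := hsa (x + star x) (by simp [add_comm])
  obtain ⟨d, hd⟩ := hsa (Complex.I • (x - star x)) (by
    rw [star_smul, star_sub, star_star, Complex.star_def, Complex.conj_I, neg_smul, ← smul_neg, neg_sub])
  refine ⟨(1/2) * c - (Complex.I / 2) * d, ?_⟩
  rw [sub_smul, mul_smul, mul_smul, ← hc, ← hd]
  simp only [mul_add, add_mul, mul_sub, sub_mul, mul_smul_comm, smul_mul_assoc, smul_smul, smul_add, smul_sub]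
  have : Complex.I / 2 * Complex.I = -(1/2) := by
    rw [div_mul_eq_mul_div, Complex.I_mul_I]; norm_num
  rw [this]
  module

lemma min_below (hB : GoodAlg B) {w q : B} {l : ℂ} (hl : l ≠ 0) (hw : w * w = 0)
    (h1 : star q = q) (h2 : q * q = q) (h3 : q ≠ 0) (h4 : w * star w * q = l • q) :
    ∃ m, IsMinP m ∧ q * m = m := by
  have hwq : w * q = 0 := by
    rw [eq_inv_smul hl h4, mul_smul_comm, ← mul_assoc, ← mul_assoc, hw]; simp
  let S := {r : B // star r = r ∧ r * r = r ∧ r ≠ 0 ∧ q * r = r}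
  let R : S → S → Prop := fun r s => s.1 * r.1 = r.1 ∧ r.1 ≠ s.1
  have wf : WellFounded R := by
    rw [wellFounded_iff_isEmpty_descending_chain]
    refine ⟨fun ⟨F, hF⟩ => ?_⟩
    have f1 : ∀ n, star (F n).1 = (F n).1 := fun n => (F n).2.1
    have f2 : ∀ n, (F n).1 * (F n).1 = (F n).1 := fun n => (F n).2.2.1
    have f4 : ∀ n, q * (F n).1 = (F n).1 := fun n => (F n).2.2.2.2
    have g1 : ∀ n k, (F n).1 * (F (n + k)).1 = (F (n + k)).1 := by
      intro n k
      induction k with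
      | zero => exact f2 n
      | succ k ih => rw [← add_assoc, ← (hF (n + k)).1, ← mul_assoc, ih]
    have g2 : ∀ n k, (F (n + k)).1 * (F n).1 = (F (n + k)).1 := by
      intro n k
      have := congrArg star (g1 n k)
      simpa [star_mul, f1] using this
    let d : ℕ → B := fun n => (F n).1 - (F (n + 1)).1
    have d1 : ∀ n, star (d n) = d n := fun n => by simp [d, f1]
    have d3 : ∀ n, d n ≠ 0 := fun n h => (hF n).2 (sub_eq_zero.1 h).symm
    have dlt : ∀ n k, d n * d (n + k + 1) = 0 := by
      intro n k
      have a1 := g1 n (k+1)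
      have a2 := g1 n (k+2)
      have a3 := g1 (n+1) k
      have a4 := g1 (n+1) (k+1)
      simp only [d, sub_mul, mul_sub]
      rw [show n + k + 1 = n + (k+1) by ring, show n + (k + 1) + 1 = n + (k+2) by ring, a1, a2,
        show n + (k + 1) = n + 1 + k by ring, a3, show n + (k+2) = n + 1 + (k+1) by ring, a4]
      simp
    have dlt' : ∀ n k, d (n + k + 1) * d n = 0 := by
      intro n k
      have := congrArg star (dlt n k)
      simpa [star_mul, d1] using this
    have dd : ∀ n m, n ≠ m → d n * d m = 0 := by
      intro n m hnm
      rcases lt_or_gt_of_ne hnm with h | h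
      · obtain ⟨k, rfl⟩ := Nat.exists_eq_add_of_lt h; exact dlt n k
      · obtain ⟨k, rfl⟩ := Nat.exists_eq_add_of_lt h; exact dlt' m k
    have dq : ∀ n, q * d n = d n := fun n => by simp [d, mul_sub, f4]
    have wd : ∀ n, w * d n = 0 := fun n => by rw [← dq, ← mul_assoc, hwq, zero_mul]
    have wwd : ∀ n, w * star w * d n = l • d n := fun n => by
      rw [← dq, ← mul_assoc, h4, smul_mul_assoc]
    have dsq : ∀ n, d n * d n = d n := by
      intro n
      have a1 := g1 n 1
      have a2 := g2 n 1
      simp [d, sub_mul, mul_sub, f2, a1, a2]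
    refine hB.no_seq (fun n => d n * w) ?_ ?_ ?_ ?_
    · intro n h0
      have : d n * w * (star w * d n) = l • d n := by
        rw [mul_assoc, ← mul_assoc w, wwd, mul_smul_comm, dsq]
      have h0' : d n * w = 0 := h0
      rw [h0', zero_mul] at this
      exact smul_ne hl (d3 n) this.symm
    · intro n m
      rw [mul_assoc, ← mul_assoc w, wd]; simp
    · intro n m hnm
      rw [star_mul, d1, mul_assoc, ← mul_assoc w, wwd, mul_smul_comm, dd n m hnm, smul_zero]
    · intro n m hnm
      rw [star_mul, d1, mul_assoc, ← mul_assoc (d n), dd n m hnm]; simp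
  obtain ⟨r, -, hr⟩ := wf.has_min Set.univ ⟨⟨q, h1, h2, h3, h2⟩, trivial⟩
  refine ⟨r.1, ?_, r.2.2.2.2⟩
  apply hB.min_of_no_sub r.2.1 r.2.2.1 r.2.2.2.1
  intro t t1 t2 t3 t4
  by_contra hne
  exact hr ⟨t, t1, t2, t3, by rw [← t4, ← mul_assoc, r.2.2.2.2]⟩ trivial ⟨t4, hne⟩

lemma min_below' (hB : GoodAlg B) {w p : B} (hw : w * w = 0)
    (h1 : star p = p) (h2 : p * p = p) (h3 : w * p ≠ 0) :
    ∃ m, IsMinP m ∧ p * m = m := by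
  obtain ⟨l, q, hl, q1, q2, q3, q4⟩ := hB.specPos _ h3
  have hl' : (l : ℂ) ≠ 0 := by exact_mod_cast hl.ne'
  have hwq : w * q = 0 := by
    rw [eq_inv_smul hl' q4, mul_smul_comm]; simp only [← mul_assoc, hw]; simp
  have q5 := specStar q1 q4
  have hqw : q * w ≠ 0 := by
    intro h
    rw [← mul_assoc, ← mul_assoc, h, zero_mul, zero_mul] at q5
    exact smul_ne hl' q3 q5.symm
  obtain ⟨l1, t, hl1, t1, t2, t3, t4⟩ := hB.specPos _ hqw
  have hl1' : (l1 : ℂ) ≠ 0 := by exact_mod_cast hl1.ne'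
  obtain ⟨m, hm, hm'⟩ := hB.min_below (w := q * w) hl1'
    (by rw [mul_assoc, ← mul_assoc w, hwq]; simp) t1 t2 t3 t4
  have hqt : q * t = t := by
    rw [eq_inv_smul hl1' t4, mul_smul_comm]; simp only [← mul_assoc, q2]
  have hqm : q * m = m := by rw [← hm', ← mul_assoc, hqt]
  obtain ⟨m1, m2, m3, m4⟩ := hm
  have hmm : w * p * star (w * p) * m = (l:ℂ) • m := by
    rw [← hqm, ← mul_assoc, q4, smul_mul_assoc]
  set z := star (w * p) * m with hz
  have hzs : star z = m * (w * p) := by rw [hz, star_mul, star_star, m1]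
  have hzz : star z * z = (l:ℂ) • m := by
    rw [hzs, hz, mul_assoc, ← mul_assoc (w * p), hmm, mul_smul_comm, m2]
  have hzm : z * m = z := by rw [hz, mul_assoc, m2]
  have hmz : m * star z = star z := by rw [hzs, ← mul_assoc, m2]
  have hpz : p * z = z := by rw [hz, star_mul, h1]; simp only [← mul_assoc, h2]
  refine ⟨(l:ℂ)⁻¹ • (z * star z), ⟨?_, ?_, ?_, ?_⟩, ?_⟩
  · simp [star_smul, star_mul]
  · rw [smul_mul_smul_comm, mul_assoc, ← mul_assoc (star z), hzz, smul_mul_assoc, hmz,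
      mul_smul_comm, smul_smul]
    congr 1; field_simp
  · apply smul_ne (inv_ne_zero hl')
    intro h
    have := hB.proper h
    rw [this, mul_zero] at hzz
    exact smul_ne hl' m3 hzz.symm
  · intro x
    obtain ⟨c, hc⟩ := m4 (star z * x * z)
    have hc' : star z * x * z = c • m := by
      rw [← hc]
      calc star z * x * z = (m * star z) * x * (z * m) := by rw [hmz, hzm]
        _ = _ := by simp only [mul_assoc]
    refine ⟨c * (l:ℂ)⁻¹, ?_⟩
    have : z * star z * x * (z * star z) = c • (z * star z) := by
      calc z * star z * x * (z * star z) = z * (star z * x * z) * star z := by simp only [mul_assoc]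
        _ = _ := by rw [hc', mul_smul_comm, hzm, smul_mul_assoc]
    rw [smul_mul_assoc, smul_mul_smul_comm, this, smul_smul, smul_smul]
    congr 1; ring
  · rw [mul_smul_comm, ← mul_assoc, hpz]

lemma min_rank (hB : GoodAlg B) {m x : B} (hm : IsMinP m) (hx : x * m = x) (h0 : x ≠ 0) :
    ∃ c : ℂ, c ≠ 0 ∧ star x * x = c • m := by
  obtain ⟨m1, m2, m3, m4⟩ := hm
  obtain ⟨c, hc⟩ := m4 (star x * x)
  have : star x * x = c • m := by
    rw [← hc]; conv_lhs => rw [← hx]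
    rw [star_mul, m1]; simp only [mul_assoc]
  refine ⟨c, ?_, this⟩
  rintro rfl
  rw [zero_smul] at this
  have := hB.proper (w := star x) (by rwa [star_star])
  exact h0 (star_eq_zero.1 this)

lemma min_span (hB : GoodAlg B) {m n : B} (hm : IsMinP m) (hn : IsMinP n) :
    ∃ b : B, ∀ x, ∃ c : ℂ, m * x * n = c • b := by
  by_cases h : ∀ x, m * x * n = 0
  · exact ⟨0, fun x => ⟨0, by simp [h x]⟩⟩
  push Not at h
  obtain ⟨y, hy⟩ := h
  refine ⟨m * y * n, fun x => ?_⟩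
  obtain ⟨c, hc, hc'⟩ := hB.min_rank hm (x := star (m * y * n))
    (by simp only [star_mul, hm.1, mul_assoc, hm.2.1]) (fun h => hy (star_eq_zero.1 h))
  rw [star_star] at hc'
  obtain ⟨d, hd⟩ := hn.2.2.2 (star (m * y * n) * (m * x))
  refine ⟨c⁻¹ * d, ?_⟩
  have e1 : m * (m * x * n) = m * x * n := by simp only [← mul_assoc, hm.2.1]
  have e2 : m * y * n * (n * (star (m * y * n) * (m * x)) * n) = c • (m * x * n) := by
    calc _ = (m * y * (n * n)) * star (m * y * n) * (m * x * n) := by simp only [mul_assoc]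
      _ = _ := by rw [hn.2.1, hc', smul_mul_assoc, e1]
  rw [hd, mul_smul_comm, mul_assoc, hn.2.1] at e2
  rw [mul_smul, e2, smul_smul, inv_mul_cancel₀ hc, one_smul]

lemma no_min_seq (hB : GoodAlg B) (m : ℕ → B) (hm : ∀ n, IsMinP (m n))
    (ho : ∀ n k, n ≠ k → m n * m k = 0) (hx : ∀ n, ∃ x, m n * x * (1 - m n) ≠ 0) : False := by
  have s1 := fun n => (hm n).1
  have s2 := fun n => (hm n).2.1
  by_cases hinf : ∃ n, {k | ∃ x, m k * x * m n ≠ 0}.Infinite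
  · obtain ⟨n, hn⟩ := hinf
    let k := hn.natEmbedding
    have hk : ∀ i j, i ≠ j → (k i).1 ≠ (k j).1 := fun i j h h' => h (k.injective (Subtype.ext h'))
    choose x hx using fun i => (k i).2
    let y : ℕ → B := fun i => m (k i).1 * x i * m n
    have hy0 : ∀ i, y i ≠ 0 := hx
    have hyn : ∀ i, y i * m n = y i := fun i => by simp only [y, mul_assoc, s2]
    have hyy : ∀ i j, i ≠ j → star (y i) * y j = 0 := by
      intro i j h
      simp only [y, star_mul, s1]
      calc _ = m n * star (x i) * (m (k i).1 * m (k j).1) * x j * m n := by simp only [mul_assoc]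
        _ = 0 := by rw [ho _ _ (hk i j h)]; simp
    have hyy' : ∀ a b i j, i ≠ j → (a * star (y i)) * (y j * b) = 0 := by
      intro a b i j h
      rw [mul_assoc, ← mul_assoc (star (y i)), hyy i j h]; simp
    refine hB.no_seq (fun i => y (2 * i) * star (y (2 * i + 1))) ?_ ?_ ?_ ?_
    · intro i h0
      have h0' : y (2 * i) * star (y (2 * i + 1)) = 0 := h0
      obtain ⟨c, hc, hc'⟩ := hB.min_rank (hm n) (hyn (2*i)) (hy0 _)
      have : star (y (2 * i)) * (y (2 * i) * star (y (2 * i + 1))) = c • star (y (2 * i + 1)) := by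
        rw [← mul_assoc, hc', smul_mul_assoc]
        have := congrArg star (hyn (2 * i + 1))
        rw [star_mul, s1] at this
        rw [this]
      rw [h0', mul_zero] at this
      exact smul_ne hc (fun h => hy0 _ (star_eq_zero.1 h)) this.symm
    · intro i j
      exact hyy' _ _ _ _ (by omega)
    · intro i j h
      simp only [star_mul, star_star]
      exact hyy' _ _ _ _ (by omega)
    · intro i j h
      simp only [star_mul, star_star]
      exact hyy' _ _ _ _ (by omega)
  · push Not at hinf
    obtain ⟨f, -, hf⟩ := exists_seq_of_forall_finset_exists (fun _ : ℕ => True)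
      (fun n k => ∀ x, m k * x * m n = 0) (by
        intro s _
        have : (⋃ n ∈ s, {k | ∃ x, m k * x * m n ≠ 0}).Finite :=
          s.finite_toSet.biUnion fun n _ => by simpa using hinf n
        obtain ⟨y, hy⟩ := this.infinite_compl.nonempty
        refine ⟨y, trivial, fun n hn x => ?_⟩
        by_contra h
        exact hy (Set.mem_biUnion hn ⟨x, h⟩))
    have hf' : ∀ i j, i ≠ j → ∀ x, m (f i) * x * m (f j) = 0 := by
      intro i j hij x
      rcases lt_or_gt_of_ne hij with h | h
      · have := congrArg star (hf i j h (star x))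
        simpa [star_mul, s1, mul_assoc] using this
      · exact hf j i h x
    have hfo : ∀ i j, i ≠ j → m (f i) * m (f j) = 0 := by
      intro i j h
      have := hf' i j h 1
      simpa using this
    choose x hx using hx
    have t : ∀ n, (1 - m n) * m n = 0 := fun n => by rw [sub_mul, s2]; simp
    refine hB.no_seq (fun i => m (f i) * x (f i) * (1 - m (f i))) (fun i => hx _) ?_ ?_ ?_
    · intro i j
      by_cases h : i = j
      · subst h
        calc _ = m (f i) * x (f i) * ((1 - m (f i)) * m (f i)) * x (f i) * (1 - m (f i)) := by
              simp only [mul_assoc]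
          _ = 0 := by rw [t]; simp
      · calc _ = m (f i) * (x (f i) * (1 - m (f i))) * m (f j) * (x (f j) * (1 - m (f j))) := by
              simp only [mul_assoc]
          _ = 0 := by rw [hf' i j h]; simp
    · intro i j h
      simp only [star_mul, s1]
      calc _ = m (f i) * (x (f i) * (1 - m (f i)) * star (1 - m (f j)) * star (x (f j))) * m (f j) := by
            simp only [mul_assoc]
        _ = 0 := hf' i j h _
    · intro i j h
      simp only [star_mul, s1]
      calc _ = star (1 - m (f i)) * star (x (f i)) * (m (f i) * m (f j)) * x (f j) * (1 - m (f j)) := by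
            simp only [mul_assoc]
        _ = 0 := by rw [hfo i j h]; simp

/-- structure theorem -/
theorem exists_central (hB : GoodAlg B) : ∃ h : B, star h = h ∧ h * h = h ∧ (∀ x, h * x = x * h) ∧
    (∀ x y, (h * x) * (h * y) = (h * y) * (h * x)) ∧
    FiniteDimensional ℂ (LinearMap.range (LinearMap.mulLeft ℂ ((1 : B) - h))) := by
  obtain ⟨h, h1, h2, h3, h4⟩ := hB.ann {w | w * w = 0} ⟨0, by simp⟩
  have h3 : ∀ w, w * w = 0 → w * h = 0 := h3
  have h4 : ∀ y, (∀ w, w * w = 0 → w * y = 0) → h * y = y := h4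
  have k1 : (1 - h) * h = 0 := by rw [sub_mul, h2]; simp
  have k2 : h * (1 - h) = 0 := by rw [mul_sub, h2]; simp
  have corner : ∀ x, x * h = h * x * h := by
    intro x
    have : (1 - h) * x * h * h = 0 := h3 _ (by
      calc _ = (1 - h) * x * (h * (1 - h)) * x * h := by simp only [mul_assoc]
        _ = 0 := by rw [k2]; simp)
    rw [mul_assoc, h2, sub_mul, sub_mul, one_mul, sub_eq_zero] at this
    exact this
  have hc : ∀ x, h * x = x * h := by
    intro x
    rw [corner x]
    have := congrArg star (corner (star x))
    simpa [star_mul, h1, mul_assoc] using this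
  have hred : ∀ x, h * x = x → x * x = 0 → x = 0 := by
    intro x hx hxx
    rw [← hx, hc]; exact h3 x hxx
  have hproj : ∀ e, star e = e → e * e = e → h * e = e → ∀ x, e * x = x * e := by
    intro e e1 e2 e3
    have t : ∀ x, e * x = e * x * e := by
      intro x
      have te : (1 - e) * e = 0 := by rw [sub_mul, e2]; simp
      have := hred (e * x * (1 - e)) (by simp only [← mul_assoc, e3]) (by
        calc _ = e * x * ((1 - e) * e) * x * (1 - e) := by simp only [mul_assoc]
          _ = 0 := by rw [te]; simp)
      rw [mul_sub, mul_one, sub_eq_zero] at this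
      exact this
    intro x
    rw [t x]
    have := congrArg star (t (star x))
    simp only [star_mul, star_star, e1] at this
    rw [this, mul_assoc]
  have hcomm : ∀ x y, star x = x → h * x = x → x * y = y * x := by
    intro x y hx hhx
    by_contra hne
    have hne : x * y - y * x ≠ 0 := fun h => hne (sub_eq_zero.1 h)
    obtain ⟨l, q, hl, q1, q2, q3, q4⟩ := hB.specPos _ hne
    have hl' : (l : ℂ) ≠ 0 := by exact_mod_cast hl.ne'
    have hq : h * q = q := by
      rw [eq_inv_smul hl' q4, mul_smul_comm]; simp only [← mul_assoc, mul_sub]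
      rw [hhx, hc y, mul_assoc y, hhx]
    have hqx := hproj q q1 q2 hq
    have : ∃ (c : ℂ) (r : B), star r = r ∧ r * r = r ∧ r ≠ 0 ∧ q * r = r ∧ x * r = c • r := by
      by_cases h0 : x * q = 0
      · exact ⟨0, q, q1, q2, q3, q2, by simp [h0]⟩
      · obtain ⟨c, r, c1, r1, r2, r3, r4⟩ := hB.spec (x * q) (by rw [star_mul, hx, q1, hqx]) h0
        have c2 : (c : ℂ) ≠ 0 := by exact_mod_cast c1
        have : q * r = r := by
          rw [eq_inv_smul c2 r4, mul_smul_comm]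
          rw [← hqx]; simp only [← mul_assoc, q2]
        exact ⟨c, r, r1, r2, r3, this, by rw [← r4, mul_assoc, this]⟩
    obtain ⟨c, r, r1, r2, r3, r4, r5⟩ := this
    have hr : h * r = r := by rw [← r4, ← mul_assoc, hq]
    have hrx := hproj r r1 r2 hr
    have e1 : r * (x * y - y * x) = 0 := by
      rw [mul_sub, ← mul_assoc, ← mul_assoc, hrx x, hrx y, r5, mul_assoc y, hrx x, r5,
        smul_mul_assoc, mul_smul_comm, hrx y]; simp
    have e2 : star (x * y - y * x) * r = 0 := by
      have := congrArg star e1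
      rwa [star_mul, r1, star_zero] at this
    have e3 : (x * y - y * x) * star (x * y - y * x) * q * r = (l:ℂ) • r := by
      rw [q4, smul_mul_assoc, r4]
    rw [mul_assoc, r4, mul_assoc, e2, mul_zero] at e3
    exact smul_ne hl' r3 e3.symm
  have hcomm' : ∀ x y, (h * x) * y = y * (h * x) := by
    intro x y
    have a1 := hcomm (h * (x + star x)) y (by rw [star_mul, h1, ← hc]; simp [add_comm])
      (by rw [← mul_assoc, h2])
    have a2 := hcomm (h * (Complex.I • (x - star x))) y (by
      rw [star_mul, h1, ← hc, star_smul, star_sub, star_star, Complex.star_def, Complex.conj_I,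
        neg_smul, ← smul_neg, neg_sub]) (by rw [← mul_assoc, h2])
    have : h * x = (1/2 : ℂ) • (h * (x + star x)) - (Complex.I / 2) • (h * (Complex.I • (x - star x))) := by
      have : Complex.I / 2 * Complex.I = -(1/2) := by
        rw [div_mul_eq_mul_div, Complex.I_mul_I]; norm_num
      simp only [mul_add, mul_sub, mul_smul_comm, smul_smul, this]
      module
    rw [this, sub_mul, mul_sub, smul_mul_assoc, smul_mul_assoc, a1, a2, mul_smul_comm (1/2 : ℂ) y,
      mul_smul_comm (Complex.I / 2) y]
  refine ⟨h, h1, h2, hc, fun x y => hcomm' _ _, ?_⟩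
  -- minimal projections
  have hmx : ∀ m, IsMinP m → h * m = 0 → ∃ x, m * x * (1 - m) ≠ 0 := by
    rintro m ⟨m1, m2, m3, m4⟩ hm
    by_contra! hcon
    apply m3
    rw [← hm]
    symm
    apply h4
    intro w hw
    have a1 : w * m = m * w * m := by
      have := congrArg star (hcon (star w))
      simp only [star_mul, star_star, m1, star_sub, star_one, star_zero, sub_mul, one_mul] at this
      rw [sub_eq_zero] at this
      rw [this, mul_assoc]
    obtain ⟨c, hc⟩ := m4 w
    rw [hc] at a1
    have : w * (w * m) = (c * c) • m := by rw [a1, mul_smul_comm, a1, smul_smul]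
    rw [← mul_assoc, hw, zero_mul] at this
    rcases smul_eq_zero.1 this.symm with h | h
    · rw [a1, mul_self_eq_zero.1 h, zero_smul]
    · exact absurd h m3
  have : ∃ s : Finset B, (∀ x ∈ s, IsMinP x ∧ h * x = 0) ∧
      ∀ y, IsMinP y → h * y = 0 → ∃ x ∈ s, x * y ≠ 0 := by
    by_contra! hcon
    obtain ⟨f, hf1, hf2⟩ := exists_seq_of_forall_finset_exists (fun x => IsMinP x ∧ h * x = 0)
      (fun x y => x * y = 0) (fun s hs => by
        obtain ⟨y, y1, y2, y3⟩ := hcon s hs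
        exact ⟨y, ⟨y1, y2⟩, y3⟩)
    refine hB.no_min_seq f (fun n => (hf1 n).1) ?_ (fun n => hmx _ (hf1 n).1 (hf1 n).2)
    intro n k hnk
    rcases lt_or_gt_of_ne hnk with h | h
    · exact hf2 n k h
    · have := congrArg star (hf2 k n h)
      simpa [star_mul, (hf1 _).1.1] using this
  obtain ⟨s, hs1, hs2⟩ := this
  have hann : ∀ x, h * x = 0 → (∀ m ∈ s, m * x = 0) → x = 0 := by
    obtain ⟨g, g1, g2, g3, g4⟩ := hB.ann (insert h (s : Set B)) ⟨h, by simp⟩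
    have g0 : g = 0 := by
      by_contra hg
      have hhg : h * g = 0 := g3 h (by simp)
      have : ∃ w, w * w = 0 ∧ w * g ≠ 0 := by
        by_contra! hcon
        exact hg (by rw [← h4 g hcon, hhg])
      obtain ⟨w, w1, w2⟩ := this
      obtain ⟨m, m1, m2⟩ := hB.min_below' w1 g1 g2 w2
      obtain ⟨x, x1, x2⟩ := hs2 m m1 (by rw [← m2, ← mul_assoc, hhg, zero_mul])
      apply x2
      rw [← m2, ← mul_assoc, g3 x (by simp [x1]), zero_mul]
    intro x x1 x2
    rw [← g4 x (by
      intro t ht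
      rcases ht with rfl | ht
      · exact x1
      · exact x2 t ht), g0, zero_mul]
  let L : s × s → (B →ₗ[ℂ] B) := fun i =>
    (LinearMap.mulRight ℂ i.2.1).comp (LinearMap.mulLeft ℂ i.1.1)
  have hL : ∀ i x, L i x = i.1.1 * x * i.2.1 := fun i x => rfl
  have : ∀ i, FiniteDimensional ℂ (LinearMap.range (L i)) := by
    intro i
    obtain ⟨b, hb⟩ := hB.min_span (hs1 _ i.1.2).1 (hs1 _ i.2.2).1
    refine Submodule.finiteDimensional_of_le (S₂ := Submodule.span ℂ {b}) ?_
    rintro _ ⟨x, rfl⟩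
    obtain ⟨c, hc⟩ := hb x
    rw [Submodule.mem_span_singleton]
    exact ⟨c, by rw [hL, hc]⟩
  let Φ : LinearMap.range (LinearMap.mulLeft ℂ ((1 : B) - h)) →ₗ[ℂ]
      ((i : s × s) → LinearMap.range (L i)) :=
    (LinearMap.pi fun i => (L i).rangeRestrict).comp (Submodule.subtype _)
  apply Module.Finite.of_injective Φ
  rw [injective_iff_map_eq_zero]
  rintro ⟨_, x, rfl⟩ hx
  have hx' : ∀ i : s × s, i.1.1 * ((1 - h) * x) * i.2.1 = 0 := by
    intro i
    have := congrArg Subtype.val (congrFun hx i)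
    exact this
  apply Subtype.ext
  change (1 - h) * x = 0
  have hh : h * ((1 - h) * x) = 0 := by rw [← mul_assoc, k2, zero_mul]
  have a1 : ∀ m ∈ s, (1 - h) * x * m = 0 := by
    intro m hm
    apply hann
    · rw [← mul_assoc, hh, zero_mul]
    · intro n hn
      rw [← mul_assoc]; exact hx' (⟨n, hn⟩, ⟨m, hm⟩)
  have : star ((1 - h) * x) = 0 := by
    apply hann
    · have := congrArg star hh
      rw [star_mul, h1, ← hc, star_zero] at this
      exact this
    · intro m hm
      have := congrArg star (a1 m hm)
      rwa [star_mul, (hs1 m hm).1.1, star_zero] at this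
  exact star_eq_zero.1 this

end GoodAlg

section CStar

variable {𝒜 : Type*} [CStarAlgebra 𝒜]

lemma finite_spectrum_of_alg {a : 𝒜} (h : IsAlgebraic ℂ a) : (spectrum ℝ a).Finite := by
  obtain ⟨p, hp, hpa⟩ := h
  have : (spectrum ℝ a) ⊆ (fun x : ℝ => (x : ℂ)) ⁻¹' {z | p.IsRoot z} := by
    intro x hx
    have hx' : (x : ℂ) ∈ spectrum ℂ a := by
      have := spectrum.algebraMap_mem ℂ hx
      simpa using this
    have := spectrum.subset_polynomial_aeval a p ⟨_, hx', rfl⟩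
    rw [hpa] at this
    have h0 : spectrum ℂ (0 : 𝒜) ⊆ {0} := by
      rcases subsingleton_or_nontrivial 𝒜 with h | h
      · simp [spectrum.of_subsingleton]
      · rw [spectrum.zero_eq]
    exact h0 this
  refine Set.Finite.subset (Set.Finite.preimage (Complex.ofReal_injective.injOn) ?_) this
  exact Polynomial.finite_setOfPred_isRoot hp

lemma cfc_mem_of_finite (B : StarSubalgebra ℂ 𝒜) {a : 𝒜} (ha : IsSelfAdjoint a) (haB : a ∈ B)
    (hf : (spectrum ℝ a).Finite) (f : ℝ → ℝ) : cfc f a ∈ B := by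
  classical
  have : cfc f a = cfc (fun x => (Lagrange.interpolate hf.toFinset id f).eval x) a := by
    apply cfc_congr
    intro x hx
    have := Lagrange.eval_interpolate_at_node (s := hf.toFinset) (v := id) f
      (Function.injective_id.injOn) (hf.mem_toFinset.2 hx)
    exact this.symm
  rw [this, cfc_polynomial _ a ha]
  generalize Lagrange.interpolate hf.toFinset id f = p
  induction p using Polynomial.induction_on' with
  | add p q hp hq => rw [map_add]; exact add_mem hp hq
  | monomial k c =>
    rw [Polynomial.aeval_monomial, ← Algebra.smul_def]
    have : c • a ^ k = (c : ℂ) • a ^ k := by simp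
    rw [this]
    exact B.toSubalgebra.smul_mem (pow_mem haB k) _

lemma exists_spectral_proj (B : StarSubalgebra ℂ 𝒜) {a : 𝒜} (ha : IsSelfAdjoint a) (haB : a ∈ B)
    (hf : (spectrum ℝ a).Finite) {l : ℝ} (hl : l ∈ spectrum ℝ a) :
    ∃ q ∈ B, star q = q ∧ q * q = q ∧ q ≠ 0 ∧ a * q = (l : ℂ) • q := by
  classical
  let f : ℝ → ℝ := fun t => if t = l then 1 else 0
  have hc : ∀ g : ℝ → ℝ, ContinuousOn g (spectrum ℝ a) := fun g => hf.continuousOn g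
  refine ⟨cfc f a, cfc_mem_of_finite B ha haB hf f, ?_, ?_, ?_, ?_⟩
  · exact (cfc_predicate f a : IsSelfAdjoint _)
  · rw [← cfc_mul f f a (hc _) (hc _)]
    apply cfc_congr
    intro x _
    simp only [f]; split_ifs <;> simp
  · intro h0
    have := cfc_map_spectrum f a ha (hc f)
    rw [h0] at this
    have h1 : (1:ℝ) ∈ spectrum ℝ (0 : 𝒜) := by rw [this]; exact ⟨l, hl, by simp [f]⟩
    have : Nontrivial 𝒜 := by
      by_contra hn
      rw [not_nontrivial_iff_subsingleton] at hn
      rw [spectrum.of_subsingleton] at h1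
      exact h1
    rw [spectrum.zero_eq] at h1
    exact one_ne_zero h1
  · conv_lhs => rw [← cfc_id ℝ a ha]
    rw [cfc_id ℝ a ha]
    have : a * cfc f a = cfc (fun t => l * f t) a := by
      conv_lhs => enter [1]; rw [← cfc_id ℝ a ha]
      rw [← cfc_mul id f a (hc _) (hc _)]
      apply cfc_congr
      intro x _
      simp only [f, id]; split_ifs with h <;> simp [h]
    rw [this, cfc_const_mul l f a (hc f)]
    simp

lemma exists_ne_zero_spectrum {a : 𝒜} (ha : IsSelfAdjoint a) (h0 : a ≠ 0) :
    ∃ l ∈ spectrum ℝ a, l ≠ 0 := by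
  by_contra! h
  apply h0
  have h1 : cfc (id : ℝ → ℝ) a = cfc (fun _ : ℝ => (0:ℝ)) a := cfc_congr (fun x hx => h x hx)
  rw [cfc_id ℝ a ha, cfc_const_zero] at h1
  exact h1

lemma goodAlg_of (B : StarSubalgebra ℂ 𝒜) (halg : ∀ b : B, IsAlgebraic ℂ b)
    (hB : IsBaerStarRing B) : GoodAlg B := by
  have halg' : ∀ b : B, IsAlgebraic ℂ (b : 𝒜) := fun b => (halg b).algHom B.subtype.toAlgHom
  refine ⟨hB, halg, ?_, ?_⟩
  · intro a ha h0
    have ha' : IsSelfAdjoint (a : 𝒜) := by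
      have := congrArg Subtype.val ha
      exact this
    obtain ⟨l, hl, hl0⟩ := exists_ne_zero_spectrum ha' (by simpa using h0)
    obtain ⟨q, hqB, q1, q2, q3, q4⟩ := exists_spectral_proj B ha' a.2
      (finite_spectrum_of_alg (halg' a)) hl
    exact ⟨l, ⟨q, hqB⟩, hl0, Subtype.ext q1, Subtype.ext q2, fun h => q3 (congrArg Subtype.val h),
      Subtype.ext q4⟩
  · intro w h0
    have ha' : IsSelfAdjoint ((w * star w : B) : 𝒜) := by
      have : IsSelfAdjoint ((w : 𝒜) * star (w : 𝒜)) := IsSelfAdjoint.mul_star_self _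
      exact this
    obtain ⟨l, hl, hl0⟩ := exists_ne_zero_spectrum ha' (by
      intro h
      have : (w : 𝒜) * star (w : 𝒜) = 0 := h
      rw [CStarRing.mul_star_self_eq_zero_iff] at this
      exact h0 (Subtype.ext this))
    have hpos : 0 ≤ l := by
      have : l ∈ spectrum ℝ (star (star (w:𝒜)) * star (w : 𝒜)) := by rw [star_star]; exact hl
      exact spectrum_star_mul_self_nonneg l this
    obtain ⟨q, hqB, q1, q2, q3, q4⟩ := exists_spectral_proj B ha' (w * star w).2
      (finite_spectrum_of_alg (halg' _)) hl
    exact ⟨l, ⟨q, hqB⟩, lt_of_le_of_ne hpos hl0.symm, Subtype.ext q1, Subtype.ext q2,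
      fun h => q3 (congrArg Subtype.val h), Subtype.ext q4⟩

lemma approx_proj (B : StarSubalgebra ℂ 𝒜) (hd : Dense (B : Set 𝒜))
    (halg : ∀ b ∈ B, IsAlgebraic ℂ b) {h : 𝒜} (hhB : h ∈ B) (h2 : h * h = h)
    (hc : ∀ x, h * x = x * h)
    (hcomm : ∀ x y, (h * x) * (h * y) = (h * y) * (h * x)) (hfd : ∀ x, (1 - h) * x ∈ B)
    (y : 𝒜) {ε : ℝ} (hε : 0 < ε) :
    ∃ q ∈ B, star q = q ∧ q * q = q ∧ (∃ z, q = y * z) ∧ ‖y - q * y‖ ≤ ε := by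
  classical
  set δ := ε / 2 with hδ
  have hδ0 : 0 < δ := by positivity
  obtain ⟨b0, hb0, hb0'⟩ := hd.exists_dist_lt y (ε := δ / (2 * (‖h‖ + 1))) (by positivity)
  have hcen : ∀ x z, (h * x) * z = z * (h * x) := by
    intro x z
    calc (h * x) * z = (h * h) * x * z := by rw [h2]
      _ = h * (h * x) * z := by rw [mul_assoc h h]
      _ = (h * x) * (h * z) := by rw [hc (h * x), mul_assoc]
      _ = (h * z) * (h * x) := hcomm _ _
      _ = z * (h * (h * x)) := by rw [hc z, mul_assoc]
      _ = z * (h * x) := by rw [← mul_assoc h h, h2]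
  set d := h * (y - b0) with hdd
  set b := h * b0 + (1 - h) * y with hb
  have hyb : y = b + d := by rw [hb, hdd, mul_sub, sub_mul, one_mul]; abel
  have hbB : b ∈ B := add_mem (mul_mem hhB hb0) (hfd y)
  have hdn : ‖d‖ ≤ δ / 2 := by
    rw [dist_eq_norm] at hb0'
    calc ‖d‖ ≤ ‖h‖ * ‖y - b0‖ := norm_mul_le _ _
      _ ≤ (‖h‖ + 1) * (δ / (2 * (‖h‖ + 1))) := by gcongr; linarith
      _ = δ / 2 := by field_simp
  set a := b * star b with ha
  have haB : a ∈ B := mul_mem hbB (star_mem hbB)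
  have hsa : IsSelfAdjoint a := IsSelfAdjoint.mul_star_self _
  have hf := finite_spectrum_of_alg (halg a haB)
  have hcont : ∀ g : ℝ → ℝ, ContinuousOn g (spectrum ℝ a) := fun g => hf.continuousOn g
  let χ : ℝ → ℝ := fun t => if δ ^ 2 ≤ |t| then 1 else 0
  let u : ℝ → ℝ := fun t => if δ ^ 2 ≤ |t| then t⁻¹ else 0
  have hdp : 0 < δ ^ 2 := by positivity
  have ht0 : ∀ t : ℝ, δ ^ 2 ≤ |t| → t ≠ 0 := by
    rintro t ht rfl; simp at ht; linarith
  set q := cfc χ a with hq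
  set g := cfc u a with hg
  have q1 : star q = q := (cfc_predicate χ a : IsSelfAdjoint _)
  have g1 : star g = g := (cfc_predicate u a : IsSelfAdjoint _)
  have q2 : q * q = q := by
    rw [hq, ← cfc_mul χ χ a (hcont _) (hcont _)]
    apply cfc_congr
    intro x _
    simp only [χ]; split_ifs <;> simp
  have aid : cfc (id : ℝ → ℝ) a = a := cfc_id ℝ a hsa
  have ag : a * g = q := by
    calc a * g = cfc (id : ℝ → ℝ) a * cfc u a := by rw [aid]
      _ = cfc χ a := by
        rw [← cfc_mul id u a (hcont _) (hcont _)]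
        apply cfc_congr
        intro x _
        simp only [χ, u, id]; split_ifs with h
        · exact mul_inv_cancel₀ (ht0 x h)
        · simp
  have gq : g * q = g := by
    rw [hq, hg, ← cfc_mul u χ a (hcont _) (hcont _)]
    apply cfc_congr
    intro x _
    simp only [χ, u]; split_ifs <;> simp
  have gag : ‖g * (a * g)‖ ≤ (1 / δ) ^ 2 := by
    rw [ag, gq]
    apply norm_cfc_le (by positivity)
    intro x _
    simp only [u]; split_ifs with h
    · rw [norm_inv, Real.norm_eq_abs, one_div, inv_pow]
      exact inv_anti₀ hdp h
    · simp; positivity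
  have q1' : 1 - q = cfc (fun t => 1 - χ t) a := by
    rw [cfc_sub (fun _ => (1:ℝ)) χ a (hcont _) (hcont _), cfc_const_one ℝ a]
  have hq1n : ‖1 - q‖ ≤ 1 := by
    rw [q1']
    apply norm_cfc_le zero_le_one
    intro x _
    simp only [χ]; split_ifs <;> simp
  have hqa : ‖(1 - q) * a * (1 - q)‖ ≤ δ ^ 2 := by
    have : (1 - q) * a * (1 - q) = cfc (fun t => (1 - χ t) * t * (1 - χ t)) a := by
      rw [cfc_mul (fun t => (1 - χ t) * t) (fun t => 1 - χ t) a (hcont _) (hcont _),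
        cfc_mul (fun t => (1 - χ t)) (fun t => t) a (hcont _) (hcont _), ← q1']
      congr 2; exact aid.symm
    rw [this]
    apply norm_cfc_le (by positivity)
    intro x _
    simp only [χ]; split_ifs with h
    · simp; positivity
    · simp; exact (not_le.1 h).le
  set k := star b * g with hk
  have hbk : b * k = q := by rw [hk, ← mul_assoc, ← ha, ag]
  have hkq : k * q = k := by rw [hk, mul_assoc, gq]
  have hkn : ‖k‖ ≤ 1 / δ := by
    have : ‖k‖ * ‖k‖ = ‖g * (a * g)‖ := by
      rw [← CStarRing.norm_star_mul_self]
      congr 1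
      rw [hk, star_mul, star_star, g1, ha]; simp only [mul_assoc]
    apply abs_le_of_sq_le_sq' _ (by positivity) |>.2
    rw [pow_two, this]; exact gag
  have hdk : ‖-(d * k)‖ < 1 := by
    rw [norm_neg]
    calc ‖d * k‖ ≤ ‖d‖ * ‖k‖ := norm_mul_le _ _
      _ ≤ (δ / 2) * (1 / δ) := by gcongr
      _ < 1 := by field_simp; norm_num
  have hunit : IsUnit (1 + d * k) := by
    have := isUnit_one_sub_of_norm_lt_one hdk
    rwa [sub_neg_eq_add] at this
  obtain ⟨U, hU⟩ := hunit
  have hyk : y * k = q * (1 + d * k) := by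
    have : d * k * q = q * (d * k) := by
      rw [hdd, mul_assoc h]; exact hcen _ _
    rw [mul_add, mul_one, ← this, mul_assoc d, hkq, hyb, add_mul, hbk]
  refine ⟨q, cfc_mem_of_finite B hsa haB hf χ, q1, q2, ⟨k * (U⁻¹ : 𝒜ˣ), ?_⟩, ?_⟩
  · rw [← mul_assoc, hyk, ← hU, mul_assoc, Units.mul_inv, mul_one]
  · have hn1 : ‖(1 - q) * b‖ ≤ δ := by
      have : ‖(1 - q) * b‖ * ‖(1 - q) * b‖ = ‖(1 - q) * a * (1 - q)‖ := by
        rw [← CStarRing.norm_self_mul_star]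
        congr 1
        rw [star_mul, star_sub, star_one, q1, ha]; simp only [mul_assoc]
      apply abs_le_of_sq_le_sq' _ hδ0.le |>.2
      rw [pow_two, this]; exact hqa
    have : y - q * y = (1 - q) * b + (1 - q) * d := by
      rw [← mul_add, ← hyb, sub_mul, one_mul]
    rw [this]
    calc ‖(1 - q) * b + (1 - q) * d‖ ≤ ‖(1 - q) * b‖ + ‖(1 - q) * d‖ := norm_add_le _ _
      _ ≤ δ + 1 * (δ / 2) := by
        gcongr
        exact (norm_mul_le _ _).trans (by gcongr)
      _ ≤ ε := by rw [hδ]; linarith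

theorem forward_dir (B : StarSubalgebra ℂ 𝒜) (hd : Dense (B : Set 𝒜))
    (halg : ∀ b : B, IsAlgebraic ℂ b) (hB : IsBaerStarRing B) :
    (IsBaerStarRing 𝒜 ∧ ∃ h : 𝒜, star h = h ∧ h * h = h ∧ (∀ x : 𝒜, h * x = x * h) ∧
        (∀ x y : 𝒜, (h * x) * (h * y) = (h * y) * (h * x)) ∧
        FiniteDimensional ℂ (LinearMap.range (LinearMap.mulLeft ℂ ((1 : 𝒜) - h)))) := by
  have hG := goodAlg_of B halg hB
  have halg' : ∀ b ∈ B, IsAlgebraic ℂ b := fun b hb => (halg ⟨b, hb⟩).algHom B.subtype.toAlgHom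
  obtain ⟨⟨h, hhB⟩, h1, h2, h3, h4, h5⟩ := hG.exists_central
  replace h1 : star h = h := congrArg Subtype.val h1
  replace h2 : h * h = h := congrArg Subtype.val h2
  have h3' : ∀ x ∈ B, h * x = x * h := fun x hx => congrArg Subtype.val (h3 ⟨x, hx⟩)
  have h4' : ∀ x ∈ B, ∀ y ∈ B, (h * x) * (h * y) = (h * y) * (h * x) :=
    fun x hx y hy => congrArg Subtype.val (h4 ⟨x, hx⟩ ⟨y, hy⟩)
  have hc : ∀ x, h * x = x * h := by
    intro x
    refine hd.induction (P := fun x => h * x = x * h) h3' ?_ x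
    exact isClosed_eq (by fun_prop) (by fun_prop)
  have hcomm : ∀ x y, (h * x) * (h * y) = (h * y) * (h * x) := by
    intro x y
    refine hd.induction (P := fun x => (h * x) * (h * y) = (h * y) * (h * x)) ?_ ?_ x
    · intro x hx
      refine hd.induction (P := fun y => (h * x) * (h * y) = (h * y) * (h * x)) (h4' x hx) ?_ y
      exact isClosed_eq (by fun_prop) (by fun_prop)
    · exact isClosed_eq (by fun_prop) (by fun_prop)
  set V : Submodule ℂ 𝒜 := (LinearMap.range (LinearMap.mulLeft ℂ ((1 : B) - ⟨h, hhB⟩))).map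
    B.subtype.toAlgHom.toLinearMap with hV
  have hVfd : FiniteDimensional ℂ V := by rw [hV]; infer_instance
  have hVB : ∀ x ∈ V, x ∈ B := by
    rintro _ ⟨x, -, rfl⟩; exact x.2
  have hVc : ∀ x, (1 - h) * x ∈ V := by
    intro x
    refine hd.induction (P := fun x => (1 - h) * x ∈ V) ?_ ?_ x
    · intro x hx
      exact ⟨_, ⟨⟨x, hx⟩, rfl⟩, rfl⟩
    · exact V.closed_of_finiteDimensional.preimage (by fun_prop : Continuous fun x => (1 - h) * x)
  have hfd := fun x => hVB _ (hVc x)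
  refine ⟨?_, h, h1, h2, hc, hcomm, ?_⟩
  · have L := fun y (ε : ℝ) (hε : 0 < ε) => approx_proj B hd halg' hhB h2 hc hcomm hfd y hε
    intro S hS
    obtain ⟨⟨f, hfB⟩, f1, f2, f3, f4⟩ := hG.ann
      {p : B | star p = p ∧ p * p = p ∧ ∃ s ∈ S, ∃ z, (p : 𝒜) = z * s}
      (by obtain ⟨s, hs⟩ := hS; exact ⟨0, by simp, by simp, s, hs, 0, by simp⟩)
    replace f1 : star f = f := congrArg Subtype.val f1
    replace f2 : f * f = f := congrArg Subtype.val f2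
    have f3' : ∀ s ∈ S, ∀ z, ∀ p ∈ B, star p = p → p * p = p → p = z * s → p * f = 0 := by
      intro s hs z p hp p1 p2 hz
      exact congrArg Subtype.val (f3 ⟨p, hp⟩ ⟨Subtype.ext p1, Subtype.ext p2, s, hs, z, hz⟩)
    refine ⟨f, f1, f2, ?_⟩
    have small : ∀ x : 𝒜, (∀ ε > 0, ‖x‖ ≤ ε) → x = 0 := by
      intro x hx
      rw [← norm_le_zero_iff]
      exact le_of_forall_pos_le_add (fun ε hε => by simpa using hx ε hε)
    ext y
    simp only [Set.mem_ofPred_eq]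
    constructor
    · intro hy
      refine ⟨y, ?_⟩
      rw [← sub_eq_zero]
      apply small
      intro ε hε
      obtain ⟨q, hqB, q1, q2, ⟨z, hz⟩, hn⟩ := L y (ε / (‖1 - f‖ + 1)) (by positivity)
      have hfq : f * q = q := by
        have := f4 ⟨q, hqB⟩ (by
          rintro ⟨p, hp⟩ ⟨p1, p2, s, hs, t, ht⟩
          apply Subtype.ext
          change p * q = 0
          have ht' : p = t * s := ht
          rw [ht', hz, mul_assoc, ← mul_assoc s, hy s hs]; simp)
        exact congrArg Subtype.val this
      have : y - f * y = (1 - f) * (y - q * y) := by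
        rw [mul_sub, ← mul_assoc (1 - f), sub_mul 1 f q, hfq]; simp [sub_mul]
      rw [this]
      calc _ ≤ ‖1 - f‖ * ‖y - q * y‖ := norm_mul_le _ _
        _ ≤ (‖1 - f‖ + 1) * (ε / (‖1 - f‖ + 1)) := by gcongr; linarith
        _ = ε := by field_simp
    · rintro ⟨x, rfl⟩ s hs
      suffices s * f = 0 by rw [← mul_assoc, this, zero_mul]
      apply small
      intro ε hε
      obtain ⟨q, hqB, q1, q2, ⟨z, hz⟩, hn⟩ := L (star s) (ε / (‖f‖ + 1)) (by positivity)
      have hqf : q * f = 0 := f3' s hs (star z) q hqB q1 q2 (by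
        have := congrArg star hz
        rwa [star_mul, star_star, q1] at this)
      have hn' : ‖s - s * q‖ ≤ ε / (‖f‖ + 1) := by
        rw [← norm_star]; simpa [star_mul, q1] using hn
      have : s * f = (s - s * q) * f := by rw [sub_mul, mul_assoc s q, hqf]; simp
      rw [this]
      calc _ ≤ ‖s - s * q‖ * ‖f‖ := norm_mul_le _ _
        _ ≤ (ε / (‖f‖ + 1)) * (‖f‖ + 1) := by gcongr; linarith
        _ = ε := by field_simp
  · refine Submodule.finiteDimensional_of_le (S₂ := V) ?_
    rintro _ ⟨x, rfl⟩
    exact hVc x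

lemma alg_aux {S A : Type*} [CommRing S] [Algebra ℂ S] [Ring A] [Algebra ℂ A] (f : S →ₐ[ℂ] A)
    (inj : Function.Injective f) (a b : S) (ha : IsAlgebraic ℂ (f a)) (hb : IsAlgebraic ℂ (f b)) :
    IsAlgebraic ℂ (f a + f b) ∧ IsAlgebraic ℂ (f a * f b) := by
  have ha' : IsAlgebraic ℂ a := (isAlgebraic_algHom_iff f inj).1 ha
  have hb' : IsAlgebraic ℂ b := (isAlgebraic_algHom_iff f inj).1 hb
  rw [← map_add, ← map_mul]
  exact ⟨(ha'.add hb').algHom f, (ha'.mul hb').algHom f⟩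

lemma alg_add_mul {A : Type*} [Ring A] [Algebra ℂ A] {a b : A} (hab : a * b = b * a)
    (ha : IsAlgebraic ℂ a) (hb : IsAlgebraic ℂ b) :
    IsAlgebraic ℂ (a + b) ∧ IsAlgebraic ℂ (a * b) := by
  have hS : IsMulCommutative (Algebra.adjoin ℂ ({a, b} : Set A)) :=
    Algebra.isMulCommutative_adjoin ℂ (by
      rintro x (rfl | rfl) y (rfl | rfl) <;> simp [hab])
  have haS : a ∈ Algebra.adjoin ℂ ({a, b} : Set A) := Algebra.subset_adjoin (by simp)
  have hbS : b ∈ Algebra.adjoin ℂ ({a, b} : Set A) := Algebra.subset_adjoin (by simp)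
  generalize Algebra.adjoin ℂ ({a, b} : Set A) = S at hS haS hbS
  letI : CommRing S := { (inferInstance : Ring S) with mul_comm := fun x y => hS.is_comm.comm x y }
  exact alg_aux S.val Subtype.val_injective ⟨a, haS⟩ ⟨b, hbS⟩ ha hb

lemma alg_star {a : 𝒜} (ha : IsAlgebraic ℂ a) : IsAlgebraic ℂ (star a) := by
  obtain ⟨p, hp, hpa⟩ := ha
  refine ⟨p.map (starRingEnd ℂ), ?_, ?_⟩
  · rwa [Polynomial.map_ne_zero_iff (starRingEnd ℂ).injective]
  · have : ∀ p : Polynomial ℂ, Polynomial.aeval (star a) (p.map (starRingEnd ℂ)) =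
        star (Polynomial.aeval a p) := by
      intro p
      induction p using Polynomial.induction_on' with
      | add p q hp hq => simp [hp, hq]
      | monomial k c =>
        simp only [Polynomial.map_monomial, Polynomial.aeval_monomial]
        rw [← Algebra.smul_def, ← Algebra.smul_def, star_smul, star_pow]; rfl
    rw [this, hpa, star_zero]

lemma alg_proj {h : 𝒜} (h2 : h * h = h) : IsAlgebraic ℂ h := by
  refine ⟨Polynomial.X ^ 2 - Polynomial.X, ?_, by simp [pow_two, h2]⟩
  intro h0
  have := congrArg (Polynomial.eval 2) h0
  norm_num at this

lemma alg_of_fd {h : 𝒜} (h2 : h * h = h) (hc : ∀ x : 𝒜, h * x = x * h)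
    (hfd : FiniteDimensional ℂ (LinearMap.range (LinearMap.mulLeft ℂ ((1 : 𝒜) - h)))) (x : 𝒜) :
    IsAlgebraic ℂ ((1 - h) * x) := by
  set R := LinearMap.range (LinearMap.mulLeft ℂ ((1 : 𝒜) - h)) with hR
  have hmem : ∀ r ∈ R, ∀ z, r * z ∈ R := by
    rintro _ ⟨y, rfl⟩ z
    exact ⟨y * z, by simp [mul_assoc]⟩
  have hle : Subalgebra.toSubmodule (Algebra.adjoin ℂ {(1 - h) * x}) ≤ Submodule.span ℂ {1} ⊔ R := by
    rw [Algebra.adjoin_eq_span, Submodule.span_le]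
    intro z hz
    obtain ⟨n, rfl⟩ := Submonoid.mem_closure_singleton.1 hz
    cases n with
    | zero =>
      rw [pow_zero]
      exact Submodule.mem_sup_left (Submodule.mem_span_singleton_self _)
    | succ n =>
      rw [pow_succ']
      exact Submodule.mem_sup_right (hmem _ ⟨x, rfl⟩ _)
  have : FiniteDimensional ℂ (Submodule.span ℂ {(1:𝒜)} ⊔ R : Submodule ℂ 𝒜) := inferInstance
  have hfg : FiniteDimensional ℂ (Subalgebra.toSubmodule (Algebra.adjoin ℂ {(1 - h) * x})) :=
    Submodule.finiteDimensional_of_le hle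
  exact (IsIntegral.of_mem_of_fg _ (Module.Finite.iff_fg.1 hfg) _
    (Algebra.self_mem_adjoin_singleton ℂ _)).isAlgebraic

/-- the dense subalgebra -/
def algPart (h : 𝒜) (h1 : star h = h) (h2 : h * h = h) (hc : ∀ x : 𝒜, h * x = x * h)
    (hcomm : ∀ x y : 𝒜, (h * x) * (h * y) = (h * y) * (h * x)) : StarSubalgebra ℂ 𝒜 where
  carrier := {x | IsAlgebraic ℂ (h * x)}
  mul_mem' {x y} hx hy := by
    have : h * (x * y) = (h * x) * (h * y) := by
      rw [hc x, mul_assoc, ← mul_assoc h h, h2, ← mul_assoc, hc x, mul_assoc]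
    change IsAlgebraic ℂ (h * (x * y))
    rw [this]
    exact (alg_add_mul (hcomm x y) hx hy).2
  add_mem' {x y} hx hy := by
    change IsAlgebraic ℂ (h * (x + y))
    rw [mul_add]
    exact (alg_add_mul (hcomm x y) hx hy).1
  algebraMap_mem' c :=
    (alg_add_mul (hc _) (alg_proj h2) (isAlgebraic_algebraMap c)).2
  star_mem' {x} hx := by
    change IsAlgebraic ℂ (h * star x)
    have : h * star x = star (h * x) := by rw [star_mul, h1, hc]
    rw [this]
    exact alg_star hx

lemma approx_half (hB : IsBaerStarRing 𝒜) {a : 𝒜} (ha : IsSelfAdjoint a) :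
    ∃ b e : 𝒜, ∃ c : ℂ, star e = e ∧ e * e = e ∧ b = c • (e + e - 1) ∧ IsSelfAdjoint b ∧
      ‖a - b‖ ≤ ‖a‖ / 2 := by
  have hc : ∀ g : ℝ → ℝ, Continuous g → ContinuousOn g (spectrum ℝ a) := fun g hg => hg.continuousOn
  let P : ℝ → ℝ := fun t => max t 0
  let M : ℝ → ℝ := fun t => max (-t) 0
  have cP : ContinuousOn P (spectrum ℝ a) := by fun_prop
  have cM : ContinuousOn M (spectrum ℝ a) := by fun_prop
  set p := cfc P a with hp
  set m := cfc M a with hm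
  have m1 : star m = m := (cfc_predicate M a : IsSelfAdjoint _)
  have hmp : m * p = 0 := by
    rw [hm, hp, ← cfc_mul M P a cM cP, ← cfc_const_zero ℝ a]
    apply cfc_congr
    intro x _
    simp only [M, P]
    rcases le_total x 0 with h | h
    · simp [max_eq_right h]
    · rw [max_eq_right (by linarith : -x ≤ 0)]; simp
  have hapm : a = p - m := by
    rw [hp, hm, ← cfc_sub P M a cP cM]
    conv_lhs => rw [← cfc_id ℝ a ha]
    apply cfc_congr
    intro x _
    simp only [M, P, id]
    rcases le_total x 0 with h | h
    · rw [max_eq_right h, max_eq_left (by linarith)]; ring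
    · rw [max_eq_left h, max_eq_right (by linarith)]; ring
  obtain ⟨e, e1, e2, e3⟩ := hB {m} ⟨m, rfl⟩
  have hme : m * e = 0 := by
    have : e ∈ {y : 𝒜 | ∀ s ∈ ({m} : Set 𝒜), s * y = 0} := by rw [e3]; exact ⟨e, e2.symm⟩
    exact this m rfl
  have hep : e * p = p := by
    have : p ∈ {y : 𝒜 | ∀ s ∈ ({m} : Set 𝒜), s * y = 0} := by
      rintro _ rfl; exact hmp
    rw [e3] at this
    obtain ⟨x, hx⟩ := this
    rw [hx, ← mul_assoc, e2]
  have hem : e * m = 0 := by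
    have := congrArg star hme
    rwa [star_mul, e1, m1, star_zero] at this
  set u := e + e - 1 with hu
  have u1 : star u = u := by simp [hu, e1]
  have u2 : u * u = 1 := by
    simp only [hu, mul_sub, sub_mul, mul_add, add_mul, e2]; simp
  have hua : u * a = p + m := by
    rw [hapm, hu]; simp only [mul_sub, sub_mul, add_mul, hep, hem]; simp
  have hun : ‖u‖ ≤ 1 := by
    have h1 : ‖u‖ * ‖u‖ = ‖(1 : 𝒜)‖ := by
      rw [← CStarRing.norm_star_mul_self, u1, u2]
    have h2 : ‖(1 : 𝒜)‖ ≤ 1 := by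
      rcases subsingleton_or_nontrivial 𝒜 with h | h
      · rw [Subsingleton.elim (1 : 𝒜) 0]; simp
      · exact CStarRing.norm_one.le
    nlinarith [norm_nonneg u]
  refine ⟨((‖a‖ / 2 : ℝ) : ℂ) • u, e, ((‖a‖ / 2 : ℝ) : ℂ), e1, e2, rfl, ?_, ?_⟩
  · rw [isSelfAdjoint_iff, star_smul, u1, Complex.star_def, Complex.conj_ofReal]
  · have h1 : a - ((‖a‖ / 2 : ℝ) : ℂ) • u = u * (p + m - ((‖a‖ / 2 : ℝ) : ℂ) • 1) := by
      rw [mul_sub, ← hua, ← mul_assoc, u2, one_mul, mul_smul_comm, mul_one]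
    have h2 : p + m - ((‖a‖ / 2 : ℝ) : ℂ) • (1 : 𝒜) = cfc (fun t => P t + M t - ‖a‖ / 2) a := by
      rw [cfc_sub (fun t => P t + M t) (fun _ => ‖a‖ / 2) a (cP.add cM) (by fun_prop),
        cfc_add a P M cP cM, cfc_const _ a ha, Algebra.algebraMap_eq_smul_one, Complex.coe_smul]
    have h3 : ‖p + m - ((‖a‖ / 2 : ℝ) : ℂ) • (1 : 𝒜)‖ ≤ ‖a‖ / 2 := by
      rw [h2]
      apply norm_cfc_le (by positivity)
      intro x hx
      have hxa : |x| ≤ ‖a‖ := by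
        have hnt : Nontrivial 𝒜 := by
          by_contra hn
          rw [not_nontrivial_iff_subsingleton] at hn
          rw [spectrum.of_subsingleton] at hx
          exact hx
        exact spectrum.norm_le_norm_of_mem hx
      have hPM : P x + M x = |x| := by
        simp only [P, M]
        rcases le_total x 0 with h | h
        · rw [max_eq_right h, max_eq_left (by linarith), abs_of_nonpos h]; ring
        · rw [max_eq_left h, max_eq_right (by linarith), abs_of_nonneg h]; ring
      rw [hPM, Real.norm_eq_abs, abs_le]
      constructor <;> linarith [abs_nonneg x]
    rw [h1]
    calc _ ≤ ‖u‖ * _ := norm_mul_le _ _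
      _ ≤ 1 * (‖a‖ / 2) := by gcongr
      _ = _ := one_mul _

theorem backward_dir (hB : IsBaerStarRing 𝒜) {h : 𝒜} (h1 : star h = h) (h2 : h * h = h)
    (hc : ∀ x : 𝒜, h * x = x * h)
    (hcomm : ∀ x y : 𝒜, (h * x) * (h * y) = (h * y) * (h * x))
    (hfd : FiniteDimensional ℂ (LinearMap.range (LinearMap.mulLeft ℂ ((1 : 𝒜) - h)))) :
    ∃ B : StarSubalgebra ℂ 𝒜, Dense (B : Set 𝒜) ∧ (∀ b : B, IsAlgebraic ℂ b) ∧
        IsBaerStarRing B := by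
  set B := algPart h h1 h2 hc hcomm with hBdef
  have memB : ∀ x, x ∈ B ↔ IsAlgebraic ℂ (h * x) := fun x => Iff.rfl
  have projB : ∀ e, e * e = e → e ∈ B := by
    intro e he
    rw [memB]
    exact (alg_add_mul (hc e) (alg_proj h2) (alg_proj he)).2
  refine ⟨B, ?_, ?_, ?_⟩
  · have key : ∀ n : ℕ, ∀ a : 𝒜, IsSelfAdjoint a → ∃ b ∈ B, ‖a - b‖ ≤ ‖a‖ / 2 ^ n := by
      intro n
      induction n with
      | zero => intro a _; exact ⟨0, zero_mem _, by simp⟩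
      | succ n ih =>
        intro a ha
        obtain ⟨b, e, c, e1, e2, hb, hbs, hn⟩ := approx_half hB ha
        obtain ⟨b', hb', hn'⟩ := ih (a - b) (ha.sub hbs)
        have hbB : b ∈ B := by
          rw [hb]
          exact B.toSubalgebra.smul_mem
            (sub_mem (add_mem (projB e e2) (projB e e2)) (one_mem B)) c
        refine ⟨b + b', add_mem hbB hb', ?_⟩
        rw [← sub_sub]
        refine hn'.trans ?_
        rw [pow_succ', ← div_div]
        gcongr
    have hsa : ∀ a : 𝒜, IsSelfAdjoint a → a ∈ closure (B : Set 𝒜) := by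
      intro a ha
      rw [Metric.mem_closure_iff]
      intro ε hε
      obtain ⟨n, hn⟩ := pow_unbounded_of_one_lt (‖a‖ / ε) (by norm_num : (1:ℝ) < 2)
      obtain ⟨b, hb, hbn⟩ := key n a ha
      refine ⟨b, hb, ?_⟩
      rw [dist_eq_norm]
      refine hbn.trans_lt ?_
      rw [div_lt_iff₀ hε] at hn
      rw [div_lt_iff₀ (by positivity)]
      linarith
    intro x
    have e := realPart_add_I_smul_imaginaryPart x
    have c1 : ((realPart x : selfAdjoint 𝒜) : 𝒜) ∈ B.topologicalClosure := hsa _ (realPart x).2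
    have c2 : ((imaginaryPart x : selfAdjoint 𝒜) : 𝒜) ∈ B.topologicalClosure := hsa _ (imaginaryPart x).2
    have : x ∈ B.topologicalClosure := by
      rw [← e]
      exact add_mem c1 (B.topologicalClosure.toSubalgebra.smul_mem c2 Complex.I)
    exact this
  · rintro ⟨x, hx⟩
    have inj : Function.Injective B.subtype.toAlgHom := Subtype.val_injective
    refine (isAlgebraic_algHom_iff B.subtype.toAlgHom inj).1 ?_
    change IsAlgebraic ℂ x
    have : x = h * x + (1 - h) * x := by rw [sub_mul]; simp
    rw [this]
    refine (alg_add_mul ?_ ((memB x).1 hx) (alg_of_fd h2 hc hfd x)).1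
    have t1 : h * (1 - h) = 0 := by rw [mul_sub, h2]; simp
    have t2 : (1 - h) * h = 0 := by rw [sub_mul, h2]; simp
    have z1 : h * x * ((1 - h) * x) = 0 := by
      rw [hc x, mul_assoc, ← mul_assoc h, t1]; simp
    have z2 : (1 - h) * x * (h * x) = 0 := by
      rw [mul_assoc, ← mul_assoc x, ← hc x, mul_assoc h, ← mul_assoc (1 - h), t2]; simp
    rw [z1, z2]
  · intro S hS
    obtain ⟨f, f1, f2, f3⟩ := hB (Subtype.val '' S) (hS.image _)
    refine ⟨⟨f, projB f f2⟩, Subtype.ext f1, Subtype.ext f2, ?_⟩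
    ext ⟨y, hy⟩
    have := Set.ext_iff.1 f3 y
    simp only [Set.mem_ofPred_eq] at this ⊢
    constructor
    · intro hy'
      obtain ⟨x, hx⟩ := this.1 (by
        rintro _ ⟨s, hs, rfl⟩
        exact congrArg Subtype.val (hy' s hs))
      refine ⟨⟨y, hy⟩, Subtype.ext ?_⟩
      change y = f * y
      rw [hx, ← mul_assoc, f2]
    · rintro ⟨x, hx⟩ s hs
      apply Subtype.ext
      exact this.2 ⟨x, congrArg Subtype.val hx⟩ s.1 ⟨s, hs, rfl⟩

end CStar

/-- A unital C*-algebra `𝒜` contains a dense unital `*`-subalgebra that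
is an algebraic Baer `*`-algebra iff `𝒜` is an AW*-algebra possessing a central projection
`h` such that `h𝒜` is commutative and `(1 − h)𝒜` is finite dimensional. -/
theorem exists_dense_algebraic_baer_starSubalgebra_iff (𝒜 : Type*) [NormedRing 𝒜]
    [StarRing 𝒜] [CStarRing 𝒜] [NormedAlgebra ℂ 𝒜] [CompleteSpace 𝒜] [StarModule ℂ 𝒜] :
    (∃ B : StarSubalgebra ℂ 𝒜, Dense (B : Set 𝒜) ∧ (∀ b : B, IsAlgebraic ℂ b) ∧
        IsBaerStarRing B) ↔
      (IsBaerStarRing 𝒜 ∧ ∃ h : 𝒜, star h = h ∧ h * h = h ∧ (∀ x : 𝒜, h * x = x * h) ∧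
        (∀ x y : 𝒜, (h * x) * (h * y) = (h * y) * (h * x)) ∧
        FiniteDimensional ℂ (LinearMap.range (LinearMap.mulLeft ℂ ((1 : 𝒜) - h)))) := by
  letI : CStarAlgebra 𝒜 := {}
  constructor
  · rintro ⟨B, hd, halg, hB⟩
    exact forward_dir B hd halg hB
  · rintro ⟨hB, h, h1, h2, hc, hcomm, hfd⟩
    exact backward_dir hB h1 h2 hc hcomm hfd
end
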